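/- Let d and n be integers with d > n ≥ 1, let K ⊆ ℂ be a number field, and let f_1, …, f_d be entire functions on ℂ^n which are algebraically independent over K and have finite order of growth. Assume that for each 1 ≤ ν ≤ n and 1 ≤ i ≤ d there is a polynomial P_{ν,i} ∈ K[X_1, …, X_d] such that (∂/∂z_ν) f_i = P_{ν,i}(f_1, …, f_d) identically on ℂ^n. Then there exists a nonzero polynomial Q ∈ ℂ[X_1, …, X_n] such that every point w ∈ ℂ^n for which f_i(w) ∈ K for all 1 ≤ i ≤ d satisfies Q(w) = 0; that is, the set of such points is contained in an algebraic hypersurface. -/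

import Mathlib

/-- `|f|_R`: supremum of `|f z|` over the polydisc `max_i |z_i| ≤ R`. -/
noncomputable def PolydiscSup (n : ℕ) (f : (Fin n → ℂ) → ℂ) (R : ℝ) : ℝ :=
  sSup ((fun z => ‖f z‖) '' {z : Fin n → ℂ | ∀ i, ‖z i‖ ≤ R})

/-- `f : ℂ^n → ℂ` has finite order of growth. -/
def HasFiniteOrderGrowthN (n : ℕ) (f : (Fin n → ℂ) → ℂ) : Prop :=
  ∃ ρ : ℝ, 0 ≤ ρ ∧ ∀ ε > (0 : ℝ), ∃ R₀ : ℝ, ∀ R ≥ R₀,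
    PolydiscSup n f R ≤ Real.exp (R ^ (ρ + ε))

/-!
Suppose that the set `S` of points where all `f_i` take values in `K` is not contained in a
hypersurface. Hermite interpolation at suitable points of `S` produces polynomials
`h_j = X_j ^ m - q_j`, with `q_j` of degree less than `m`, whose `m ^ n` common zeros include these
points with multiplicity one. The ideal residual to the points has small colength, so a dimension
count gives a nonzero polynomial `G` of low degree in its `l`-th power, and `G ^ k` times any
polynomial vanishing to order `l * k` at the points lies in the power `(h) ^ (l * k)`. Dividing by
powers of `h` with explicit estimates, and approximating entire functions by polynomials, one
obtains a Schwarz lemma: an entire function vanishing to order `l * k` at the points has a gain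
`R ^ (c * l * k)` on polydiscs of radius `R`, where `c` can be prescribed in advance. This plays the
role of the `L²` estimates in Bombieri's argument.

The rest is the method of Gelfond and Schneider. Siegel's lemma gives a polynomial in the `f_i`
of controlled degree and height vanishing to high order at the points; its first nonvanishing
derivative there is an algebraic number, and for `c` large the Schwarz lemma contradicts Liouville's
lower bound for it.
-/

namespace Bombieri

open MvPolynomial Finset NumberField

/-! ### Coefficient norms of polynomials -/

section Support

variable {σ R : Type*} [CommSemiring R]

theorem degree_le_totalDegree {P : MvPolynomial σ R} {a : σ →₀ ℕ} (ha : a ∈ P.support) :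
    a.degree ≤ P.totalDegree := by
  simpa only [Finsupp.degree_apply, Finsupp.sum] using le_totalDegree ha

theorem map_eq_sum_coeff_smul {M : Type*} [AddCommMonoid M] [Module R M]
    (T : MvPolynomial σ R →ₗ[R] M) (P : MvPolynomial σ R) :
    T P = ∑ a ∈ P.support, coeff a P • T (monomial a 1) := by
  conv_lhs => rw [P.as_sum, map_sum]
  refine sum_congr rfl fun a _ => ?_
  rw [← map_smul, smul_monomial, smul_eq_mul, mul_one]

theorem totalDegree_pderiv_le (P : MvPolynomial σ R) (i : σ) :
    (pderiv i P).totalDegree ≤ P.totalDegree := by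
  classical
  conv_lhs => rw [P.as_sum, map_sum]
  refine totalDegree_finsetSum_le fun a ha => ?_
  rw [pderiv_monomial]
  calc (monomial (a - Finsupp.single i 1) (coeff a P * a i)).totalDegree
      ≤ (a - Finsupp.single i 1).degree := totalDegree_monomial_le _ _
    _ ≤ a.degree := Finsupp.degree_mono tsub_le_self
    _ ≤ P.totalDegree := degree_le_totalDegree ha

theorem totalDegree_map_le {S : Type*} [CommSemiring S] (φ : R →+* S) (P : MvPolynomial σ R) :
    (map φ P).totalDegree ≤ P.totalDegree :=
  sup_mono (support_map_subset _ _)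

end Support

section CoeffNorm

variable {σ τ 𝕜 : Type*} [NormedField 𝕜] {r : ℝ}

/-- The weighted `ℓ¹` norm `∑ ‖c_α‖ r ^ |α|` of a polynomial `∑ c_α X ^ α`; it dominates the
polynomial on the polydisc of radius `r`. -/
noncomputable def coeffNorm (r : ℝ) (P : MvPolynomial σ 𝕜) : ℝ :=
  ∑ a ∈ P.support, ‖coeff a P‖ * r ^ a.degree

theorem coeffNorm_eq_sum_of_subset {P : MvPolynomial σ 𝕜} {s : Finset (σ →₀ ℕ)}
    (hs : P.support ⊆ s) : coeffNorm r P = ∑ a ∈ s, ‖coeff a P‖ * r ^ a.degree := by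
  refine sum_subset hs fun a _ ha => ?_
  rw [notMem_support_iff.1 ha, norm_zero, zero_mul]

theorem coeffNorm_nonneg (hr : 0 ≤ r) (P : MvPolynomial σ 𝕜) : 0 ≤ coeffNorm r P :=
  sum_nonneg fun _ _ => by positivity

@[simp]
theorem coeffNorm_zero : coeffNorm r (0 : MvPolynomial σ 𝕜) = 0 := by
  simp [coeffNorm]

@[simp]
theorem coeffNorm_monomial (a : σ →₀ ℕ) (c : 𝕜) :
    coeffNorm r (monomial a c) = ‖c‖ * r ^ a.degree := by
  classical
  rw [coeffNorm_eq_sum_of_subset (support_monomial_subset (s := a) (a := c)), sum_singleton,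
    coeff_monomial, if_pos rfl]

@[simp]
theorem coeffNorm_C (c : 𝕜) : coeffNorm r (C c : MvPolynomial σ 𝕜) = ‖c‖ := by
  rw [C_apply, coeffNorm_monomial, map_zero, pow_zero, mul_one]

@[simp]
theorem coeffNorm_one : coeffNorm r (1 : MvPolynomial σ 𝕜) = 1 := by
  rw [← C_1, coeffNorm_C, norm_one]

@[simp]
theorem coeffNorm_X (i : σ) : coeffNorm r (X i : MvPolynomial σ 𝕜) = r := by
  rw [X, coeffNorm_monomial, norm_one, one_mul, Finsupp.degree_single, pow_one]

theorem coeffNorm_add_le (hr : 0 ≤ r) (P Q : MvPolynomial σ 𝕜) :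
    coeffNorm r (P + Q) ≤ coeffNorm r P + coeffNorm r Q := by
  classical
  rw [coeffNorm_eq_sum_of_subset (support_add (p := P) (q := Q)),
    coeffNorm_eq_sum_of_subset (subset_union_left (s₁ := P.support) (s₂ := Q.support)),
    coeffNorm_eq_sum_of_subset (subset_union_right (s₁ := P.support) (s₂ := Q.support)),
    ← sum_add_distrib]
  refine sum_le_sum fun a _ => ?_
  rw [← add_mul, coeff_add]
  gcongr
  exact norm_add_le _ _

theorem coeffNorm_sum_le (hr : 0 ≤ r) {ι : Type*} (s : Finset ι) (P : ι → MvPolynomial σ 𝕜) :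
    coeffNorm r (∑ i ∈ s, P i) ≤ ∑ i ∈ s, coeffNorm r (P i) :=
  le_sum_of_subadditive (coeffNorm r) coeffNorm_zero.le (coeffNorm_add_le hr) s P

theorem coeffNorm_smul (c : 𝕜) (P : MvPolynomial σ 𝕜) :
    coeffNorm r (c • P) = ‖c‖ * coeffNorm r P := by
  rw [coeffNorm_eq_sum_of_subset (support_smul (a := c) (f := P)), coeffNorm, mul_sum]
  simp only [coeff_smul, norm_smul, mul_assoc]

theorem coeffNorm_sub_le (hr : 0 ≤ r) (P Q : MvPolynomial σ 𝕜) :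
    coeffNorm r (P - Q) ≤ coeffNorm r P + coeffNorm r Q := by
  have hneg : coeffNorm r (-Q) = coeffNorm r Q := by
    simpa only [neg_smul, one_smul, norm_neg, norm_one, one_mul] using
      coeffNorm_smul (r := r) (-1) Q
  rw [sub_eq_add_neg, ← hneg]
  exact coeffNorm_add_le hr _ _

theorem coeffNorm_map_le_of_monomial {r' B : ℝ} (hr' : 0 ≤ r')
    (T : MvPolynomial σ 𝕜 →ₗ[𝕜] MvPolynomial τ 𝕜) (P : MvPolynomial σ 𝕜)
    (hT : ∀ a ∈ P.support, coeffNorm r' (T (monomial a 1)) ≤ B * r ^ a.degree) :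
    coeffNorm r' (T P) ≤ B * coeffNorm r P := by
  rw [map_eq_sum_coeff_smul T P]
  calc _ ≤ ∑ a ∈ P.support, coeffNorm r' (coeff a P • T (monomial a 1)) :=
        coeffNorm_sum_le hr' _ _
    _ ≤ ∑ a ∈ P.support, B * (‖coeff a P‖ * r ^ a.degree) := by
        refine sum_le_sum fun a ha => ?_
        rw [coeffNorm_smul, mul_left_comm]
        gcongr
        exact hT a ha
    _ = B * coeffNorm r P := (mul_sum ..).symm

theorem coeffNorm_monomial_mul (a : σ →₀ ℕ) (P : MvPolynomial σ 𝕜) :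
    coeffNorm r (monomial a 1 * P) = r ^ a.degree * coeffNorm r P := by
  classical
  have hsupp : (monomial a (1 : 𝕜) * P).support ⊆ P.support.image (a + ·) := by
    refine (support_mul _ _).trans ?_
    refine (Finset.add_subset_add_right support_monomial_subset).trans_eq ?_
    exact Finset.singleton_add a
  rw [coeffNorm_eq_sum_of_subset hsupp, sum_image fun _ _ _ _ h => add_left_cancel h,
    coeffNorm, mul_sum]
  refine sum_congr rfl fun b _ => ?_
  rw [coeff_monomial_mul, map_add, pow_add, one_mul]
  ring

theorem coeffNorm_mul_le (hr : 0 ≤ r) (P Q : MvPolynomial σ 𝕜) :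
    coeffNorm r (P * Q) ≤ coeffNorm r P * coeffNorm r Q := by
  rw [mul_comm (coeffNorm r P)]
  refine coeffNorm_map_le_of_monomial hr (LinearMap.mulRight 𝕜 Q) P fun a _ => ?_
  rw [LinearMap.mulRight_apply, coeffNorm_monomial_mul, mul_comm]

theorem coeffNorm_prod_le (hr : 0 ≤ r) {ι : Type*} (s : Finset ι) (P : ι → MvPolynomial σ 𝕜) :
    coeffNorm r (∏ i ∈ s, P i) ≤ ∏ i ∈ s, coeffNorm r (P i) := by
  classical
  induction s using Finset.induction_on with
  | empty => simp
  | insert i s hi ih =>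
    rw [prod_insert hi, prod_insert hi]
    exact (coeffNorm_mul_le hr _ _).trans (mul_le_mul_of_nonneg_left ih (coeffNorm_nonneg hr _))

theorem coeffNorm_pow_le (hr : 0 ≤ r) (P : MvPolynomial σ 𝕜) (k : ℕ) :
    coeffNorm r (P ^ k) ≤ coeffNorm r P ^ k := by
  simpa only [prod_const, card_range] using coeffNorm_prod_le hr (range k) fun _ => P

theorem coeffNorm_le_pow_mul (hr : 1 ≤ r) {P : MvPolynomial σ 𝕜} {D : ℕ}
    (hD : P.totalDegree ≤ D) : coeffNorm r P ≤ r ^ D * coeffNorm 1 P := by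
  rw [coeffNorm, coeffNorm, mul_sum]
  refine sum_le_sum fun a ha => ?_
  rw [one_pow, mul_one, mul_comm]
  gcongr
  exact (degree_le_totalDegree ha).trans hD

theorem norm_eval_le_coeffNorm {z : σ → 𝕜} (hz : ∀ i, ‖z i‖ ≤ r) (P : MvPolynomial σ 𝕜) :
    ‖eval z P‖ ≤ coeffNorm r P := by
  rw [eval_eq, coeffNorm]
  refine (norm_sum_le _ _).trans (sum_le_sum fun a _ => ?_)
  rw [norm_mul, norm_prod, Finsupp.degree_apply, ← prod_pow_eq_pow_sum]
  gcongr with i _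
  rw [norm_pow]
  gcongr
  exact hz i

theorem coeffNorm_rename_le (hr : 0 ≤ r) (e : σ → τ) (P : MvPolynomial σ 𝕜) :
    coeffNorm r (rename e P) ≤ coeffNorm r P := by
  rw [← one_mul (coeffNorm r P)]
  refine coeffNorm_map_le_of_monomial hr (rename e).toLinearMap P fun a _ => le_of_eq ?_
  rw [AlgHom.toLinearMap_apply, rename_monomial, coeffNorm_monomial, norm_one,
    Finsupp.degree_mapDomain]

theorem coeffNorm_pderiv_le {P : MvPolynomial σ 𝕜} {D : ℕ} (hD : P.totalDegree ≤ D) (i : σ) :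
    coeffNorm 1 (pderiv i P) ≤ D * coeffNorm 1 P := by
  refine coeffNorm_map_le_of_monomial zero_le_one (pderiv i).toLinearMap P fun a ha => ?_
  have hai : a i ≤ D := (Finsupp.le_degree i a).trans ((degree_le_totalDegree ha).trans hD)
  simp only [Derivation.coeFn_coe, pderiv_monomial, coeffNorm_monomial, one_pow, mul_one, one_mul]
  calc ‖(a i : 𝕜)‖ ≤ a i := (Nat.norm_cast_le _).trans_eq (by rw [norm_one, mul_one])
    _ ≤ D := by exact_mod_cast hai

end CoeffNorm

/-! ### Expansions along polynomials with prescribed leading forms -/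

section DegreeLT

variable {σ R : Type*} [CommRing R] {D E : ℕ} {P P' Q Q' : MvPolynomial σ R}

/-- The polynomials of total degree `< D`, including `0` when `D = 0`. -/
noncomputable def degreeLT (σ R : Type*) [CommRing R] (D : ℕ) : Submodule R (MvPolynomial σ R) :=
  restrictSupport R {a | a.degree < D}

theorem degreeLT_mono (h : D ≤ E) : degreeLT σ R D ≤ degreeLT σ R E :=
  restrictSupport_mono R fun _ ha => lt_of_lt_of_le ha h

theorem mem_degreeLT_of_totalDegree_lt (h : P.totalDegree < D) : P ∈ degreeLT σ R D :=
  fun _ ha => (degree_le_totalDegree ha).trans_lt h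

theorem totalDegree_lt_of_mem_degreeLT (hD : 0 < D) (h : P ∈ degreeLT σ R D) :
    P.totalDegree < D := by
  refine (Finset.sup_lt_iff hD).2 fun a ha => ?_
  exact lt_of_eq_of_lt (Finsupp.degree_apply a).symm (h ha)

theorem eq_zero_of_mem_degreeLT_zero (h : P ∈ degreeLT σ R 0) : P = 0 :=
  support_eq_empty.1 <| eq_empty_of_forall_notMem fun _ ha => Nat.not_lt_zero _ (h ha)

theorem mul_mem_degreeLT (hP : P ∈ degreeLT σ R D) (hQ : Q.totalDegree ≤ E) :
    P * Q ∈ degreeLT σ R (D + E) := by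
  classical
  intro a ha
  obtain ⟨b, hb, c, hc, rfl⟩ := Finset.mem_add.1 (support_mul _ _ ha)
  have hb' : b.degree < D := hP hb
  have hc' := degree_le_totalDegree hc
  change (b + c).degree < D + E
  rw [map_add]
  lia

theorem mul_sub_mul_mem_degreeLT (hP : P - P' ∈ degreeLT σ R D) (hP' : P'.totalDegree ≤ D)
    (hQ : Q - Q' ∈ degreeLT σ R E) (hQE : Q.totalDegree ≤ E) :
    P * Q - P' * Q' ∈ degreeLT σ R (D + E) := by
  have : P * Q - P' * Q' = (P - P') * Q + (Q - Q') * P' := by ring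
  rw [this]
  exact add_mem (mul_mem_degreeLT hP hQE) (add_comm E D ▸ mul_mem_degreeLT hQ hP')

theorem totalDegree_le_of_sub_mem_degreeLT (hP : P - P' ∈ degreeLT σ R D)
    (hP' : P'.totalDegree ≤ D) : P.totalDegree ≤ D := by
  have hsub : (P - P').totalDegree ≤ D :=
    Nat.lt_succ_iff.1 <| totalDegree_lt_of_mem_degreeLT D.succ_pos <| degreeLT_mono D.le_succ hP
  rw [← sub_add_cancel P P']
  exact (totalDegree_add _ _).trans (max_le hsub hP')

theorem prod_sub_prod_mem_degreeLT {ι : Type*} (s : Finset ι) {d : ι → ℕ}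
    {P P' : ι → MvPolynomial σ R} (hP : ∀ i ∈ s, P i - P' i ∈ degreeLT σ R (d i))
    (hP' : ∀ i ∈ s, (P' i).totalDegree ≤ d i) :
    ∏ i ∈ s, P i - ∏ i ∈ s, P' i ∈ degreeLT σ R (∑ i ∈ s, d i) := by
  classical
  induction s using Finset.induction_on with
  | empty => simp
  | insert i s hi ih =>
    rw [prod_insert hi, prod_insert hi, sum_insert hi]
    rw [forall_mem_insert] at hP hP'
    refine mul_sub_mul_mem_degreeLT hP.1 hP'.1 (ih hP.2 hP'.2) ?_
    exact (totalDegree_finsetProd _ _).trans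
      (sum_le_sum fun j hj => totalDegree_le_of_sub_mem_degreeLT (hP.2 j hj) (hP'.2 j hj))

theorem pow_sub_pow_mem_degreeLT (hP : P - P' ∈ degreeLT σ R D) (hP' : P'.totalDegree ≤ D)
    (k : ℕ) : P ^ k - P' ^ k ∈ degreeLT σ R (k * D) := by
  simpa using prod_sub_prod_mem_degreeLT (range k) (fun _ _ => hP) fun _ _ => hP'

end DegreeLT

section Unipotent

variable {σ R : Type*} [CommRing R] {T : MvPolynomial σ R →ₗ[R] MvPolynomial σ R}

theorem exists_mem_degreeLT_map_eq
    (hT : ∀ D, ∀ P ∈ degreeLT σ R (D + 1), T P - P ∈ degreeLT σ R D) (D : ℕ) :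
    ∀ P ∈ degreeLT σ R D, ∃ Q ∈ degreeLT σ R D, T Q = P := by
  induction D with
  | zero => exact fun P hP => ⟨P, hP, by rw [eq_zero_of_mem_degreeLT_zero hP, map_zero]⟩
  | succ D ih =>
    intro P hP
    obtain ⟨Q, hQ, hQP⟩ := ih _ (hT D P hP)
    exact ⟨P - Q, sub_mem hP (degreeLT_mono D.le_succ hQ), by rw [map_sub, hQP, sub_sub_cancel]⟩

theorem bijective_of_map_sub_mem_degreeLT
    (hT : ∀ D, ∀ P ∈ degreeLT σ R (D + 1), T P - P ∈ degreeLT σ R D) :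
    Function.Bijective T := by
  have mem_degreeLT_succ (P : MvPolynomial σ R) : P ∈ degreeLT σ R (P.totalDegree + 1) :=
    mem_degreeLT_of_totalDegree_lt P.totalDegree.lt_succ_self
  refine ⟨(injective_iff_map_eq_zero T).2 fun P hP => ?_, fun P => ?_⟩
  · have eq_zero : ∀ D, P ∈ degreeLT σ R D → P = 0 := by
      intro D
      induction D with
      | zero => exact eq_zero_of_mem_degreeLT_zero
      | succ D ih => exact fun h => ih (by simpa [hP] using hT D P h)
    exact eq_zero _ (mem_degreeLT_succ P)
  · obtain ⟨Q, -, hQ⟩ := exists_mem_degreeLT_map_eq hT _ P (mem_degreeLT_succ P)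
    exact ⟨Q, hQ⟩

end Unipotent

section Adic

variable {σ R : Type*} [CommRing R] {m : ℕ} {h : σ → MvPolynomial σ R}

theorem totalDegree_X_pow_le (i : σ) (k : ℕ) : (X i ^ k : MvPolynomial σ R).totalDegree ≤ k := by
  rw [X_pow_eq_monomial]
  simpa using totalDegree_monomial_le (R := R) (Finsupp.single i k) 1

/-- Each `h i` is `X i ^ m` up to terms of degree `< m`. -/
def HasLeadingPowers (m : ℕ) (h : σ → MvPolynomial σ R) : Prop :=
  ∀ i, h i - X i ^ m ∈ degreeLT σ R m

theorem HasLeadingPowers.X_pow_mod_mul_pow_div_sub_mem (hh : HasLeadingPowers m h) (i : σ)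
    (k : ℕ) : X i ^ (k % m) * h i ^ (k / m) - X i ^ k ∈ degreeLT σ R k := by
  have hpow : X i ^ (k % m) * h i ^ (k / m) - X i ^ k =
      (h i ^ (k / m) - (X i ^ m) ^ (k / m)) * X i ^ (k % m) := by
    conv_lhs => rw [← Nat.mod_add_div k m, pow_add, pow_mul (X i) m]
    simp only [Nat.add_mul_mod_self_left, Nat.mod_mod]
    rw [Nat.mod_add_div]
    ring
  rw [hpow]
  conv => arg 1; arg 3; rw [← Nat.div_add_mod' k m]
  exact mul_mem_degreeLT (pow_sub_pow_mem_degreeLT (hh i) (totalDegree_X_pow_le i m) _)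
    (totalDegree_X_pow_le i _)

variable [Fintype σ]

/-- The product `∏ X i ^ (a i % m) * h i ^ (a i / m)`; these products are the basis of the
`h`-adic expansion, in which `X ^ a` stands for the product of index `a`. -/
noncomputable def adicMonomial (m : ℕ) (h : σ → MvPolynomial σ R) (a : σ →₀ ℕ) :
    MvPolynomial σ R :=
  ∏ i, (X i ^ (a i % m) * h i ^ (a i / m))

theorem HasLeadingPowers.adicMonomial_sub_mem (hh : HasLeadingPowers m h) (a : σ →₀ ℕ) :
    adicMonomial m h a - monomial a 1 ∈ degreeLT σ R a.degree := by
  rw [Finsupp.degree_eq_sum, monomial_eq, C_1, one_mul, Finsupp.prod_fintype _ _ (by simp)]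
  exact prod_sub_prod_mem_degreeLT _ (fun i _ => hh.X_pow_mod_mul_pow_div_sub_mem i (a i))
    fun i _ => totalDegree_X_pow_le i (a i)

/-- The linear endomorphism sending `X ^ a` to `adicMonomial m h a`. -/
noncomputable def adicMap (m : ℕ) (h : σ → MvPolynomial σ R) :
    MvPolynomial σ R →ₗ[R] MvPolynomial σ R :=
  (basisMonomials σ R).constr R (adicMonomial m h)

theorem adicMap_monomial (a : σ →₀ ℕ) : adicMap m h (monomial a 1) = adicMonomial m h a :=
  (basisMonomials σ R).constr_basis R _ a

theorem HasLeadingPowers.adicMap_sub_mem (hh : HasLeadingPowers m h) (D : ℕ)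
    (P : MvPolynomial σ R) (hP : P ∈ degreeLT σ R (D + 1)) :
    adicMap m h P - P ∈ degreeLT σ R D := by
  change (adicMap m h - LinearMap.id : MvPolynomial σ R →ₗ[R] MvPolynomial σ R) P ∈ _
  rw [map_eq_sum_coeff_smul]
  refine sum_mem fun a ha => Submodule.smul_mem _ _ ?_
  rw [LinearMap.sub_apply, LinearMap.id_apply, adicMap_monomial]
  exact degreeLT_mono (Nat.lt_succ_iff.1 (hP ha)) (hh.adicMonomial_sub_mem a)

/-- `adicMap` as a linear equivalence; its inverse computes `h`-adic expansions. -/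
noncomputable def HasLeadingPowers.adicEquiv (hh : HasLeadingPowers m h) :
    MvPolynomial σ R ≃ₗ[R] MvPolynomial σ R :=
  LinearEquiv.ofBijective (adicMap m h) (bijective_of_map_sub_mem_degreeLT hh.adicMap_sub_mem)

theorem HasLeadingPowers.adicEquiv_monomial (hh : HasLeadingPowers m h) (a : σ →₀ ℕ) :
    hh.adicEquiv (monomial a 1) = adicMonomial m h a :=
  adicMap_monomial a

theorem HasLeadingPowers.adicEquiv_symm_mem_degreeLT (hh : HasLeadingPowers m h) {D : ℕ}
    {P : MvPolynomial σ R} (hP : P ∈ degreeLT σ R D) :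
    hh.adicEquiv.symm P ∈ degreeLT σ R D := by
  obtain ⟨Q, hQ, hQP⟩ := exists_mem_degreeLT_map_eq hh.adicMap_sub_mem D P hP
  have : hh.adicEquiv.symm P = Q := hh.adicEquiv.symm_apply_eq.2 hQP.symm
  rwa [this]

theorem adicMonomial_smul_add (hm : 0 < m) (a b : σ →₀ ℕ) :
    adicMonomial m h (m • a + b) = (∏ i, h i ^ a i) * adicMonomial m h b := by
  rw [adicMonomial, adicMonomial, ← prod_mul_distrib]
  refine prod_congr rfl fun i _ => ?_
  have hmod : (m • a + b) i % m = b i % m := by simp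
  have hdiv : (m • a + b) i / m = a i + b i / m := by simp [Nat.add_div_of_dvd_right, hm]
  rw [hmod, hdiv, pow_add, mul_left_comm]

theorem HasLeadingPowers.adicEquiv_monomial_mul (hh : HasLeadingPowers m h) (hm : 0 < m)
    (a : σ →₀ ℕ) (P : MvPolynomial σ R) :
    hh.adicEquiv (monomial (m • a) 1 * P) = (∏ i, h i ^ a i) * hh.adicEquiv P := by
  have : hh.adicEquiv.toLinearMap ∘ₗ LinearMap.mulLeft R (monomial (m • a) 1) =
      LinearMap.mulLeft R (∏ i, h i ^ a i) ∘ₗ hh.adicEquiv.toLinearMap := by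
    refine (basisMonomials σ R).ext fun b => ?_
    simp only [coe_basisMonomials, LinearMap.comp_apply, LinearMap.mulLeft_apply,
      LinearEquiv.coe_coe, monomial_mul, mul_one, hh.adicEquiv_monomial, adicMonomial_smul_add hm]
  exact LinearMap.congr_fun this P

theorem HasLeadingPowers.adicEquiv_symm_mul (hh : HasLeadingPowers m h) (hm : 0 < m)
    (a : σ →₀ ℕ) (P : MvPolynomial σ R) :
    hh.adicEquiv.symm ((∏ i, h i ^ a i) * P) = monomial (m • a) 1 * hh.adicEquiv.symm P := by
  rw [LinearEquiv.symm_apply_eq, hh.adicEquiv_monomial_mul hm, LinearEquiv.apply_symm_apply]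

end Adic

section Truncation

variable {σ R : Type*} [CommSemiring R] {s : Set (σ →₀ ℕ)}

open Classical in
/-- The projection of polynomials onto the span of the monomials with exponent in `s`. -/
noncomputable def truncation (R : Type*) [CommSemiring R] (s : Set (σ →₀ ℕ)) :
    MvPolynomial σ R →ₗ[R] MvPolynomial σ R :=
  (basisMonomials σ R).constr R fun a => if a ∈ s then monomial a 1 else 0

open Classical in
theorem truncation_monomial (a : σ →₀ ℕ) :
    truncation R s (monomial a 1) = if a ∈ s then monomial a 1 else 0 :=
  (basisMonomials σ R).constr_basis R _ a

open Classical in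
theorem coeff_truncation (a : σ →₀ ℕ) (P : MvPolynomial σ R) :
    coeff a (truncation R s P) = if a ∈ s then coeff a P else 0 := by
  rw [map_eq_sum_coeff_smul, coeff_sum, Finset.sum_eq_single a]
  · rw [coeff_smul, truncation_monomial]
    split_ifs <;> simp
  · intro b _ hb
    rw [coeff_smul, truncation_monomial]
    split_ifs <;> simp [coeff_monomial, hb]
  · intro ha
    rw [notMem_support_iff.1 ha, zero_smul, coeff_zero]

theorem truncation_mem (P : MvPolynomial σ R) : truncation R s P ∈ restrictSupport R s := by
  classical
  intro a (ha : a ∈ (truncation R s P).support)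
  by_contra has
  rw [mem_support_iff, coeff_truncation, if_neg has] at ha
  exact ha rfl

theorem truncation_eq_self {P : MvPolynomial σ R} (hP : P ∈ restrictSupport R s) :
    truncation R s P = P := by
  classical
  ext a
  rw [coeff_truncation]
  split_ifs with ha
  · rfl
  · exact (notMem_support_iff.1 fun haP => ha (hP haP)).symm

theorem truncation_eq_zero {P : MvPolynomial σ R} (hP : P ∈ restrictSupport R sᶜ) :
    truncation R s P = 0 := by
  classical
  ext a
  rw [coeff_truncation, coeff_zero]
  split_ifs with ha
  · exact notMem_support_iff.1 fun haP => hP haP ha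
  · rfl

theorem sub_truncation_mem {R : Type*} [CommRing R] (P : MvPolynomial σ R) :
    P - truncation R s P ∈ restrictSupport R sᶜ := by
  classical
  intro a (ha : a ∈ (P - truncation R s P).support) has
  rw [mem_support_iff, coeff_sub, coeff_truncation, if_pos has, sub_self] at ha
  exact ha rfl

theorem coeffNorm_truncation_le {𝕜 : Type*} [NormedField 𝕜] {r : ℝ} (hr : 0 ≤ r)
    (s : Set (σ →₀ ℕ)) (P : MvPolynomial σ 𝕜) :
    coeffNorm r (truncation 𝕜 s P) ≤ coeffNorm r P := by
  classical
  rw [← one_mul (coeffNorm r P)]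
  refine coeffNorm_map_le_of_monomial hr _ P fun a _ => ?_
  rw [truncation_monomial, one_mul]
  split_ifs
  · rw [coeffNorm_monomial, norm_one, one_mul]
  · rw [coeffNorm_zero]
    positivity

end Truncation

theorem exists_eq_sum_prod_pow_mul {σ A : Type*} [Fintype σ] [CommSemiring A] {h : σ → A} {k : ℕ}
    {x : A} (hx : x ∈ Ideal.span (Set.range h) ^ k) :
    ∃ (s : Finset (σ →₀ ℕ)) (g : (σ →₀ ℕ) → A),
      (∀ a ∈ s, a.degree = k) ∧ x = ∑ a ∈ s, (∏ i, h i ^ a i) * g a := by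
  obtain ⟨p, hp, rfl⟩ := (Ideal.mem_span_pow_iff_exists_isHomogeneous h x).1 hx
  refine ⟨p.support, p.coeff, fun a ha => ?_, ?_⟩
  · rw [← hp (mem_support_iff.1 ha), Finsupp.degree_eq_weight_one]
    rfl
  · rw [eval_eq']
    exact sum_congr rfl fun _ _ => mul_comm _ _

theorem prod_pow_mem_ideal_pow {σ A : Type*} [Fintype σ] [CommSemiring A] {h : σ → A}
    {I : Ideal A} (hI : ∀ i, h i ∈ I) (a : σ → ℕ) : ∏ i, h i ^ a i ∈ I ^ ∑ i, a i := by
  rw [← prod_pow_eq_pow_sum]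
  exact Ideal.prod_mem_prod fun i _ => Ideal.pow_mem_pow (hI i) _

section AdicProjection

variable {σ R : Type*} [Fintype σ] [CommRing R] {m : ℕ} {h : σ → MvPolynomial σ R}

theorem sum_smul_add_div (hm : 0 < m) (a b : σ →₀ ℕ) :
    ∑ i, (m • a + b) i / m = a.degree + ∑ i, b i / m := by
  rw [Finsupp.degree_eq_sum, ← sum_add_distrib]
  refine sum_congr rfl fun i _ => ?_
  rw [Finsupp.add_apply, Finsupp.smul_apply, smul_eq_mul, Nat.mul_add_div hm]

/-- The exponents `a` for which `adicMonomial m h a` is a product of fewer than `k` factors `h i`,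
up to a monomial of degree `< m` in each variable. -/
def adicExponents (σ : Type*) [Fintype σ] (m k : ℕ) : Set (σ →₀ ℕ) :=
  {a | ∑ i, a i / m < k}

theorem finite_adicExponents (hm : 0 < m) (k : ℕ) : (adicExponents σ m k).Finite := by
  classical
  refine (Set.finite_Iic (Finsupp.equivFunOnFinite.symm fun _ : σ => m * k)).subset
    fun a (ha : ∑ i, a i / m < k) i => ?_
  have hi : a i / m < k :=
    (single_le_sum (f := fun i => a i / m) (fun _ _ => Nat.zero_le _) (mem_univ i)).trans_lt ha
  rw [Nat.div_lt_iff_lt_mul hm] at hi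
  rw [Finsupp.equivFunOnFinite_symm_apply_apply, mul_comm]
  exact hi.le

theorem mem_adicExponents_of_degree_lt {k : ℕ} {a : σ →₀ ℕ} (ha : a.degree < m * k) :
    a ∈ adicExponents σ m k := by
  change ∑ i, a i / m < k
  refine lt_of_mul_lt_mul_left (lt_of_le_of_lt ?_ ha) m.zero_le
  rw [Finsupp.degree_eq_sum, mul_sum]
  exact sum_le_sum fun i _ => Nat.mul_div_le _ _

namespace HasLeadingPowers

theorem adicEquiv_mem_pow (hh : HasLeadingPowers m h) {k : ℕ} {P : MvPolynomial σ R}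
    (hP : P ∈ restrictSupport R (adicExponents σ m k)ᶜ) :
    hh.adicEquiv P ∈ Ideal.span (Set.range h) ^ k := by
  rw [← LinearEquiv.coe_coe, map_eq_sum_coeff_smul]
  refine Ideal.sum_mem _ fun a ha => ?_
  have hk : k ≤ ∑ i, a i / m := not_lt.1 (hP ha)
  rw [LinearEquiv.coe_coe, hh.adicEquiv_monomial, smul_eq_C_mul, adicMonomial, prod_mul_distrib]
  refine Ideal.mul_mem_left _ _ (Ideal.mul_mem_left _ _ (Ideal.pow_le_pow_right hk ?_))
  exact prod_pow_mem_ideal_pow (fun i => Ideal.subset_span (Set.mem_range_self i)) _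

theorem adicEquiv_symm_mem_restrictSupport (hh : HasLeadingPowers m h) (hm : 0 < m) {k : ℕ}
    {P : MvPolynomial σ R} (hP : P ∈ Ideal.span (Set.range h) ^ k) :
    hh.adicEquiv.symm P ∈ restrictSupport R (adicExponents σ m k)ᶜ := by
  classical
  obtain ⟨s, g, hs, rfl⟩ := exists_eq_sum_prod_pow_mul hP
  rw [map_sum]
  refine sum_mem fun a ha => ?_
  rw [hh.adicEquiv_symm_mul hm]
  intro b hb
  obtain ⟨c, hc, d, -, rfl⟩ := Finset.mem_add.1 (support_mul _ _ hb)
  rw [mem_singleton.1 (support_monomial_subset hc)]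
  change ¬ ∑ i, (m • a + d) i / m < k
  rw [sum_smul_add_div hm, hs a ha]
  lia

/-- The projection along `(h) ^ k` given by dropping the terms of the `h`-adic expansion that lie
in this ideal. -/
noncomputable def adicProj (hh : HasLeadingPowers m h) (k : ℕ) :
    MvPolynomial σ R →ₗ[R] MvPolynomial σ R :=
  hh.adicEquiv.toLinearMap ∘ₗ truncation R (adicExponents σ m k) ∘ₗ hh.adicEquiv.symm.toLinearMap

theorem adicProj_apply (hh : HasLeadingPowers m h) (k : ℕ) (P : MvPolynomial σ R) :
    hh.adicProj k P = hh.adicEquiv (truncation R (adicExponents σ m k) (hh.adicEquiv.symm P)) :=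
  rfl

theorem sub_adicProj_mem (hh : HasLeadingPowers m h) (k : ℕ) (P : MvPolynomial σ R) :
    P - hh.adicProj k P ∈ Ideal.span (Set.range h) ^ k := by
  have := hh.adicEquiv_mem_pow (sub_truncation_mem (s := adicExponents σ m k) (hh.adicEquiv.symm P))
  rwa [map_sub, LinearEquiv.apply_symm_apply] at this

theorem adicProj_eq_zero (hh : HasLeadingPowers m h) (hm : 0 < m) {k : ℕ} {P : MvPolynomial σ R}
    (hP : P ∈ Ideal.span (Set.range h) ^ k) : hh.adicProj k P = 0 := by
  rw [adicProj_apply, truncation_eq_zero (hh.adicEquiv_symm_mem_restrictSupport hm hP), map_zero]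

theorem adicProj_eq_self_of_degree_lt (hh : HasLeadingPowers m h) {k : ℕ} {P : MvPolynomial σ R}
    (hP : P ∈ degreeLT σ R (m * k)) : hh.adicProj k P = P := by
  rw [adicProj_apply, truncation_eq_self, LinearEquiv.apply_symm_apply]
  exact restrictSupport_mono R (fun _ => mem_adicExponents_of_degree_lt)
    (hh.adicEquiv_symm_mem_degreeLT hP)

theorem range_adicProj_le (hh : HasLeadingPowers m h) (k : ℕ) :
    LinearMap.range (hh.adicProj k) ≤
      (restrictSupport R (adicExponents σ m k)).map hh.adicEquiv.toLinearMap := by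
  rintro _ ⟨P, rfl⟩
  exact ⟨_, truncation_mem _, rfl⟩

theorem finiteDimensional_range_adicProj {𝕜 : Type*} [Field 𝕜] {h : σ → MvPolynomial σ 𝕜}
    (hh : HasLeadingPowers m h) (hm : 0 < m) (k : ℕ) :
    FiniteDimensional 𝕜 (LinearMap.range (hh.adicProj k)) := by
  have := (finite_adicExponents (σ := σ) hm k).to_subtype
  have := Module.Finite.of_basis (basisRestrictSupport 𝕜 (adicExponents σ m k))
  exact Submodule.finiteDimensional_of_le (hh.range_adicProj_le k)

end HasLeadingPowers

end AdicProjection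

section Quotient

variable {σ 𝕜 : Type*} [Field 𝕜] {m : ℕ} {h : σ → MvPolynomial σ 𝕜}

theorem finite_setOf_forall_lt (σ : Type*) [Finite σ] (m : ℕ) :
    {a : σ →₀ ℕ | ∀ i, a i < m}.Finite := by
  classical
  exact (Set.finite_Iic (Finsupp.equivFunOnFinite.symm fun _ : σ => m)).subset
    fun _ ha i => (ha i).le

theorem card_setOf_forall_lt (σ : Type*) [Fintype σ] (m : ℕ) :
    Nat.card {a : σ →₀ ℕ | ∀ i, a i < m} = m ^ Fintype.card σ := by
  classical
  let e : {a : σ →₀ ℕ // ∀ i, a i < m} ≃ (σ → Fin m) :=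
    (Finsupp.equivFunOnFinite.subtypeEquiv fun _ => Iff.rfl).trans
      (Equiv.subtypePiEquivPi.trans (Equiv.piCongrRight fun _ => Fin.equivSubtype.symm))
  refine (Nat.card_congr e).trans ?_
  rw [Nat.card_fun, Nat.card_fin, Nat.card_eq_fintype_card]

theorem HasLeadingPowers.surjective_mk_restrictSupport [Finite σ] (hh : HasLeadingPowers m h)
    (hm : 0 < m) :
    Function.Surjective ((Ideal.Quotient.mkₐ 𝕜 (Ideal.span (Set.range h))).toLinearMap.domRestrict
      (restrictSupport 𝕜 {a : σ →₀ ℕ | ∀ i, a i < m})) := by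
  have := Fintype.ofFinite σ
  intro x
  obtain ⟨P, rfl⟩ := Ideal.Quotient.mk_surjective x
  have hlt {a : σ →₀ ℕ} (ha : a ∈ adicExponents σ m 1) (i : σ) : a i < m := by
    have hzero : ∑ i, a i / m = 0 := Nat.lt_one_iff.1 ha
    exact (Nat.div_eq_zero_iff_lt hm).1 (sum_eq_zero_iff.1 hzero i (mem_univ i))
  have hmem : hh.adicProj 1 P ∈ restrictSupport 𝕜 {a : σ →₀ ℕ | ∀ i, a i < m} := by
    rw [hh.adicProj_apply, ← LinearEquiv.coe_coe, map_eq_sum_coeff_smul]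
    refine sum_mem fun a ha => Submodule.smul_mem _ _ ?_
    have ha := hlt (truncation_mem _ ha)
    have hself : adicMonomial m h a = monomial a 1 := by
      rw [adicMonomial, monomial_eq, C_1, one_mul, Finsupp.prod_fintype _ _ (by simp)]
      refine prod_congr rfl fun i _ => ?_
      rw [Nat.div_eq_of_lt (ha i), Nat.mod_eq_of_lt (ha i), pow_zero, mul_one]
    rw [LinearEquiv.coe_coe, hh.adicEquiv_monomial, hself]
    exact (monomial_mem_restrictSupport 𝕜).2 (Or.inl ha)
  refine ⟨⟨hh.adicProj 1 P, hmem⟩, Eq.symm (Ideal.Quotient.eq.2 ?_)⟩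
  have := hh.sub_adicProj_mem 1 P
  rwa [pow_one] at this

theorem HasLeadingPowers.finiteDimensional_quotient [Finite σ] (hh : HasLeadingPowers m h)
    (hm : 0 < m) :
    FiniteDimensional 𝕜 (MvPolynomial σ 𝕜 ⧸ Ideal.span (Set.range h)) := by
  have := (finite_setOf_forall_lt σ m).to_subtype
  have := Module.Finite.of_basis (basisRestrictSupport 𝕜 {a : σ →₀ ℕ | ∀ i, a i < m})
  exact Module.Finite.of_surjective _ (hh.surjective_mk_restrictSupport hm)

theorem HasLeadingPowers.finrank_quotient_le [Fintype σ] (hh : HasLeadingPowers m h)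
    (hm : 0 < m) :
    Module.finrank 𝕜 (MvPolynomial σ 𝕜 ⧸ Ideal.span (Set.range h)) ≤ m ^ Fintype.card σ := by
  have := (finite_setOf_forall_lt σ m).to_subtype
  have basis := basisRestrictSupport 𝕜 {a : σ →₀ ℕ | ∀ i, a i < m}
  have := Module.Finite.of_basis basis
  refine (LinearMap.finrank_le_finrank_of_surjective
    (hh.surjective_mk_restrictSupport hm)).trans_eq ?_
  rw [Module.finrank_eq_nat_card_basis basis, card_setOf_forall_lt]

end Quotient

section Estimates

variable {σ 𝕜 : Type*} [Fintype σ] [NormedField 𝕜] {m : ℕ} {h : σ → MvPolynomial σ 𝕜}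

theorem HasLeadingPowers.exists_coeffNorm_adicEquiv_le (hh : HasLeadingPowers m h) (hm : 0 < m)
    {r : ℝ} (hr : 1 ≤ r) : ∃ B ≥ r, ∀ P, coeffNorm r (hh.adicEquiv P) ≤ coeffNorm B P := by
  have hr0 : 0 ≤ r := zero_le_one.trans hr
  have hnonneg (i : σ) : 0 ≤ coeffNorm r (h i) := coeffNorm_nonneg hr0 _
  set B : ℝ := r + ∑ i, coeffNorm r (h i)
  have hrB : r ≤ B := le_add_of_nonneg_right (sum_nonneg fun i _ => hnonneg i)
  have hhB (i : σ) : coeffNorm r (h i) ≤ B :=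
    (single_le_sum (fun i _ => hnonneg i) (mem_univ i)).trans (le_add_of_nonneg_left hr0)
  refine ⟨B, hrB, fun P => ?_⟩
  rw [← one_mul (coeffNorm B P)]
  refine coeffNorm_map_le_of_monomial hr0 hh.adicEquiv.toLinearMap P fun a _ => ?_
  rw [LinearEquiv.coe_coe, hh.adicEquiv_monomial, one_mul, adicMonomial, Finsupp.degree_eq_sum,
    ← prod_pow_eq_pow_sum]
  refine (coeffNorm_prod_le hr0 _ _).trans
    (prod_le_prod (fun i _ => coeffNorm_nonneg hr0 _) fun i _ => ?_)
  calc coeffNorm r (X i ^ (a i % m) * h i ^ (a i / m))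
      ≤ coeffNorm r (X i) ^ (a i % m) * coeffNorm r (h i) ^ (a i / m) :=
        (coeffNorm_mul_le hr0 _ _).trans (mul_le_mul (coeffNorm_pow_le hr0 _ _)
          (coeffNorm_pow_le hr0 _ _) (coeffNorm_nonneg hr0 _)
          (pow_nonneg (coeffNorm_nonneg hr0 _) _))
    _ ≤ B ^ (a i % m) * B ^ (a i / m) := by
        rw [coeffNorm_X]
        exact mul_le_mul (pow_le_pow_left₀ hr0 hrB _) (pow_le_pow_left₀ (hnonneg i) (hhB i) _)
          (pow_nonneg (hnonneg i) _) (pow_nonneg (hr0.trans hrB) _)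
    _ = B ^ (a i % m + a i / m) := (pow_add _ _ _).symm
    _ ≤ B ^ a i := by
        refine pow_le_pow_right₀ (hr.trans hrB) ?_
        have := Nat.mod_add_div (a i) m
        have := Nat.le_mul_of_pos_left (a i / m) hm
        lia

theorem HasLeadingPowers.adicEquiv_symm_X_mul (hh : HasLeadingPowers m h) (hm : 0 < m) (i : σ)
    (a : σ →₀ ℕ) : hh.adicEquiv.symm (X i * adicMonomial m h a) =
      monomial (m • a.mapRange (· / m) (Nat.zero_div m)) 1 *
        hh.adicEquiv.symm (X i * monomial (a.mapRange (· % m) (Nat.zero_mod m)) 1) := by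
  rw [← hh.adicEquiv_symm_mul hm]
  congr 1
  rw [adicMonomial, prod_mul_distrib, monomial_eq, C_1, one_mul,
    Finsupp.prod_fintype _ _ (by simp)]
  simp only [Finsupp.mapRange_apply]
  ring

theorem HasLeadingPowers.exists_coeffNorm_adicEquiv_symm_X_mul_le (hh : HasLeadingPowers m h)
    (hm : 0 < m) : ∃ C : ℝ, 1 ≤ C ∧ ∀ i P, coeffNorm 1 (hh.adicEquiv.symm (X i * P)) ≤
      C * coeffNorm 1 (hh.adicEquiv.symm P) := by
  have hfin := (Set.finite_univ (α := σ)).prod (finite_setOf_forall_lt σ m)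
  obtain ⟨C, hC⟩ := (hfin.image fun ib : σ × (σ →₀ ℕ) =>
    coeffNorm 1 (hh.adicEquiv.symm (X ib.1 * monomial ib.2 1))).bddAbove
  refine ⟨max 1 C, le_max_left _ _, fun i P => ?_⟩
  have hbasis (a : σ →₀ ℕ) :
      coeffNorm 1 (hh.adicEquiv.symm (X i * adicMonomial m h a)) ≤ max 1 C * 1 ^ a.degree := by
    rw [hh.adicEquiv_symm_X_mul hm, coeffNorm_monomial_mul, one_pow, one_mul, one_pow, mul_one]
    refine le_max_of_le_right (hC ⟨(i, _), ⟨Set.mem_univ i, fun j => ?_⟩, rfl⟩)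
    exact Nat.mod_lt _ hm
  have := coeffNorm_map_le_of_monomial zero_le_one
    (hh.adicEquiv.symm.toLinearMap ∘ₗ LinearMap.mulLeft 𝕜 (X i) ∘ₗ hh.adicEquiv.toLinearMap)
    (hh.adicEquiv.symm P) fun a _ => (congrArg _ (by
      simp only [LinearMap.comp_apply, LinearEquiv.coe_coe, LinearMap.mulLeft_apply,
        hh.adicEquiv_monomial])).trans_le (hbasis a)
  simpa only [LinearMap.comp_apply, LinearEquiv.coe_coe, LinearMap.mulLeft_apply,
    LinearEquiv.apply_symm_apply] using this

theorem HasLeadingPowers.exists_coeffNorm_adicEquiv_symm_le (hh : HasLeadingPowers m h)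
    (hm : 0 < m) : ∃ C : ℝ, 1 ≤ C ∧ ∀ a : σ →₀ ℕ,
      coeffNorm 1 (hh.adicEquiv.symm (monomial a 1)) ≤ C ^ a.degree := by
  classical
  obtain ⟨C, hC, hX⟩ := hh.exists_coeffNorm_adicEquiv_symm_X_mul_le hm
  refine ⟨C, hC, fun a => ?_⟩
  induction hD : a.degree generalizing a with
  | zero =>
    obtain rfl : a = 0 := (Finsupp.degree_eq_zero_iff a).1 hD
    have hone : hh.adicEquiv.symm (monomial 0 1) = monomial 0 1 := by
      rw [LinearEquiv.symm_apply_eq, hh.adicEquiv_monomial, adicMonomial]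
      simp
    rw [hone, coeffNorm_monomial, norm_one, map_zero, pow_zero, pow_zero, one_mul]
  | succ D ih =>
    have hne : a ≠ 0 := by
      rintro rfl
      simp at hD
    obtain ⟨i, hi⟩ := Finsupp.ne_iff.1 hne
    obtain ⟨b, rfl⟩ := exists_add_of_le
      (Finsupp.single_le_iff.2 (Nat.one_le_iff_ne_zero.2 hi) : Finsupp.single i 1 ≤ a)
    rw [map_add, Finsupp.degree_single] at hD
    have hXmul : monomial (Finsupp.single i 1 + b) (1 : 𝕜) = X i * monomial b 1 := by
      rw [X, monomial_mul, one_mul]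
    rw [hXmul, pow_succ']
    exact (hX i _).trans (mul_le_mul_of_nonneg_left (ih b (by lia)) (zero_le_one.trans hC))

theorem HasLeadingPowers.exists_coeffNorm_adicProj_le (hh : HasLeadingPowers m h) (hm : 0 < m)
    {r : ℝ} (hr : 1 ≤ r) :
    ∃ C ≥ r, ∀ k P, coeffNorm r (hh.adicProj k P) ≤ coeffNorm C P := by
  obtain ⟨B, hB, hBle⟩ := hh.exists_coeffNorm_adicEquiv_le hm hr
  obtain ⟨C, hC, hCle⟩ := hh.exists_coeffNorm_adicEquiv_symm_le hm
  have hB1 : 1 ≤ B := hr.trans hB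
  refine ⟨B * C, hB.le.trans (le_mul_of_one_le_right (zero_le_one.trans hB1) hC), fun k P => ?_⟩
  rw [← one_mul (coeffNorm (B * C) P)]
  refine coeffNorm_map_le_of_monomial (zero_le_one.trans hr) (hh.adicProj k) P fun a _ => ?_
  have hdeg : (hh.adicEquiv.symm (monomial a 1)).totalDegree ≤ a.degree :=
    Nat.lt_succ_iff.1 <| totalDegree_lt_of_mem_degreeLT a.degree.succ_pos <|
      hh.adicEquiv_symm_mem_degreeLT <| mem_degreeLT_of_totalDegree_lt <|
        Nat.lt_succ_iff.2 (totalDegree_monomial_le _ _)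
  calc coeffNorm r (hh.adicProj k (monomial a 1))
      ≤ coeffNorm B (truncation 𝕜 (adicExponents σ m k) (hh.adicEquiv.symm (monomial a 1))) :=
        hBle _
    _ ≤ coeffNorm B (hh.adicEquiv.symm (monomial a 1)) :=
        coeffNorm_truncation_le (zero_le_one.trans hB1) _ _
    _ ≤ B ^ a.degree * C ^ a.degree :=
        (coeffNorm_le_pow_mul hB1 hdeg).trans
          (mul_le_mul_of_nonneg_left (hCle a) (pow_nonneg (zero_le_one.trans hB1) _))
    _ = 1 * (B * C) ^ a.degree := by rw [mul_pow, one_mul]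

theorem HasLeadingPowers.exists_coeffNorm_sub_adicProj_le (hh : HasLeadingPowers m h) (hm : 0 < m)
    {r : ℝ} (hr : 1 ≤ r) :
    ∃ C ≥ r, ∀ k, ∀ ρ ≥ C, ∀ P,
      coeffNorm r (P - hh.adicProj k P) ≤ 2 * (C / ρ) ^ (m * k) * coeffNorm ρ P := by
  obtain ⟨C, hrC, hproj⟩ := hh.exists_coeffNorm_adicProj_le hm hr
  have hr0 : 0 ≤ r := zero_le_one.trans hr
  have hC : 0 < C := (zero_lt_one.trans_le hr).trans_le hrC
  refine ⟨C, hrC, fun k ρ hρ P => ?_⟩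
  have hρ0 : 0 < ρ := hC.trans_le hρ
  refine coeffNorm_map_le_of_monomial hr0 (LinearMap.id - hh.adicProj k) P fun a _ => ?_
  rw [LinearMap.sub_apply, LinearMap.id_apply]
  by_cases ha : a.degree < m * k
  · rw [hh.adicProj_eq_self_of_degree_lt (mem_degreeLT_of_totalDegree_lt
      ((totalDegree_monomial_le _ _).trans_lt ha)), sub_self, coeffNorm_zero]
    positivity
  · calc coeffNorm r (monomial a 1 - hh.adicProj k (monomial a 1))
        ≤ r ^ a.degree + C ^ a.degree := by
          refine (coeffNorm_sub_le hr0 _ _).trans (add_le_add ?_ ((hproj k _).trans ?_)) <;>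
            rw [coeffNorm_monomial, norm_one, one_mul]
      _ ≤ 2 * C ^ a.degree := by
          have := pow_le_pow_left₀ hr0 hrC a.degree
          linarith
      _ = 2 * (C / ρ) ^ a.degree * ρ ^ a.degree := by
          rw [mul_assoc, ← mul_pow, div_mul_cancel₀ _ hρ0.ne']
      _ ≤ 2 * (C / ρ) ^ (m * k) * ρ ^ a.degree := by
          gcongr 2 * ?_ * _
          exact pow_le_pow_of_le_one (by positivity) ((div_le_one hρ0).2 hρ) (not_lt.1 ha)

end Estimates

/-! ### Jets along lines and Hermite interpolation -/

section Lines

variable {σ R : Type*} [CommRing R]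

/-- Restriction of a polynomial to the line `t ↦ s + t ζ`; the orders of vanishing of all these
restrictions at `t = 0` measure the order of vanishing at `s`. -/
noncomputable def lineHom (s ζ : σ → R) : MvPolynomial σ R →ₐ[R] Polynomial R :=
  aeval fun i => Polynomial.C (s i) + Polynomial.C (ζ i) * Polynomial.X

theorem lineHom_X (s ζ : σ → R) (i : σ) :
    lineHom s ζ (X i) = Polynomial.C (s i) + Polynomial.C (ζ i) * Polynomial.X :=
  aeval_X _ _

theorem eval_lineHom (s ζ : σ → R) (P : MvPolynomial σ R) (t : R) :
    (lineHom s ζ P).eval t = eval (s + t • ζ) P := by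
  induction P using MvPolynomial.induction_on with
  | C a => simp [lineHom]
  | add p q hp hq => simp [hp, hq]
  | mul_X p i hp => simp [hp, lineHom_X, mul_comm t]

theorem coeff_zero_lineHom (s ζ : σ → R) (P : MvPolynomial σ R) :
    (lineHom s ζ P).coeff 0 = eval s P := by
  rw [Polynomial.coeff_zero_eq_eval_zero, eval_lineHom, zero_smul, add_zero]

theorem coeff_one_lineHom [Fintype σ] (s ζ : σ → R) (P : MvPolynomial σ R) :
    (lineHom s ζ P).coeff 1 = ∑ i, ζ i * eval s (pderiv i P) := by
  classical
  induction P using MvPolynomial.induction_on with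
  | C a => simp [lineHom]
  | add p q hp hq => simp [hp, hq, mul_add, sum_add_distrib]
  | mul_X p i hp =>
    have hleibniz (j : σ) : ζ j * eval s (pderiv j (p * X i)) =
        (if j = i then ζ i * eval s p else 0) + s i * (ζ j * eval s (pderiv j p)) := by
      rw [Derivation.leibniz, pderiv_X]
      split_ifs with hj
      · subst hj
        simp only [Pi.single_eq_same, smul_eq_mul, map_add, map_mul, eval_X, mul_one]
        ring
      · simp only [Pi.single_eq_of_ne (Ne.symm hj), smul_eq_mul, map_mul, eval_X, mul_zero,
          zero_add]
        ring
    rw [sum_congr rfl fun j _ => hleibniz j, sum_add_distrib, sum_ite_eq' univ i,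
      if_pos (mem_univ i), ← mul_sum, ← hp, map_mul, lineHom_X, mul_add, Polynomial.coeff_add,
      Polynomial.coeff_mul_C, ← mul_assoc, Polynomial.coeff_mul_X, Polynomial.coeff_mul_C,
      coeff_zero_lineHom]
    ring

theorem coeff_lineHom_zero (ζ : σ → R) (P : MvPolynomial σ R) (j : ℕ) :
    (lineHom 0 ζ P).coeff j = eval ζ (homogeneousComponent j P) := by
  classical
  induction P using MvPolynomial.induction_on' with
  | monomial a c =>
    have hmonomial : lineHom 0 ζ (monomial a c) =
        Polynomial.C (c * a.prod fun i k => ζ i ^ k) * Polynomial.X ^ a.degree := by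
      rw [lineHom, aeval_monomial, Finsupp.degree_apply]
      simp [Finsupp.prod, mul_pow, prod_mul_distrib, prod_pow_eq_pow_sum, mul_assoc]
    rw [hmonomial, Polynomial.coeff_C_mul_X_pow,
      homogeneousComponent_of_mem (isHomogeneous_monomial c rfl)]
    split_ifs
    · rw [eval_monomial]
    · rw [map_zero]
  | add p q hp hq => simp only [map_add, Polynomial.coeff_add, hp, hq]

theorem mem_ker_pow_of_coeff_lineHom [IsDomain R] [Infinite R] {s : σ → R} {k : ℕ}
    {P : MvPolynomial σ R} (hP : ∀ ζ, ∀ j < k, (lineHom s ζ P).coeff j = 0) :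
    P ∈ RingHom.ker (eval s) ^ k := by
  set T : MvPolynomial σ R →ₐ[R] MvPolynomial σ R := aeval fun i => X i + C (s i) with hT
  set T' : MvPolynomial σ R →ₐ[R] MvPolynomial σ R := aeval fun i => X i - C (s i) with hT'
  have leftInverse : T' (T P) = P := by
    have : T'.comp T = AlgHom.id R _ := by
      ext i
      simp [hT, hT', algHom_C]
    exact DFunLike.congr_fun this P
  have lineHom_translate (ζ : σ → R) : lineHom 0 ζ (T P) = lineHom s ζ P := by
    have : (lineHom 0 ζ).comp T = lineHom s ζ := by
      ext i
      simp [hT, lineHom, algHom_C, add_comm]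
    exact DFunLike.congr_fun this P
  have translate_mem : T P ∈ idealOfVars σ R ^ k := by
    rw [mem_pow_idealOfVars_iff']
    intro a ha
    have hcomponent : homogeneousComponent a.degree (T P) = 0 := by
      refine MvPolynomial.funext fun ζ => ?_
      rw [← coeff_lineHom_zero, lineHom_translate, map_zero]
      exact hP ζ _ ha
    have := congrArg (coeff a) hcomponent
    rwa [coeff_homogeneousComponent, if_pos rfl, coeff_zero] at this
  have hcomap : idealOfVars σ R ≤ (RingHom.ker (eval s)).comap T' := by
    rw [idealOfVars, Ideal.span_le]
    rintro _ ⟨i, rfl⟩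
    simp [hT', RingHom.mem_ker]
  have := (Ideal.pow_right_mono hcomap k).trans (Ideal.le_comap_pow _ k) translate_mem
  rwa [Ideal.mem_comap, leftInverse] at this

theorem mem_ker_sq_of_pderiv [Finite σ] [IsDomain R] [Infinite R] {s : σ → R}
    {P : MvPolynomial σ R} (h0 : eval s P = 0) (h1 : ∀ i, eval s (pderiv i P) = 0) :
    P ∈ RingHom.ker (eval s) ^ 2 := by
  have := Fintype.ofFinite σ
  refine mem_ker_pow_of_coeff_lineHom fun ζ j hj => ?_
  interval_cases j
  · rw [coeff_zero_lineHom, h0]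
  · simp only [coeff_one_lineHom, h1, mul_zero, sum_const_zero]

theorem coeff_lineHom_eq_zero_of_mem_ker_pow (s ζ : σ → R) {k : ℕ} {P : MvPolynomial σ R}
    (hP : P ∈ RingHom.ker (eval s) ^ k) {j : ℕ} (hj : j < k) : (lineHom s ζ P).coeff j = 0 := by
  have hcomap : RingHom.ker (eval s) ≤
      (Ideal.span {(Polynomial.X : Polynomial R)}).comap (lineHom s ζ) := by
    intro Q hQ
    rw [Ideal.mem_comap, Ideal.mem_span_singleton, Polynomial.X_dvd_iff]
    exact (coeff_zero_lineHom s ζ Q).trans hQ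
  have := (Ideal.pow_right_mono hcomap k).trans (Ideal.le_comap_pow _ k) hP
  rw [Ideal.mem_comap, Ideal.span_singleton_pow, Ideal.mem_span_singleton,
    Polynomial.X_pow_dvd_iff] at this
  exact this j hj

end Lines

section Lagrange

variable {σ ι R : Type*} [CommRing R] {s : ι → σ → R} {e : ι → MvPolynomial σ R}

/-- The polynomials `e j` are a Lagrange basis for interpolation at the points `s i`. -/
def IsLagrangeBasis (s : ι → σ → R) (e : ι → MvPolynomial σ R) : Prop :=
  (∀ i, eval (s i) (e i) = 1) ∧ Pairwise fun i j => eval (s i) (e j) = 0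

theorem IsLagrangeBasis.eval_sum_mul [Fintype ι] (he : IsLagrangeBasis s e)
    (g : ι → MvPolynomial σ R) (i : ι) : eval (s i) (∑ j, g j * e j) = eval (s i) (g i) := by
  classical
  rw [map_sum, Finset.sum_eq_single i]
  · rw [map_mul, he.1, mul_one]
  · intro j _ hj
    rw [map_mul, he.2 hj.symm, mul_zero]
  · simp

theorem IsLagrangeBasis.exists_hermite [Finite σ] [Finite ι] (he : IsLagrangeBasis s e) {D : ℕ}
    (hD : ∀ i, (e i).totalDegree ≤ D) (α : ι → R) (β : ι → σ → R) :
    ∃ P : MvPolynomial σ R, P.totalDegree ≤ 2 * D + 1 ∧ (∀ i, eval (s i) P = α i) ∧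
      ∀ i j, eval (s i) (pderiv j P) = β i j := by
  classical
  have := Fintype.ofFinite σ
  have := Fintype.ofFinite ι
  set L : ι → MvPolynomial σ R := fun i => C (α i) +
    ∑ j, C (β i j - 2 * eval (s i) (pderiv j (e i)) * α i) * (X j - C (s i j)) with hL
  have eval_L (i : ι) : eval (s i) (L i) = α i := by simp [hL]
  have eval_pderiv_L (i : ι) (j : σ) : eval (s i) (pderiv j (L i)) =
      β i j - 2 * eval (s i) (pderiv j (e i)) * α i := by
    simp only [hL, map_add, map_sum, pderiv_C, map_sub]
    rw [Finset.sum_eq_single j]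
    · simp
    · intro k _ hk
      simp [pderiv_X, Pi.single_eq_of_ne hk]
    · simp
  refine ⟨∑ i, e i * L i * e i, totalDegree_finsetSum_le fun i _ => ?_, fun i => ?_,
    fun i j => ?_⟩
  · have hlinear : (L i).totalDegree ≤ 1 := by
      refine (totalDegree_add _ _).trans (max_le (by simp) ?_)
      refine totalDegree_finsetSum_le fun j _ => (totalDegree_mul _ _).trans ?_
      rw [totalDegree_C, zero_add]
      refine (totalDegree_sub _ _).trans (max_le ?_ (by simp))
      simpa only [pow_one] using totalDegree_X_pow_le (R := R) j 1
    have h1 := totalDegree_mul (e i * L i) (e i)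
    have h2 := totalDegree_mul (e i) (L i)
    have h3 := hD i
    lia
  · rw [he.eval_sum_mul, map_mul, he.1, one_mul, eval_L]
  · rw [map_sum, map_sum, Finset.sum_eq_single i]
    · simp only [Derivation.leibniz, smul_eq_mul, map_add, map_mul, he.1, eval_L, eval_pderiv_L]
      ring
    · intro k _ hk
      simp only [Derivation.leibniz, smul_eq_mul, map_add, map_mul, he.2 hk.symm, zero_mul,
        add_zero]
    · simp

end Lagrange

/-! ### Residual ideals -/

section ResidualIdeal

variable {A : Type*} [CommRing A] {I J Q : Ideal A}

/- The determinant trick gives `r ∈ 1 + J` with `r J ≤ I`, and `Q` is generated by `I` and `r`. -/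
theorem exists_residual_ideal (hJ : J.FG) (hIJ : J ≤ I ⊔ J ^ 2) :
    ∃ Q, I ≤ Q ∧ Q ≤ I ⊔ Q ^ 2 ∧ Q * J ≤ I ∧ IsCoprime Q J := by
  have hmap : Submodule.map (Submodule.mkQ I) J ≤ J • Submodule.map (Submodule.mkQ I) J := by
    rw [← Submodule.map_smul'', smul_eq_mul, ← pow_two]
    refine (Submodule.map_mono hIJ).trans ?_
    rw [Submodule.map_sup, Submodule.mkQ_map_self, bot_sup_eq]
  obtain ⟨r, hr, hrmul⟩ := Submodule.exists_sub_one_mem_and_smul_eq_zero_of_fg_of_le_smul J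
    (Submodule.map (Submodule.mkQ I) J) (Submodule.FG.map _ hJ) hmap
  have mul_mem {x : A} (hx : x ∈ J) : r * x ∈ I := by
    have := hrmul _ (Submodule.mem_map_of_mem hx)
    rwa [← map_smul, Submodule.mkQ_apply, Submodule.Quotient.mk_eq_zero] at this
  have hr' : 1 - r ∈ J := by simpa only [neg_sub] using neg_mem hr
  have hrQ : r ∈ I ⊔ Ideal.span {r} := Ideal.mem_sup_right (Ideal.mem_span_singleton_self r)
  refine ⟨I ⊔ Ideal.span {r}, le_sup_left, sup_le le_sup_left ?_, ?_, ?_⟩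
  · have := Submodule.add_mem_sup (mul_mem hr') (Ideal.pow_mem_pow hrQ 2)
    rwa [mul_one_sub, ← pow_two, sub_add_cancel, ← Ideal.span_singleton_le_iff_mem] at this
  · rw [Ideal.sup_mul]
    exact sup_le Ideal.mul_le_left (Ideal.span_singleton_mul_le_iff.2 fun x => mul_mem)
  · exact Ideal.isCoprime_iff_exists.2 ⟨r, hrQ, 1 - r, hr', add_sub_cancel _ _⟩

theorem finrank_quotient_add_finrank_quotient_le {𝕜 : Type*} [Field 𝕜] [Algebra 𝕜 A]
    [FiniteDimensional 𝕜 (A ⧸ I)] (hQ : I ≤ Q) (hJ : I ≤ J) (hQJ : IsCoprime Q J) :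
    Module.finrank 𝕜 (A ⧸ Q) + Module.finrank 𝕜 (A ⧸ J) ≤ Module.finrank 𝕜 (A ⧸ I) := by
  let toQ := (Ideal.Quotient.factorₐ 𝕜 hQ).toLinearMap
  let toJ := (Ideal.Quotient.factorₐ 𝕜 hJ).toLinearMap
  have : FiniteDimensional 𝕜 (A ⧸ Q) :=
    Module.Finite.of_surjective toQ (Ideal.Quotient.factor_surjective hQ)
  have : FiniteDimensional 𝕜 (A ⧸ J) :=
    Module.Finite.of_surjective toJ (Ideal.Quotient.factor_surjective hJ)
  rw [← Module.finrank_prod]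
  refine LinearMap.finrank_le_finrank_of_surjective (f := toQ.prod toJ) ?_
  rintro ⟨x, y⟩
  obtain ⟨x, rfl⟩ := Ideal.Quotient.mk_surjective x
  obtain ⟨y, rfl⟩ := Ideal.Quotient.mk_surjective y
  obtain ⟨a, ha, b, hb, hab⟩ := Ideal.isCoprime_iff_exists.1 hQJ
  refine ⟨Ideal.Quotient.mk I (b * x + a * y),
    Prod.ext (Ideal.Quotient.eq.2 ?_) (Ideal.Quotient.eq.2 ?_)⟩
  · convert Q.mul_mem_right (y - x) ha using 1
    linear_combination x * hab
  · convert J.mul_mem_right (x - y) hb using 1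
    linear_combination y * hab

theorem pow_le_sup_of_le_sup_sq (hIQ : I ≤ Q) (hQ : Q ≤ I ⊔ Q ^ 2) (l : ℕ) :
    Q ^ l ≤ I ^ l ⊔ Q ^ (l + 1) := by
  induction l with
  | zero => simp
  | succ l ih =>
    calc Q ^ (l + 1) = Q ^ l * Q := pow_succ _ _
      _ ≤ Q ^ l * (I ⊔ Q ^ 2) := Ideal.mul_mono_right hQ
      _ = Q ^ l * I ⊔ Q ^ (l + 2) := by rw [Ideal.mul_sup, ← pow_add]
      _ ≤ (I ^ l ⊔ Q ^ (l + 1)) * I ⊔ Q ^ (l + 2) := sup_le_sup_right (Ideal.mul_mono_left ih) _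
      _ = I ^ (l + 1) ⊔ Q ^ (l + 1) * I ⊔ Q ^ (l + 2) := by rw [Ideal.sup_mul, ← pow_succ]
      _ ≤ I ^ (l + 1) ⊔ Q ^ (l + 1 + 1) := by
        refine sup_le (sup_le le_sup_left ?_) le_sup_right
        rw [pow_succ Q (l + 1)]
        exact (Ideal.mul_mono_right hIQ).trans le_sup_right

end ResidualIdeal

section PowQuotient

variable {σ 𝕜 A : Type*} [Field 𝕜] [CommRing A] [Algebra 𝕜 A] {h : σ → A}
  {Q : Ideal A}

theorem iSup_map_mulLeft_sup_pow_eq_top [Fintype σ] (hIQ : Ideal.span (Set.range h) ≤ Q)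
    (hQ : Q ≤ Ideal.span (Set.range h) ⊔ Q ^ 2) {W : Submodule 𝕜 A}
    (hW : W ⊔ Q.restrictScalars 𝕜 = ⊤) (l : ℕ) :
    (⨆ a : {a : σ →₀ ℕ | a.degree < l}, W.map (LinearMap.mulLeft 𝕜 (∏ i, h i ^ a.1 i))) ⊔
      (Q ^ l).restrictScalars 𝕜 = ⊤ := by
  induction l with
  | zero => simp
  | succ l ih =>
    set V : ℕ → Submodule 𝕜 A := fun l =>
      ⨆ a : {a : σ →₀ ℕ | a.degree < l}, W.map (LinearMap.mulLeft 𝕜 (∏ i, h i ^ a.1 i))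
    have mono : V l ≤ V (l + 1) := iSup_le fun a =>
      le_iSup (fun a : {a : σ →₀ ℕ | a.degree < l + 1} =>
        W.map (LinearMap.mulLeft 𝕜 (∏ i, h i ^ a.1 i))) ⟨a.1, a.2.trans l.lt_succ_self⟩
    have prod_mul_mem {a : σ →₀ ℕ} (ha : a.degree = l) (g : A) :
        (∏ i, h i ^ a i) * g ∈ V (l + 1) ⊔ (Q ^ (l + 1)).restrictScalars 𝕜 := by
      obtain ⟨w, hw, q, hq, rfl⟩ := Submodule.mem_sup.1 (hW ▸ Submodule.mem_top : g ∈ _)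
      rw [mul_add]
      refine Submodule.add_mem_sup ?_ ?_
      · exact Submodule.mem_iSup_of_mem ⟨a, ha ▸ l.lt_succ_self⟩ ⟨w, hw, rfl⟩
      · have := prod_pow_mem_ideal_pow
          (fun i => hIQ (Ideal.subset_span (Set.mem_range_self i))) a
        rw [← Finsupp.degree_eq_sum, ha] at this
        exact pow_succ Q l ▸ Ideal.mul_mem_mul this hq
    rw [eq_top_iff, ← ih]
    refine sup_le (mono.trans le_sup_left) fun x hx => ?_
    obtain ⟨y, hy, z, hz, rfl⟩ := Submodule.mem_sup.1 (pow_le_sup_of_le_sup_sq hIQ hQ l hx)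
    refine add_mem ?_ (Submodule.mem_sup_right hz)
    obtain ⟨s, g, hs, rfl⟩ := exists_eq_sum_prod_pow_mul hy
    exact sum_mem fun a ha => prod_mul_mem (hs a ha) (g a)

theorem finite_setOf_degree_lt (σ : Type*) [Finite σ] (l : ℕ) :
    {a : σ →₀ ℕ | a.degree < l}.Finite :=
  (Finsupp.finite_of_degree_le l).subset fun _ (ha : _ < l) => ha.le

theorem finrank_quotient_pow_le [Finite σ] (hIQ : Ideal.span (Set.range h) ≤ Q)
    (hQ : Q ≤ Ideal.span (Set.range h) ⊔ Q ^ 2) [FiniteDimensional 𝕜 (A ⧸ Q)] (l : ℕ) :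
    FiniteDimensional 𝕜 (A ⧸ Q ^ l) ∧ Module.finrank 𝕜 (A ⧸ Q ^ l) ≤
      Nat.card {a : σ →₀ ℕ | a.degree < l} * Module.finrank 𝕜 (A ⧸ Q) := by
  classical
  have := Fintype.ofFinite σ
  obtain ⟨W, hW⟩ := (Q.restrictScalars 𝕜).exists_isCompl
  have equiv : (A ⧸ Q) ≃ₗ[𝕜] W := (Q.restrictScalars 𝕜).quotientEquivOfIsCompl W hW
  have := Module.Finite.equiv equiv
  have := (finite_setOf_degree_lt σ l).to_subtype
  have := Fintype.ofFinite {a : σ →₀ ℕ | a.degree < l}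
  let Φ : ({a : σ →₀ ℕ | a.degree < l} → W) →ₗ[𝕜] A := LinearMap.lsum 𝕜 (fun _ => W) 𝕜
    fun a => LinearMap.mulLeft 𝕜 (∏ i, h i ^ a.1 i) ∘ₗ W.subtype
  have map_le (a : {a : σ →₀ ℕ | a.degree < l}) :
      W.map (LinearMap.mulLeft 𝕜 (∏ i, h i ^ a.1 i)) ≤ LinearMap.range Φ := by
    rintro _ ⟨w, hw, rfl⟩
    exact ⟨Pi.single a ⟨w, hw⟩, LinearMap.lsum_piSingle ..⟩
  have surjective : Function.Surjective ((Ideal.Quotient.mkₐ 𝕜 (Q ^ l)).toLinearMap ∘ₗ Φ) := by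
    intro x
    obtain ⟨x, rfl⟩ := Ideal.Quotient.mk_surjective x
    have htop := iSup_map_mulLeft_sup_pow_eq_top hIQ hQ hW.symm.sup_eq_top l
    obtain ⟨y, hy, z, hz, rfl⟩ := Submodule.mem_sup.1 (htop ▸ Submodule.mem_top : x ∈ _)
    obtain ⟨c, rfl⟩ := iSup_le map_le hy
    refine ⟨c, Ideal.Quotient.eq.2 ?_⟩
    rw [sub_add_cancel_left]
    exact neg_mem hz
  refine ⟨Module.Finite.of_surjective _ surjective, ?_⟩
  refine (LinearMap.finrank_le_finrank_of_surjective surjective).trans_eq ?_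
  rw [Module.finrank_pi_fintype, sum_const, smul_eq_mul, card_univ, Nat.card_eq_fintype_card,
    equiv.finrank_eq]

end PowQuotient

section Counting

variable {σ : Type*} [Fintype σ] {u : ℕ}

theorem card_setOf_degree_lt_mul_pow_le (hu : 0 < u) (l : ℕ) :
    Nat.card {a : σ →₀ ℕ | a.degree < l} * u ^ Fintype.card σ ≤
      Nat.card (adicExponents σ u l) := by
  have sum_div (a : σ →₀ ℕ) (b : {b : σ →₀ ℕ | ∀ i, b i < u}) (i : σ) :
      (u • a + b.1) i / u = a i := by
    rw [Finsupp.add_apply, Finsupp.smul_apply, smul_eq_mul, Nat.mul_add_div hu,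
      Nat.div_eq_of_lt (b.2 i), add_zero]
  let f : {a : σ →₀ ℕ | a.degree < l} × {b : σ →₀ ℕ | ∀ i, b i < u} → adicExponents σ u l :=
    fun x => ⟨u • x.1.1 + x.2.1, by
      change ∑ i, _ < l
      simp only [sum_div]
      exact x.1.1.degree_eq_sum ▸ x.1.2⟩
  have hf : Function.Injective f := by
    intro ⟨a, b⟩ ⟨a', b'⟩ hab
    have hab' : u • a.1 + b.1 = u • a'.1 + b'.1 := congrArg Subtype.val hab
    have haa' : a.1 = a'.1 := Finsupp.ext fun i => by rw [← sum_div a b i, hab', sum_div]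
    rw [haa', add_right_inj] at hab'
    exact Prod.ext (Subtype.ext haa') (Subtype.ext hab')
  have := (finite_adicExponents (σ := σ) hu l).to_subtype
  rw [← card_setOf_forall_lt, ← Nat.card_prod]
  exact Nat.card_le_card_of_injective f hf

theorem degree_le_of_mem_adicExponents (hu : 0 < u) {l : ℕ} {a : σ →₀ ℕ}
    (ha : a ∈ adicExponents σ u l) : a.degree ≤ u * l + Fintype.card σ * u := by
  calc a.degree = u * ∑ i, a i / u + ∑ i, a i % u := by
        rw [Finsupp.degree_eq_sum, mul_sum, ← sum_add_distrib]
        exact sum_congr rfl fun i _ => (Nat.div_add_mod _ _).symm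
    _ ≤ u * l + ∑ _i : σ, u := by
        gcongr with i
        · exact le_of_lt ha
        · exact (Nat.mod_lt _ hu).le
    _ = u * l + Fintype.card σ * u := by rw [sum_const, smul_eq_mul, card_univ]

variable {𝕜 : Type*} [Field 𝕜]

theorem exists_ne_zero_mem_pow {h : σ → MvPolynomial σ 𝕜} {Q : Ideal (MvPolynomial σ 𝕜)}
    (hIQ : Ideal.span (Set.range h) ≤ Q) (hQ : Q ≤ Ideal.span (Set.range h) ⊔ Q ^ 2)
    [FiniteDimensional 𝕜 (MvPolynomial σ 𝕜 ⧸ Q)] {l : ℕ} (hu : 0 < u) (hl : 0 < l)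
    (hlt : Module.finrank 𝕜 (MvPolynomial σ 𝕜 ⧸ Q) < u ^ Fintype.card σ) :
    ∃ G ∈ Q ^ l, G ≠ 0 ∧ G.totalDegree ≤ u * l + Fintype.card σ * u := by
  obtain ⟨_, hrank⟩ := finrank_quotient_pow_le (𝕜 := 𝕜) hIQ hQ l
  have := (finite_adicExponents (σ := σ) hu l).to_subtype
  have basis := basisRestrictSupport 𝕜 (adicExponents σ u l)
  have := Module.Finite.of_basis basis
  have := (finite_setOf_degree_lt σ l).to_subtype
  have : Nonempty {a : σ →₀ ℕ | a.degree < l} := ⟨⟨0, by simpa using hl⟩⟩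
  have hker := LinearMap.ker_ne_bot_of_finrank_lt
    (f := (Ideal.Quotient.mkₐ 𝕜 (Q ^ l)).toLinearMap.domRestrict
      (restrictSupport 𝕜 (adicExponents σ u l))) <| by
    rw [Module.finrank_eq_nat_card_basis basis]
    exact hrank.trans_lt ((Nat.mul_lt_mul_of_pos_left hlt Nat.card_pos).trans_le
      (card_setOf_degree_lt_mul_pow_le hu l))
  obtain ⟨⟨G, hG⟩, hGker, hG0⟩ := (Submodule.ne_bot_iff _).1 hker
  refine ⟨G, Ideal.Quotient.eq_zero_iff_mem.1 hGker, fun h0 => hG0 (Subtype.ext h0), ?_⟩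
  exact Finset.sup_le fun a ha => degree_le_of_mem_adicExponents hu (hG ha)

end Counting

/-- `h` defines a complete intersection of degree `m` in each variable through the points `s i`,
and multiplying by `G ^ k` turns vanishing to order `l * k` at these points into membership in
the power `(h) ^ (l * k)`. -/
structure IsMultiplier {σ ι R : Type*} [CommRing R] (s : ι → σ → R) (m : ℕ)
    (h : σ → MvPolynomial σ R) (l : ℕ) (G : MvPolynomial σ R) : Prop where
  hasLeadingPowers : HasLeadingPowers m h
  eval_eq_zero (i : ι) (j : σ) : eval (s i) (h j) = 0
  pow_mul_mem (k : ℕ) (P : MvPolynomial σ R) :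
    (∀ i ζ, ∀ j < l * k, (lineHom (s i) ζ P).coeff j = 0) →
      G ^ k * P ∈ Ideal.span (Set.range h) ^ (l * k)

section Points

variable {σ ι R : Type*} [Fintype ι] [CommRing R] {s : ι → σ → R} {e : ι → MvPolynomial σ R}

namespace IsLagrangeBasis

theorem iInf_ker_pow (he : IsLagrangeBasis s e) (k : ℕ) :
    ⨅ i, RingHom.ker (eval (s i)) ^ k = (∏ i, RingHom.ker (eval (s i))) ^ k := by
  have isCoprime {i j : ι} (hij : i ≠ j) :
      IsCoprime (RingHom.ker (eval (s i))) (RingHom.ker (eval (s j))) := by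
    refine Ideal.isCoprime_iff_exists.2 ⟨1 - e i, ?_, e i, he.2 hij.symm, sub_add_cancel _ _⟩
    rw [RingHom.mem_ker, map_sub, map_one, he.1, sub_self]
  rw [← prod_pow, Ideal.prod_eq_iInf_of_pairwise_isCoprime]
  · simp only [mem_univ, iInf_pos]
  · exact fun i _ j _ hij => (isCoprime hij).pow

theorem mem_prod_ker_iff (he : IsLagrangeBasis s e) {P : MvPolynomial σ R} :
    P ∈ ∏ i, RingHom.ker (eval (s i)) ↔ ∀ i, eval (s i) P = 0 := by
  rw [← pow_one (∏ i, _), ← he.iInf_ker_pow, Ideal.mem_iInf]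
  simp only [pow_one, RingHom.mem_ker]

theorem mem_prod_ker_pow [IsDomain R] [Infinite R] (he : IsLagrangeBasis s e) {k : ℕ}
    {P : MvPolynomial σ R} (hP : ∀ i ζ, ∀ j < k, (lineHom (s i) ζ P).coeff j = 0) :
    P ∈ (∏ i, RingHom.ker (eval (s i))) ^ k := by
  rw [← he.iInf_ker_pow, Ideal.mem_iInf]
  exact fun i => mem_ker_pow_of_coeff_lineHom (hP i)

theorem prod_ker_le_sup_sq [Finite σ] [DecidableEq σ] [IsDomain R] [Infinite R]
    (he : IsLagrangeBasis s e) {h : σ → MvPolynomial σ R} (h0 : ∀ i j, eval (s i) (h j) = 0)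
    (h1 : ∀ i j k, eval (s i) (pderiv k (h j)) = if j = k then 1 else 0) :
    ∏ i, RingHom.ker (eval (s i)) ≤
      Ideal.span (Set.range h) ⊔ (∏ i, RingHom.ker (eval (s i))) ^ 2 := by
  have := Fintype.ofFinite σ
  intro x hx
  set y := ∑ i, (∑ j, C (eval (s i) (pderiv j x)) * h j) * e i with hy
  have eval_y (i : ι) : eval (s i) y = 0 := by
    rw [hy, he.eval_sum_mul, map_sum]
    simp only [map_mul, h0, mul_zero, sum_const_zero]
  have eval_pderiv_y (i : ι) (k : σ) : eval (s i) (pderiv k y) = eval (s i) (pderiv k x) := by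
    simp only [hy, map_sum, Derivation.leibniz, smul_eq_mul, map_add, map_mul, pderiv_C,
      eval_C, h0, h1, mul_zero, add_zero, sum_const_zero]
    rw [Finset.sum_eq_single i (fun l _ hl => by simp only [he.2 hl.symm, zero_mul, add_zero])
      (by simp), he.1]
    simp
  have hyI : y ∈ Ideal.span (Set.range h) := Ideal.sum_mem _ fun i _ =>
    Ideal.mul_mem_right _ _ <| Ideal.sum_mem _ fun j _ =>
      Ideal.mul_mem_left _ _ (Ideal.subset_span ⟨j, rfl⟩)
  rw [← add_sub_cancel y x]
  refine Submodule.add_mem_sup hyI ?_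
  rw [← he.iInf_ker_pow, Ideal.mem_iInf]
  refine fun i => mem_ker_sq_of_pderiv ?_ fun k => ?_
  · rw [map_sub, he.mem_prod_ker_iff.1 hx, eval_y, sub_zero]
  · rw [map_sub, map_sub, eval_pderiv_y, sub_self]

theorem exists_hasLeadingPowers {ι : Type*} [Finite ι] [Finite σ] [DecidableEq σ]
    {s : ι → σ → R} {e : ι → MvPolynomial σ R} (he : IsLagrangeBasis s e)
    {D m : ℕ} (hD : ∀ i, (e i).totalDegree ≤ D) (hm : 2 * D + 2 ≤ m) :
    ∃ h : σ → MvPolynomial σ R, HasLeadingPowers m h ∧ (∀ i j, eval (s i) (h j) = 0) ∧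
      ∀ i j k, eval (s i) (pderiv k (h j)) = if j = k then 1 else 0 := by
  choose q hqdeg hq hqderiv using fun j : σ => he.exists_hermite hD (fun i => s i j ^ m)
    fun i k => eval (s i) (pderiv k (X j ^ m)) - if j = k then 1 else 0
  refine ⟨fun j => X j ^ m - q j, fun j => ?_, fun i j => ?_, fun i j k => ?_⟩
  · rw [sub_sub_cancel_left]
    exact neg_mem (mem_degreeLT_of_totalDegree_lt ((hqdeg j).trans_lt (by lia)))
  · rw [map_sub, hq, map_pow, eval_X, sub_self]
  · rw [map_sub, map_sub, hqderiv, sub_sub_cancel]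

variable {𝕜 : Type*} [Field 𝕜] {s : ι → σ → 𝕜} {e : ι → MvPolynomial σ 𝕜}

theorem card_le_finrank_quotient (he : IsLagrangeBasis s e)
    [FiniteDimensional 𝕜 (MvPolynomial σ 𝕜 ⧸ ∏ i, RingHom.ker (eval (s i)))] :
    Fintype.card ι ≤
      Module.finrank 𝕜 (MvPolynomial σ 𝕜 ⧸ ∏ i, RingHom.ker (eval (s i))) := by
  let evalPoints := Ideal.Quotient.liftₐ (∏ i, RingHom.ker (eval (s i)))
    (AlgHom.pi fun i => aeval (s i)) fun P hP => funext fun i => by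
      rw [AlgHom.pi_apply, aeval_eq_eval, he.mem_prod_ker_iff.1 hP i, Pi.zero_apply]
  rw [← Module.finrank_fintype_fun_eq_card 𝕜]
  refine LinearMap.finrank_le_finrank_of_surjective (f := evalPoints.toLinearMap) fun w => ?_
  refine ⟨Ideal.Quotient.mk _ (∑ i, C (w i) * e i), funext fun i => ?_⟩
  change eval (s i) (∑ i, C (w i) * e i) = w i
  rw [he.eval_sum_mul, eval_C]

theorem exists_multiplier [Fintype σ] [Infinite 𝕜] (he : IsLagrangeBasis s e) {D m u : ℕ}
    (hD : ∀ i, (e i).totalDegree ≤ D) (hm : 2 * D + 2 ≤ m) (hu : 0 < u)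
    (hcount : m ^ Fintype.card σ < u ^ Fintype.card σ + Fintype.card ι) :
    ∃ (h : σ → MvPolynomial σ 𝕜) (G : MvPolynomial σ 𝕜) (l : ℕ), IsMultiplier s m h l G ∧
      G ≠ 0 ∧ 0 < l ∧ G.totalDegree ≤ (u + 1) * l := by
  classical
  obtain ⟨h, hh, h0, h1⟩ := he.exists_hasLeadingPowers hD hm
  have hm0 : 0 < m := by lia
  set J := ∏ i, RingHom.ker (eval (s i))
  have hIJ : Ideal.span (Set.range h) ≤ J := by
    rw [Ideal.span_le]
    rintro _ ⟨j, rfl⟩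
    exact he.mem_prod_ker_iff.2 fun i => h0 i j
  obtain ⟨Q, hIQ, hQ, hQJ, hcoprime⟩ :=
    exists_residual_ideal (IsNoetherian.noetherian J) (he.prod_ker_le_sup_sq h0 h1)
  have := hh.finiteDimensional_quotient hm0
  have : FiniteDimensional 𝕜 (MvPolynomial σ 𝕜 ⧸ Q) := Module.Finite.of_surjective
    (Ideal.Quotient.factorₐ 𝕜 hIQ).toLinearMap (Ideal.Quotient.factor_surjective hIQ)
  have : FiniteDimensional 𝕜 (MvPolynomial σ 𝕜 ⧸ J) := Module.Finite.of_surjective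
    (Ideal.Quotient.factorₐ 𝕜 hIJ).toLinearMap (Ideal.Quotient.factor_surjective hIJ)
  have hrank : Module.finrank 𝕜 (MvPolynomial σ 𝕜 ⧸ Q) < u ^ Fintype.card σ := by
    have h1 := finrank_quotient_add_finrank_quotient_le (𝕜 := 𝕜) hIQ hIJ hcoprime
    have h2 := hh.finrank_quotient_le hm0
    have h3 := he.card_le_finrank_quotient
    linarith
  obtain ⟨G, hGQ, hG0, hGdeg⟩ := exists_ne_zero_mem_pow hIQ hQ (l := Fintype.card σ * u + 1) hu
    (Nat.succ_pos _) hrank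
  refine ⟨h, G, Fintype.card σ * u + 1, ⟨hh, h0, fun k P hP => ?_⟩, hG0, Nat.succ_pos _,
    hGdeg.trans (by lia)⟩
  have hGJ : Ideal.span {G} * J ^ (Fintype.card σ * u + 1) ≤
      Ideal.span (Set.range h) ^ (Fintype.card σ * u + 1) := calc
    _ ≤ Q ^ (Fintype.card σ * u + 1) * J ^ (Fintype.card σ * u + 1) :=
        Ideal.mul_mono_left ((Ideal.span_singleton_le_iff_mem _).2 hGQ)
    _ = (Q * J) ^ (Fintype.card σ * u + 1) := (mul_pow _ _ _).symm
    _ ≤ _ := Ideal.pow_right_mono hQJ _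
  rw [pow_mul]
  refine Ideal.pow_right_mono hGJ k ?_
  rw [mul_pow, ← pow_mul]
  exact Ideal.mul_mem_mul (Ideal.pow_mem_pow (Ideal.mem_span_singleton_self G) k)
    (he.mem_prod_ker_pow hP)

end IsLagrangeBasis

end Points

/-! ### Interpolation points in a Zariski dense set -/

section Points

variable {𝕜 : Type*} [Field 𝕜]

theorem exists_dual_families {V X : Type*} [AddCommGroup V] [Module 𝕜 V] [FiniteDimensional 𝕜 V]
    (ev : X → Module.Dual 𝕜 V) (hev : ∀ v, (∀ x, ev x v = 0) → v = 0) :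
    ∃ (x : Fin (Module.finrank 𝕜 V) → X) (e : Fin (Module.finrank 𝕜 V) → V),
      ∀ i j, ev (x i) (e j) = if i = j then 1 else 0 := by
  have hspan : Submodule.span 𝕜 (Set.range ev) = ⊤ := by
    rw [← Subspace.dualCoannihilator_dualAnnihilator_eq (W := Submodule.span 𝕜 (Set.range ev))]
    convert Submodule.dualAnnihilator_bot
    refine eq_bot_iff.2 fun v hv => hev v fun x => ?_
    exact (Submodule.mem_dualCoannihilator v).1 hv _ (Submodule.subset_span ⟨x, rfl⟩)
  obtain ⟨b, hb, hbspan, hbindep⟩ := exists_linearIndependent 𝕜 (Set.range ev)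
  let B₀ : Module.Basis b 𝕜 (Module.Dual 𝕜 V) :=
    .mk hbindep (by rw [Subtype.range_coe, hbspan, hspan])
  have := Module.Finite.finite_basis B₀
  have := Fintype.ofFinite b
  have hcard : Fintype.card b = Module.finrank 𝕜 V := by
    rw [← Module.finrank_eq_card_basis B₀, Subspace.dual_finrank_eq]
  let B := B₀.reindex (Fintype.equivFinOfCardEq hcard)
  have hrange (i) : ∃ x, ev x = B i := hb (by simp [B, B₀])
  choose x hx using hrange
  refine ⟨x, fun i => (Module.evalEquiv 𝕜 V).symm (B.dualBasis i), fun i j => ?_⟩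
  rw [hx, Module.apply_evalEquiv_symm_apply, Module.Basis.dualBasis_apply_self]

variable {σ : Type*} {S : Set (σ → 𝕜)}

theorem exists_isLagrangeBasis [Fintype σ]
    (hS : ∀ Q : MvPolynomial σ 𝕜, (∀ w ∈ S, eval w Q = 0) → Q = 0)
    (v : ℕ) : ∃ (s : Fin ((v + 1) ^ Fintype.card σ) → σ → 𝕜)
      (e : Fin ((v + 1) ^ Fintype.card σ) → MvPolynomial σ 𝕜), (∀ i, s i ∈ S) ∧
      IsLagrangeBasis s e ∧ ∀ i, (e i).totalDegree ≤ Fintype.card σ * v := by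
  let box : Set (σ →₀ ℕ) := {a | ∀ i, a i < v + 1}
  have : Finite box := finite_setOf_forall_lt σ (v + 1)
  let monomials := basisRestrictSupport 𝕜 box
  have : FiniteDimensional 𝕜 (restrictSupport 𝕜 box) := Module.Finite.of_basis monomials
  obtain ⟨s, e, hse⟩ := exists_dual_families
    (fun w : S => (aeval (w : σ → 𝕜)).toLinearMap ∘ₗ (restrictSupport 𝕜 box).subtype)
    fun P hP => Subtype.ext (hS P fun w hw => hP ⟨w, hw⟩)
  have hrank : Module.finrank 𝕜 (restrictSupport 𝕜 box) = (v + 1) ^ Fintype.card σ := by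
    rw [Module.finrank_eq_nat_card_basis monomials, card_setOf_forall_lt]
  rw [← hrank]
  refine ⟨fun i => s i, fun i => e i, fun i => (s i).2, ⟨fun i => ?_, fun i j hij => ?_⟩,
    fun i => Finset.sup_le fun a ha => ?_⟩
  · exact (hse i i).trans (if_pos rfl)
  · exact (hse i j).trans (if_neg hij)
  · change a.degree ≤ _
    rw [Finsupp.degree_eq_sum]
    refine (sum_le_card_nsmul _ _ v fun j _ => Nat.lt_succ_iff.1 ?_).trans_eq ?_
    · exact (e i).2 ha j
    · rw [card_univ, smul_eq_mul]

theorem add_pow_le_pow_add_mul (u c n : ℕ) :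
    (u + c) ^ n ≤ u ^ n + n * c * (u + c) ^ (n - 1) := by
  have := (le_abs_self _).trans (abs_pow_sub_pow_le ((u + c : ℕ) : ℤ) u n)
  rw [Nat.abs_cast, Nat.abs_cast, max_eq_left (by simp), Nat.cast_add, add_sub_cancel_left,
    Nat.abs_cast, sub_le_iff_le_add', mul_comm (c : ℤ)] at this
  exact_mod_cast this

/-- The number of points `(v + 1) ^ n` grows like `v ^ n`, the loss `m ^ n - u ^ n` only like
`v ^ (n - 1)`; this leaves room for an arbitrary `c`. -/
theorem exists_degree_pow_lt {n : ℕ} (hn : 0 < n) (c : ℕ) :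
    ∃ v u, 0 < u ∧ 2 * (n * v) + 2 = u + 1 + c ∧
      (2 * (n * v) + 2) ^ n < u ^ n + (v + 1) ^ n := by
  set v := n * (c + 1) * (2 * n) ^ (n - 1)
  have hcv : c + 1 ≤ n * v := calc
    c + 1 ≤ n * (c + 1) := Nat.le_mul_of_pos_left _ hn
    _ ≤ v := Nat.le_mul_of_pos_right _ (by positivity)
    _ ≤ n * v := Nat.le_mul_of_pos_left _ hn
  obtain ⟨u, hu⟩ : ∃ u, 2 * (n * v) + 2 = u + (c + 1) := ⟨2 * (n * v) + 1 - c, by lia⟩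
  refine ⟨v, u, by lia, by lia, ?_⟩
  have hm : 2 * (n * v) + 2 ≤ 2 * n * (v + 1) := by linarith
  have hloss := add_pow_le_pow_add_mul u (c + 1) n
  rw [← hu] at hloss
  refine hloss.trans_lt (Nat.add_lt_add_left ?_ _)
  calc n * (c + 1) * (2 * (n * v) + 2) ^ (n - 1)
      ≤ n * (c + 1) * (2 * n * (v + 1)) ^ (n - 1) := by gcongr
    _ = v * (v + 1) ^ (n - 1) := by rw [mul_pow, ← mul_assoc]
    _ < (v + 1) * (v + 1) ^ (n - 1) :=
      Nat.mul_lt_mul_of_pos_right (Nat.lt_succ_self _) (by positivity)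
    _ = (v + 1) ^ n := by rw [← pow_succ', Nat.sub_add_cancel hn]

theorem exists_isMultiplier [Infinite 𝕜] [Finite σ] [Nonempty σ]
    (hS : ∀ Q : MvPolynomial σ 𝕜, (∀ w ∈ S, eval w Q = 0) → Q = 0) (c : ℕ) :
    ∃ (N : ℕ) (s : Fin N → σ → 𝕜) (u l : ℕ) (h : σ → MvPolynomial σ 𝕜)
      (G : MvPolynomial σ 𝕜), 0 < N ∧ (∀ i, s i ∈ S) ∧ IsMultiplier s (u + 1 + c) h l G ∧
      G ≠ 0 ∧ 0 < l ∧ G.totalDegree ≤ (u + 1) * l := by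
  have := Fintype.ofFinite σ
  obtain ⟨v, u, hu, hm, hcount⟩ := exists_degree_pow_lt (Fintype.card_pos (α := σ)) c
  obtain ⟨s, e, hsS, he, hdeg⟩ := exists_isLagrangeBasis hS v
  obtain ⟨h, G, l, hG⟩ := he.exists_multiplier hdeg hm.le hu
    (by rwa [Fintype.card_fin, ← hm])
  exact ⟨_, s, u, l, h, G, by positivity, hsS, hG⟩

end Points

/-! ### Polynomial approximation of entire functions -/

section Interpolation

/-- The fundamental Lagrange polynomial, at `t`, of the node `a` among the nodes `b` with
`b ^ N = a ^ N`. It is defined on `ℂ`-algebras so that `t` may be a number or a variable. -/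
noncomputable def rootsKernel {A : Type*} [Ring A] [Algebra ℂ A] (N : ℕ) (a : ℂ) (t : A) : A :=
  (N : ℂ)⁻¹ • ∑ k ∈ range N, (a⁻¹ • t) ^ k

theorem map_rootsKernel {A B : Type*} [Ring A] [Algebra ℂ A] [Ring B] [Algebra ℂ B]
    (φ : A →ₐ[ℂ] B) (N : ℕ) (a : ℂ) (t : A) :
    φ (rootsKernel N a t) = rootsKernel N a (φ t) := by
  simp only [rootsKernel, map_smul, map_sum, map_pow]

theorem norm_rootsKernel_le {N : ℕ} {a t : ℂ} (ht : ‖a⁻¹ • t‖ ≤ 1 / 2) :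
    ‖rootsKernel N a t‖ ≤ 2 / N := by
  rw [rootsKernel, norm_smul, norm_inv, Complex.norm_natCast, div_eq_inv_mul]
  gcongr
  calc ‖∑ k ∈ range N, (a⁻¹ • t) ^ k‖ ≤ ∑ k ∈ range N, (1 / 2 : ℝ) ^ k :=
        norm_sum_le_of_le _ fun k _ => by rw [norm_pow]; gcongr
    _ ≤ 2 := sum_geometric_two_le N

theorem coeffNorm_rootsKernel_X_le {σ : Type*} {N : ℕ} {a : ℂ} {ρ : ℝ} (hρ : 0 < ρ)
    (ha : ‖a‖ = 2 * ρ) (i : σ) :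
    coeffNorm ρ (rootsKernel N a (X i : MvPolynomial σ ℂ)) ≤ 2 / N := by
  rw [rootsKernel, coeffNorm_smul, norm_inv, Complex.norm_natCast, div_eq_inv_mul]
  gcongr
  refine (coeffNorm_sum_le hρ.le _ _).trans (le_trans ?_ (sum_geometric_two_le N))
  refine sum_le_sum fun k _ => (coeffNorm_pow_le hρ.le _ _).trans_eq ?_
  rw [coeffNorm_smul, coeffNorm_X, norm_inv, ha, mul_inv, inv_mul_cancel_right₀ hρ.ne', one_div]

theorem sum_pow_div_pow_eq_ite {N : ℕ} (hN : 0 < N) {ζ : ℂ} (hζ : IsPrimitiveRoot ζ N) {j k : ℕ}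
    (hj : j < N) (hk : k < N) :
    ∑ i : Fin N, (ζ ^ j / ζ ^ k) ^ (i : ℕ) = if k = j then (N : ℂ) else 0 := by
  have hζk : ζ ^ k ≠ 0 := pow_ne_zero _ (hζ.ne_zero hN.ne')
  split_ifs with h
  · rw [h, div_self (h ▸ hζk)]
    simp
  · have hne : ζ ^ j / ζ ^ k ≠ 1 := fun h1 =>
      h (hζ.pow_inj hj hk ((div_eq_one_iff_eq hζk).1 h1)).symm
    rw [Fin.sum_univ_eq_sum_range fun i => (ζ ^ j / ζ ^ k) ^ i, geom_sum_eq hne, div_pow,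
      pow_right_comm ζ j, pow_right_comm ζ k, hζ.pow_eq_one, one_pow, one_pow, div_one, sub_self,
      zero_div]

theorem sum_rootsKernel_mul_pow {N : ℕ} (hN : 0 < N) {ζ : ℂ} (hζ : IsPrimitiveRoot ζ N) {b : ℂ}
    (hb : b ≠ 0) (t : ℂ) {j : ℕ} (hj : j < N) :
    ∑ i : Fin N, rootsKernel N (b * ζ ^ (i : ℕ)) t * (b * ζ ^ (i : ℕ)) ^ j = t ^ j := by
  have hζ0 : ζ ≠ 0 := hζ.ne_zero hN.ne'
  have hN0 : (N : ℂ) ≠ 0 := Nat.cast_ne_zero.2 hN.ne'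
  calc _ = ∑ k ∈ range N, ((N : ℂ)⁻¹ * (t / b) ^ k * b ^ j) *
        ∑ i : Fin N, (ζ ^ j / ζ ^ k) ^ (i : ℕ) := by
        simp only [rootsKernel, smul_eq_mul, mul_sum, sum_mul]
        rw [sum_comm]
        refine sum_congr rfl fun k _ => sum_congr rfl fun i _ => ?_
        rw [mul_pow, mul_pow, inv_pow, mul_pow, div_pow, div_pow, pow_right_comm ζ i k,
          pow_right_comm ζ i j]
        field_simp
    _ = ∑ k ∈ range N, if k = j then t ^ j else 0 := by
        refine sum_congr rfl fun k hk => ?_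
        rw [sum_pow_div_pow_eq_ite hN hζ hj (mem_range.1 hk)]
        split_ifs with h
        · rw [h, div_pow]
          field_simp
        · rw [mul_zero]
    _ = t ^ j := by rw [sum_ite_eq', if_pos (mem_range.2 hj)]

theorem norm_taylor_sub_le {r M : ℝ} (hr : 0 < r) {g : ℂ → ℂ} (hg : Differentiable ℂ g)
    (hM : ∀ t, ‖t‖ ≤ 2 * r → ‖g t‖ ≤ M) (N : ℕ) {t : ℂ} (ht : ‖t‖ ≤ r) :
    ‖(∑ j ∈ range N, (j.factorial : ℂ)⁻¹ * iteratedDeriv j g 0 * t ^ j) - g t‖ ≤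
      2 * M * (1 / 2) ^ N := by
  have hasSum : HasSum (fun j : ℕ => (j.factorial : ℂ)⁻¹ * iteratedDeriv j g 0 * t ^ j) (g t) := by
    simpa [mul_assoc, mul_comm, mul_left_comm] using Complex.hasSum_taylorSeries_of_entire hg 0 t
  have norm_term_le (j : ℕ) :
      ‖(j.factorial : ℂ)⁻¹ * iteratedDeriv j g 0 * t ^ j‖ ≤ M * (1 / 2) ^ j := by
    have hcauchy := Complex.norm_iteratedDeriv_le_of_forall_mem_sphere_norm_le (c := 0) (f := g) j
      (show 0 < 2 * r by positivity) hg.diffContOnCl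
      fun z hz => hM z (mem_sphere_zero_iff_norm.1 hz).le
    have hcauchy0 := (norm_nonneg _).trans hcauchy
    rw [norm_mul, norm_mul, norm_inv, Complex.norm_natCast, norm_pow]
    calc (j.factorial : ℝ)⁻¹ * ‖iteratedDeriv j g 0‖ * ‖t‖ ^ j
        ≤ (j.factorial : ℝ)⁻¹ * (j.factorial * M / (2 * r) ^ j) * r ^ j := by gcongr
      _ = M * (1 / 2) ^ j := by
        rw [mul_pow, one_div, inv_pow]
        field_simp
  refine (norm_sub_le_of_geometric_bound_of_hasSum (by norm_num) norm_term_le hasSum N).trans_eq ?_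
  norm_num
  ring

theorem norm_sub_sum_rootsKernel_mul_le {N : ℕ} (hN : 0 < N) {ζ : ℂ} (hζ : IsPrimitiveRoot ζ N)
    {ρ M : ℝ} (hρ : 0 < ρ) {g : ℂ → ℂ} (hg : Differentiable ℂ g)
    (hM : ∀ t, ‖t‖ ≤ 4 * ρ → ‖g t‖ ≤ M) {a : Fin N → ℂ}
    (ha : ∀ i, a i = ((2 * ρ : ℝ) : ℂ) * ζ ^ (i : ℕ)) {t : ℂ} (ht : ‖t‖ ≤ ρ) :
    ‖g t - ∑ i, rootsKernel N (a i) t * g (a i)‖ ≤ 6 * M * (1 / 2) ^ N := by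
  set T : ℂ → ℂ := fun t => ∑ j ∈ range N, (j.factorial : ℂ)⁻¹ * iteratedDeriv j g 0 * t ^ j
  set η := 2 * M * (1 / 2) ^ N with hη
  have norm_T_sub_le (t : ℂ) (ht : ‖t‖ ≤ 2 * ρ) : ‖T t - g t‖ ≤ η :=
    norm_taylor_sub_le (by positivity) hg (fun t ht => hM t (by linarith)) N ht
  have norm_a (i : Fin N) : ‖a i‖ = 2 * ρ := by
    rw [ha, norm_mul, norm_pow, hζ.norm'_eq_one hN.ne', one_pow, mul_one, Complex.norm_real,
      Real.norm_of_nonneg (by positivity)]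
  have norm_kernel_le (i : Fin N) : ‖rootsKernel N (a i) t‖ ≤ 2 / N := norm_rootsKernel_le <| by
    rw [norm_smul, norm_inv, norm_a, inv_mul_le_iff₀ (by positivity)]
    linarith
  have sum_kernel_mul_T : ∑ i, rootsKernel N (a i) t * T (a i) = T t := by
    have hb : ((2 * ρ : ℝ) : ℂ) ≠ 0 := Complex.ofReal_ne_zero.2 (by positivity)
    simp only [T, mul_sum, ha]
    rw [sum_comm]
    refine sum_congr rfl fun j hj => ?_
    rw [← sum_rootsKernel_mul_pow hN hζ hb t (mem_range.1 hj), mul_sum]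
    exact sum_congr rfl fun i _ => mul_left_comm _ _ _
  have norm_sum_le : ‖∑ i, rootsKernel N (a i) t * (T (a i) - g (a i))‖ ≤ 2 * η := calc
    _ ≤ ∑ _i : Fin N, 2 / (N : ℝ) * η := norm_sum_le_of_le _ fun i _ => by
        rw [norm_mul]
        exact mul_le_mul (norm_kernel_le i) (norm_T_sub_le _ (norm_a i).le) (norm_nonneg _)
          (by positivity)
    _ = 2 * η := by
        rw [sum_const, card_univ, Fintype.card_fin, nsmul_eq_mul]
        field_simp
  calc ‖g t - ∑ i, rootsKernel N (a i) t * g (a i)‖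
      = ‖∑ i, rootsKernel N (a i) t * (T (a i) - g (a i)) - (T t - g t)‖ := by
        simp only [mul_sub, sum_sub_distrib, sum_kernel_mul_T]
        congr 1
        ring
    _ ≤ 2 * η + η := (norm_sub_le _ _).trans
        (add_le_add norm_sum_le (norm_T_sub_le t (by linarith)))
    _ = 6 * M * (1 / 2) ^ N := by rw [hη]; ring

theorem exists_forall_norm_sub_sum_rootsKernel_mul_le {ρ M ε : ℝ} (hρ : 0 < ρ) (hε : 0 < ε) :
    ∃ (N : ℕ) (a : Fin N → ℂ), 0 < N ∧ (∀ i, ‖a i‖ = 2 * ρ) ∧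
      ∀ g : ℂ → ℂ, Differentiable ℂ g → (∀ t, ‖t‖ ≤ 4 * ρ → ‖g t‖ ≤ M) → ∀ t, ‖t‖ ≤ ρ →
        ‖g t - ∑ i, rootsKernel N (a i) t * g (a i)‖ ≤ ε := by
  have tendsto : Filter.Tendsto (fun N : ℕ => 6 * M * (1 / 2) ^ N) Filter.atTop (nhds 0) := by
    simpa using (tendsto_pow_atTop_nhds_zero_of_lt_one (by norm_num)
      (by norm_num : (1 / 2 : ℝ) < 1)).const_mul (6 * M)
  obtain ⟨N, hNε, hN⟩ :=
    ((tendsto.eventually_le_const hε).and (Filter.eventually_gt_atTop 0)).exists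
  have hζ := Complex.isPrimitiveRoot_exp N hN.ne'
  refine ⟨N, fun i => ((2 * ρ : ℝ) : ℂ) * Complex.exp (2 * Real.pi * Complex.I / N) ^ (i : ℕ), hN,
    fun i => ?_, fun g hg hM t ht => ?_⟩
  · rw [norm_mul, norm_pow, hζ.norm'_eq_one hN.ne', one_pow, mul_one, Complex.norm_real,
      Real.norm_of_nonneg (by positivity)]
  · exact (norm_sub_sum_rootsKernel_mul_le hN hζ hρ hg hM (fun _ => rfl) ht).trans hNε

end Interpolation

section Approximation

variable {n : ℕ}

theorem norm_cons_le {t : ℂ} {z : Fin n → ℂ} {b : ℝ} (ht : ‖t‖ ≤ b) (hz : ‖z‖ ≤ b) :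
    ‖(Fin.cons t z : Fin (n + 1) → ℂ)‖ ≤ b := by
  have hb : 0 ≤ b := (norm_nonneg _).trans ht
  rw [pi_norm_le_iff_of_nonneg hb] at hz ⊢
  exact Fin.cases ht hz

theorem differentiable_cons_right (t : ℂ) :
    Differentiable ℂ fun z : Fin n → ℂ => (Fin.cons t z : Fin (n + 1) → ℂ) :=
  differentiable_pi.2 <| Fin.cases (differentiable_const t) differentiable_apply

theorem differentiable_cons_left (z : Fin n → ℂ) :
    Differentiable ℂ fun t : ℂ => (Fin.cons t z : Fin (n + 1) → ℂ) :=
  differentiable_pi.2 <| Fin.cases differentiable_id fun i => differentiable_const (z i)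

theorem norm_sub_eval_sum_rootsKernel_mul_le {N : ℕ} (hN : 0 < N) {ρ ε ε' : ℝ} (hρ : 0 < ρ)
    {a : Fin N → ℂ} (ha : ∀ i, ‖a i‖ = 2 * ρ) {F : (Fin (n + 1) → ℂ) → ℂ}
    {P : Fin N → MvPolynomial (Fin n) ℂ} {z : Fin (n + 1) → ℂ} (hz : ‖z‖ ≤ ρ)
    (hF : ‖F z - ∑ i, rootsKernel N (a i) (z 0) * F (Fin.cons (a i) (Fin.tail z))‖ ≤ ε)
    (hP : ∀ i, ‖F (Fin.cons (a i) (Fin.tail z)) - eval (Fin.tail z) (P i)‖ ≤ ε') :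
    ‖F z - eval z (∑ i, rootsKernel N (a i) (X 0) * rename Fin.succ (P i))‖ ≤ ε + 2 * ε' := by
  have eval_kernel (i : Fin N) :
      eval z (rootsKernel N (a i) (X 0)) = rootsKernel N (a i) (z 0) := by
    rw [← aeval_eq_eval, map_rootsKernel, aeval_X]
  have hsplit : F z - eval z (∑ i, rootsKernel N (a i) (X 0) * rename Fin.succ (P i)) =
      (F z - ∑ i, rootsKernel N (a i) (z 0) * F (Fin.cons (a i) (Fin.tail z))) +
      ∑ i, rootsKernel N (a i) (z 0) *
        (F (Fin.cons (a i) (Fin.tail z)) - eval (Fin.tail z) (P i)) := by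
    simp only [map_sum, map_mul, eval_kernel, eval_rename, mul_sub, sum_sub_distrib]
    rw [sub_add_sub_cancel]
    rfl
  rw [hsplit]
  refine (norm_add_le _ _).trans (add_le_add hF ?_)
  calc _ ≤ ∑ _i : Fin N, 2 / (N : ℝ) * ε' := norm_sum_le_of_le _ fun i _ => by
        rw [norm_mul]
        refine mul_le_mul (norm_rootsKernel_le ?_) (hP i) (norm_nonneg _) (by positivity)
        rw [norm_smul, norm_inv, ha, inv_mul_le_iff₀ (by positivity)]
        linarith [norm_le_pi_norm z 0]
    _ = 2 * ε' := by
        rw [sum_const, card_univ, Fintype.card_fin, nsmul_eq_mul]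
        field_simp

theorem exists_coeffNorm_le_and_norm_sub_eval_le {ρ M ε : ℝ} (hρ : 0 < ρ)
    {F : (Fin n → ℂ) → ℂ} (hF : Differentiable ℂ F) (hFM : ∀ z, ‖z‖ ≤ 4 * ρ → ‖F z‖ ≤ M)
    (hε : 0 < ε) : ∃ P : MvPolynomial (Fin n) ℂ,
      coeffNorm ρ P ≤ 2 ^ n * M ∧ ∀ z, ‖z‖ ≤ ρ → ‖F z - eval z P‖ ≤ ε := by
  induction n generalizing ε with
  | zero =>
    refine ⟨C (F 0), ?_, fun z _ => ?_⟩
    · rw [coeffNorm_C, pow_zero, one_mul]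
      exact hFM 0 (by rw [norm_zero]; positivity)
    · rw [Subsingleton.elim z 0, eval_C, sub_self, norm_zero]
      exact hε.le
  | succ n ih =>
    obtain ⟨N, a, hN, ha, hinterp⟩ :=
      exists_forall_norm_sub_sum_rootsKernel_mul_le (M := M) hρ (half_pos hε)
    have exists_slice_approx (i : Fin N) : ∃ P : MvPolynomial (Fin n) ℂ,
        coeffNorm ρ P ≤ 2 ^ n * M ∧
        ∀ z, ‖z‖ ≤ ρ → ‖F (Fin.cons (a i) z) - eval z P‖ ≤ ε / 4 :=
      ih (hF.comp (differentiable_cons_right (a i)))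
        (fun z hz => hFM _ (norm_cons_le (by linarith [ha i]) hz)) (by positivity)
    choose P hP hPa using exists_slice_approx
    refine ⟨∑ i, rootsKernel N (a i) (X 0) * rename Fin.succ (P i), ?_, fun z hz => ?_⟩
    · have coeffNorm_term_le (i : Fin N) :
          coeffNorm ρ (rootsKernel N (a i) (X 0) * rename Fin.succ (P i)) ≤
            2 / (N : ℝ) * (2 ^ n * M) :=
        (coeffNorm_mul_le hρ.le _ _).trans <|
          mul_le_mul (coeffNorm_rootsKernel_X_le hρ (ha i) 0)
            ((coeffNorm_rename_le hρ.le _ _).trans (hP i)) (coeffNorm_nonneg hρ.le _)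
            (by positivity)
      calc _ ≤ ∑ _i : Fin N, 2 / (N : ℝ) * (2 ^ n * M) :=
            (coeffNorm_sum_le hρ.le _ _).trans (sum_le_sum fun i _ => coeffNorm_term_le i)
        _ = 2 ^ (n + 1) * M := by
            rw [sum_const, card_univ, Fintype.card_fin, nsmul_eq_mul]
            field_simp
            ring
    · have hz0 : ‖z 0‖ ≤ ρ := (norm_le_pi_norm z 0).trans hz
      have htail : ‖Fin.tail z‖ ≤ ρ := (pi_norm_le_iff_of_nonneg hρ.le).2 fun i =>
        (norm_le_pi_norm z i.succ).trans hz
      have hz_interp := hinterp (fun t => F (Fin.cons t (Fin.tail z)))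
        (hF.comp (differentiable_cons_left _))
        (fun t ht => hFM _ (norm_cons_le ht (by linarith))) (z 0) hz0
      rw [Fin.cons_self_tail] at hz_interp
      exact (norm_sub_eval_sum_rootsKernel_mul_le hN hρ ha hz hz_interp
        fun i => hPa i _ htail).trans_eq (by ring)

end Approximation

/-! ### A Schwarz lemma without `L²` estimates -/

section Vanishing

/-- The entire function `F` vanishes to order at least `k` at `s`, tested along all complex lines
through `s`. -/
def VanishesToOrder {E : Type*} [AddCommGroup E] [Module ℂ E] (k : ℕ) (F : E → ℂ) (s : E) : Prop :=
  ∀ ζ : E, ∀ j < k, iteratedDeriv j (fun t : ℂ => F (s + t • ζ)) 0 = 0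

theorem iteratedDeriv_polynomial_eval {𝕜 : Type*} [NontriviallyNormedField 𝕜] (j : ℕ)
    (p : Polynomial 𝕜) :
    iteratedDeriv j (fun t => p.eval t) = fun t => (Polynomial.derivative^[j] p).eval t := by
  induction j generalizing p with
  | zero => simp
  | succ j ih =>
    have hderiv : deriv (fun t => p.eval t) = fun t => p.derivative.eval t :=
      funext fun _ => p.deriv
    rw [iteratedDeriv_succ', hderiv, ih, Function.iterate_succ_apply]

theorem iteratedDeriv_polynomial_eval_zero {𝕜 : Type*} [NontriviallyNormedField 𝕜] (j : ℕ)
    (p : Polynomial 𝕜) : iteratedDeriv j (fun t => p.eval t) 0 = j.factorial * p.coeff j := by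
  rw [iteratedDeriv_polynomial_eval]
  beta_reduce
  rw [← Polynomial.coeff_zero_eq_eval_zero, Polynomial.coeff_iterate_derivative, zero_add,
    Nat.descFactorial_self, nsmul_eq_mul]

theorem differentiable_line {E : Type*} [NormedAddCommGroup E] [NormedSpace ℂ E] (s ζ : E) :
    Differentiable ℂ fun t : ℂ => s + t • ζ := by
  fun_prop

variable {n : ℕ}

theorem norm_coeff_lineHom_le {s : Fin n → ℂ} {ρ : ℝ} (hs : ‖s‖ + 1 ≤ ρ) (ζ : Fin n → ℂ)
    {F : (Fin n → ℂ) → ℂ} (hF : Differentiable ℂ F) {j : ℕ}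
    (hFj : iteratedDeriv j (fun t : ℂ => F (s + t • ζ)) 0 = 0) {P : MvPolynomial (Fin n) ℂ} {ε : ℝ}
    (hP : ∀ z, ‖z‖ ≤ ρ → ‖F z - eval z P‖ ≤ ε) :
    ‖(lineHom s ζ P).coeff j‖ ≤ (‖ζ‖ + 1) ^ j * ε := by
  set p := lineHom s ζ P with hp
  have hFline : Differentiable ℂ fun t : ℂ => F (s + t • ζ) := hF.comp (differentiable_line s ζ)
  have hbound : ∀ t ∈ Metric.sphere (0 : ℂ) (‖ζ‖ + 1)⁻¹, ‖F (s + t • ζ) - p.eval t‖ ≤ ε := by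
    intro t ht
    rw [hp, eval_lineHom]
    refine hP _ ((norm_add_le _ _).trans (le_trans ?_ hs))
    rw [norm_smul, mem_sphere_zero_iff_norm.1 ht]
    gcongr
    rw [inv_mul_le_iff₀ (by positivity)]
    linarith
  have hderiv : iteratedDeriv j (fun t : ℂ => F (s + t • ζ) - p.eval t) 0 =
      -(j.factorial * p.coeff j) := by
    rw [iteratedDeriv_fun_sub hFline.contDiff.contDiffAt p.differentiable.contDiff.contDiffAt,
      hFj, iteratedDeriv_polynomial_eval_zero, zero_sub]
  have cauchy := Complex.norm_iteratedDeriv_le_of_forall_mem_sphere_norm_le j (by positivity)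
    (hFline.sub p.differentiable).diffContOnCl hbound
  change ‖iteratedDeriv j (fun t : ℂ => F (s + t • ζ) - p.eval t) 0‖ ≤ _ at cauchy
  rw [hderiv, norm_neg, norm_mul, Complex.norm_natCast, mul_div_assoc, inv_pow,
    div_inv_eq_mul, mul_comm ε] at cauchy
  exact le_of_mul_le_mul_left cauchy (by positivity)

end Vanishing

section Multiplier

variable {σ ι 𝕜 : Type*} [Field 𝕜] {m l : ℕ} {s : ι → σ → 𝕜} {h : σ → MvPolynomial σ 𝕜}
  {G : MvPolynomial σ 𝕜}

theorem IsMultiplier.span_le_ker_eval (hG : IsMultiplier s m h l G) (i : ι) :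
    Ideal.span (Set.range h) ≤ RingHom.ker (eval (s i)) := by
  rw [Ideal.span_le]
  rintro _ ⟨j, rfl⟩
  exact hG.eval_eq_zero i j

variable [Fintype σ]

theorem IsMultiplier.coeff_lineHom_adicProj (hG : IsMultiplier s m h l G) {k j : ℕ} (hj : j < k)
    (i : ι) (ζ : σ → 𝕜) (P : MvPolynomial σ 𝕜) :
    (lineHom (s i) ζ (hG.hasLeadingPowers.adicProj k P)).coeff j =
      (lineHom (s i) ζ P).coeff j := by
  have := coeff_lineHom_eq_zero_of_mem_ker_pow (s i) ζ
    (Ideal.pow_right_mono (hG.span_le_ker_eval i) k (hG.hasLeadingPowers.sub_adicProj_mem k P)) hj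
  rw [map_sub, Polynomial.coeff_sub, sub_eq_zero] at this
  exact this.symm

theorem IsMultiplier.exists_eval_adicProj_pow_mul (hG : IsMultiplier s m h l G) (hm : 0 < m)
    (k : ℕ) (z : σ → 𝕜) : ∃ c : (ι × (σ → 𝕜) × Fin (l * k)) →₀ 𝕜, ∀ P,
      eval z (hG.hasLeadingPowers.adicProj (l * k) (G ^ k * P)) =
        c.sum fun a b => b * (lineHom (s a.1) a.2.1 P).coeff a.2.2 := by
  set π := hG.hasLeadingPowers.adicProj (l * k)
  have := hG.hasLeadingPowers.finiteDimensional_range_adicProj hm (l * k)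
  let θ : MvPolynomial σ 𝕜 →ₗ[𝕜] 𝕜 := (aeval z).toLinearMap ∘ₗ π ∘ₗ LinearMap.mulLeft 𝕜 (G ^ k)
  let J (a : ι × (σ → 𝕜) × Fin (l * k)) : MvPolynomial σ 𝕜 →ₗ[𝕜] 𝕜 :=
    Polynomial.lcoeff 𝕜 (a.2.2 : ℕ) ∘ₗ (lineHom (s a.1) a.2.1).toLinearMap
  -- On the finite-dimensional range of `π`, a functional killing the common kernel of the jets
  -- is a finite linear combination of jets.
  have hspan : θ ∘ₗ (LinearMap.range π).subtype ∈
      Submodule.span 𝕜 (Set.range fun a => J a ∘ₗ (LinearMap.range π).subtype) := by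
    refine FiniteDimensional.mem_span_of_iInf_ker_le_ker fun v hv => ?_
    rw [Submodule.mem_iInf] at hv
    have hjets : G ^ k * (v : MvPolynomial σ 𝕜) ∈ Ideal.span (Set.range h) ^ (l * k) :=
      hG.pow_mul_mem k v fun i ζ j hj => hv (i, ζ, ⟨j, hj⟩)
    change aeval z (π (G ^ k * (v : MvPolynomial σ 𝕜))) = 0
    rw [hG.hasLeadingPowers.adicProj_eq_zero hm hjets, map_zero]
  obtain ⟨c, hc⟩ := Finsupp.mem_span_range_iff_exists_finsupp.1 hspan
  refine ⟨c, fun P => ?_⟩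
  have hreduce : π (G ^ k * P) = π (G ^ k * π P) := by
    rw [← sub_eq_zero, ← map_sub, ← mul_sub]
    exact hG.hasLeadingPowers.adicProj_eq_zero hm
      (Ideal.mul_mem_left _ _ (hG.hasLeadingPowers.sub_adicProj_mem _ P))
  have hcP := LinearMap.congr_fun hc (π.rangeRestrict P)
  rw [Finsupp.sum, LinearMap.sum_apply] at hcP
  calc eval z (π (G ^ k * P)) = θ (π P) := by rw [hreduce]; rfl
    _ = ∑ a ∈ c.support, c a * J a (π P) := hcP.symm
    _ = _ := Finset.sum_congr rfl fun a _ =>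
      congrArg (c a * ·) (hG.coeff_lineHom_adicProj a.2.2.2 a.1 a.2.1 P)

end Multiplier

section Division

variable {n : ℕ}

theorem IsMultiplier.exists_norm_eval_adicProj_le {ι : Type*} {s : ι → Fin n → ℂ} {m l : ℕ}
    {h : Fin n → MvPolynomial (Fin n) ℂ} {G : MvPolynomial (Fin n) ℂ}
    (hG : IsMultiplier s m h l G) (hm : 0 < m) {ρ : ℝ} (hs : ∀ i, ‖s i‖ + 1 ≤ ρ) {k : ℕ}
    {F : (Fin n → ℂ) → ℂ} (hF : Differentiable ℂ F) (hFs : ∀ i, VanishesToOrder (l * k) F (s i))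
    (z : Fin n → ℂ) : ∃ B ≥ 0, ∀ P ε, (∀ z, ‖z‖ ≤ ρ → ‖F z - eval z P‖ ≤ ε) →
      ‖eval z (hG.hasLeadingPowers.adicProj (l * k) (G ^ k * P))‖ ≤ B * ε := by
  obtain ⟨c, hc⟩ := hG.exists_eval_adicProj_pow_mul hm k z
  refine ⟨c.sum fun a b => ‖b‖ * (‖a.2.1‖ + 1) ^ (a.2.2 : ℕ),
    Finset.sum_nonneg fun a _ => by positivity, fun P ε hP => ?_⟩
  rw [hc, Finsupp.sum, Finsupp.sum, Finset.sum_mul]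
  refine norm_sum_le_of_le _ fun a _ => ?_
  rw [norm_mul, mul_assoc]
  gcongr
  exact norm_coeff_lineHom_le (hs a.1) a.2.1 hF (hFs a.1 a.2.1 _ a.2.2.2) hP

theorem IsMultiplier.exists_norm_eval_pow_mul_le {ι : Type*} [Finite ι] {s : ι → Fin n → ℂ}
    {m l : ℕ} {h : Fin n → MvPolynomial (Fin n) ℂ} {G : MvPolynomial (Fin n) ℂ}
    (hG : IsMultiplier s m h l G) (hm : 0 < m) {r : ℝ} (hr : 1 ≤ r) :
    ∃ C ≥ r, ∀ (k : ℕ) (F : (Fin n → ℂ) → ℂ), Differentiable ℂ F →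
      (∀ i, VanishesToOrder (l * k) F (s i)) → ∀ ρ ≥ C, ∀ M, (∀ z, ‖z‖ ≤ 4 * ρ → ‖F z‖ ≤ M) →
        ∀ z, ‖z‖ ≤ r → ‖eval z G ^ k * F z‖ ≤
          2 * (C / ρ) ^ (m * (l * k)) * (coeffNorm ρ G ^ k * (2 ^ n * M)) := by
  obtain ⟨C, hrC, hproj⟩ := hG.hasLeadingPowers.exists_coeffNorm_sub_adicProj_le hm hr
  obtain ⟨A, hA⟩ := Set.finite_range (fun i => ‖s i‖ + 1) |>.bddAbove
  refine ⟨max C A, le_max_of_le_left hrC, fun k F hF hFs ρ hρ M hFM z hz => ?_⟩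
  have hCρ : C ≤ ρ := (le_max_left _ _).trans hρ
  have hρ0 : 0 < ρ := by linarith
  have hC0 : 0 ≤ C := by linarith
  obtain ⟨B, hB, hsmall⟩ := hG.exists_norm_eval_adicProj_le hm
    (fun i => (hA (Set.mem_range_self i)).trans ((le_max_right _ _).trans hρ)) hF hFs z
  set π := hG.hasLeadingPowers.adicProj (l * k)
  refine le_of_forall_pos_le_add fun δ hδ => ?_
  set D := ‖eval z G ^ k‖ + B + 1 with hD
  have hD0 : 0 < D := by positivity
  obtain ⟨P, hPnorm, hPapprox⟩ :=
    exists_coeffNorm_le_and_norm_sub_eval_le hρ0 hF hFM (div_pos hδ hD0)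
  have hmain : ‖eval z (G ^ k * P - π (G ^ k * P))‖ ≤
      2 * (max C A / ρ) ^ (m * (l * k)) * (coeffNorm ρ G ^ k * (2 ^ n * M)) :=
    calc _ ≤ coeffNorm r (G ^ k * P - π (G ^ k * P)) :=
          norm_eval_le_coeffNorm (fun i => (norm_le_pi_norm z i).trans hz) _
      _ ≤ 2 * (C / ρ) ^ (m * (l * k)) * coeffNorm ρ (G ^ k * P) := hproj _ ρ hCρ _
      _ ≤ 2 * (max C A / ρ) ^ (m * (l * k)) * coeffNorm ρ (G ^ k * P) := by
          have := coeffNorm_nonneg hρ0.le (G ^ k * P)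
          gcongr
          exact le_max_left _ _
      _ ≤ _ := by
          gcongr
          exact (coeffNorm_mul_le hρ0.le _ _).trans <| mul_le_mul (coeffNorm_pow_le hρ0.le _ _)
            hPnorm (coeffNorm_nonneg hρ0.le _) (pow_nonneg (coeffNorm_nonneg hρ0.le _) _)
  have hsplit : eval z G ^ k * F z = eval z (G ^ k * P - π (G ^ k * P)) +
      (eval z G ^ k * (F z - eval z P) + eval z (π (G ^ k * P))) := by
    simp only [map_sub, map_mul, map_pow]
    ring
  rw [hsplit]
  refine (norm_add_le _ _).trans (add_le_add hmain ((norm_add_le _ _).trans ?_))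
  calc _ ≤ ‖eval z G ^ k‖ * (δ / D) + B * (δ / D) := by
        rw [norm_mul]
        gcongr
        · exact hPapprox z (by linarith)
        · exact hsmall P _ hPapprox
    _ ≤ D * (δ / D) := by rw [← add_mul]; gcongr; linarith [hD]
    _ = δ := mul_div_cancel₀ δ hD0.ne'

theorem exists_sphere_eventually_le_norm_eval {G : MvPolynomial (Fin n) ℂ} {z₁ : Fin n → ℂ}
    (hz₁ : eval z₁ G ≠ 0) (z₀ : Fin n → ℂ) :
    ∃ δ ∈ Set.Ioo (0 : ℝ) 1, ∃ η > 0, ∀ᶠ z in nhds z₀, ∀ t ∈ Metric.sphere (0 : ℂ) δ,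
      η ≤ ‖eval (z + t • (z₁ - z)) G‖ := by
  set p := lineHom z₀ (z₁ - z₀) G with hp
  have hp0 : p ≠ 0 := fun h => by
    have := eval_lineHom z₀ (z₁ - z₀) G 1
    rw [← hp, h, Polynomial.eval_zero, one_smul, add_sub_cancel] at this
    exact hz₁ this.symm
  obtain ⟨δ, hδ, hδroot⟩ := ((Set.Ioo_infinite (zero_lt_one' ℝ)).sdiff
    (p.roots.toFinset.finite_toSet.image fun t : ℂ => ‖t‖)).nonempty
  have hcont : Continuous fun x : (Fin n → ℂ) × ℂ => ‖eval (x.1 + x.2 • (z₁ - x.1)) G‖ :=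
    (G.continuous_eval.comp (by fun_prop)).norm
  have hpos : ∀ t ∈ Metric.sphere (0 : ℂ) δ, 0 < ‖eval (z₀ + t • (z₁ - z₀)) G‖ := fun t ht => by
    rw [norm_pos_iff, ← eval_lineHom]
    exact fun h => hδroot ⟨t, by simpa [hp0] using h, mem_sphere_zero_iff_norm.1 ht⟩
  obtain ⟨t₀, ht₀, hmin⟩ := (isCompact_sphere (0 : ℂ) δ).exists_isMinOn
    (NormedSpace.sphere_nonempty.2 hδ.1.le) (hcont.comp (Continuous.prodMk_right z₀)).continuousOn
  refine ⟨δ, hδ, _, half_pos (hpos t₀ ht₀), ?_⟩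
  refine (isCompact_sphere (0 : ℂ) δ).eventually_forall_of_forall_eventually fun t ht => ?_
  have hlt := (half_lt_self (hpos t₀ ht₀)).trans_le (hmin ht)
  exact ((hcont.continuousAt (x := (z₀, t))).eventually (lt_mem_nhds hlt)).mono fun x hx => hx.le

theorem exists_forall_sphere_le_norm_eval {G : MvPolynomial (Fin n) ℂ} {z₁ : Fin n → ℂ}
    (hz₁ : eval z₁ G ≠ 0) {K : Set (Fin n → ℂ)} (hK : IsCompact K) :
    ∃ η > 0, ∀ z ∈ K, ∃ δ ∈ Set.Ioo (0 : ℝ) 1, ∀ t ∈ Metric.sphere (0 : ℂ) δ,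
      η ≤ ‖eval (z + t • (z₁ - z)) G‖ := by
  refine hK.induction_on (p := fun U => ∃ η > 0, ∀ z ∈ U, ∃ δ ∈ Set.Ioo (0 : ℝ) 1,
    ∀ t ∈ Metric.sphere (0 : ℂ) δ, η ≤ ‖eval (z + t • (z₁ - z)) G‖) ⟨1, one_pos, by simp⟩ ?_ ?_ ?_
  · rintro U V hUV ⟨η, hη, hV⟩
    exact ⟨η, hη, fun z hz => hV z (hUV hz)⟩
  · rintro U V ⟨η, hη, hU⟩ ⟨η', hη', hV⟩
    refine ⟨min η η', lt_min hη hη', ?_⟩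
    rintro z (hz | hz)
    · obtain ⟨δ, hδ, hle⟩ := hU z hz
      exact ⟨δ, hδ, fun t ht => (min_le_left _ _).trans (hle t ht)⟩
    · obtain ⟨δ, hδ, hle⟩ := hV z hz
      exact ⟨δ, hδ, fun t ht => (min_le_right _ _).trans (hle t ht)⟩
  · intro z₀ _
    obtain ⟨δ, hδ, η, hη, hev⟩ := exists_sphere_eventually_le_norm_eval hz₁ z₀
    exact ⟨_, mem_nhdsWithin_of_mem_nhds hev, η, hη, fun z hz => ⟨δ, hδ, hz⟩⟩

theorem norm_le_of_sphere_norm_pow_mul_le {δ η B : ℝ} (hδ : 0 < δ) (hη : 0 < η) {k : ℕ}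
    {f g : ℂ → ℂ} (hf : Differentiable ℂ f) (hg : ∀ t ∈ Metric.sphere (0 : ℂ) δ, η ≤ ‖g t‖)
    (hfg : ∀ t ∈ Metric.sphere (0 : ℂ) δ, ‖g t ^ k * f t‖ ≤ B) : ‖f 0‖ ≤ η⁻¹ ^ k * B := by
  have hsphere : ∀ t ∈ Metric.sphere (0 : ℂ) δ, ‖f t‖ ≤ η⁻¹ ^ k * B := fun t ht => by
    rw [inv_pow, ← div_eq_inv_mul, le_div_iff₀' (by positivity)]
    refine le_trans ?_ (hfg t ht)
    rw [norm_mul, norm_pow]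
    gcongr
    exact hg t ht
  have := Complex.norm_iteratedDeriv_le_of_forall_mem_sphere_norm_le 0 hδ hf.diffContOnCl hsphere
  simpa using this

theorem exists_norm_le_of_norm_pow_mul_le {G : MvPolynomial (Fin n) ℂ} (hG : G ≠ 0) (r : ℝ) :
    ∃ r' ≥ 0, ∃ C ≥ 0, ∀ (k : ℕ) (F : (Fin n → ℂ) → ℂ), Differentiable ℂ F → ∀ B,
      (∀ z, ‖z‖ ≤ r' → ‖eval z G ^ k * F z‖ ≤ B) → ∀ z, ‖z‖ ≤ r → ‖F z‖ ≤ C ^ k * B := by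
  obtain ⟨z₁, hz₁⟩ : ∃ z₁, eval z₁ G ≠ 0 := by
    by_contra! hzero
    exact hG (MvPolynomial.funext fun x => by rw [hzero, map_zero])
  obtain ⟨η, hη, hGη⟩ := exists_forall_sphere_le_norm_eval hz₁ (isCompact_closedBall 0 r)
  refine ⟨2 * |r| + ‖z₁‖, by positivity, η⁻¹, by positivity, fun k F hF B hFB z hz => ?_⟩
  obtain ⟨δ, hδ, hle⟩ := hGη z (mem_closedBall_zero_iff.2 hz)
  have hline : ∀ t ∈ Metric.sphere (0 : ℂ) δ, ‖z + t • (z₁ - z)‖ ≤ 2 * |r| + ‖z₁‖ := by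
    intro t ht
    have ht1 : ‖t‖ ≤ 1 := (mem_sphere_zero_iff_norm.1 ht).trans_le hδ.2.le
    calc ‖z + t • (z₁ - z)‖ ≤ ‖z‖ + ‖t‖ * ‖z₁ - z‖ := by
          rw [← norm_smul]; exact norm_add_le _ _
      _ ≤ ‖z‖ + 1 * (‖z₁‖ + ‖z‖) := by gcongr; exact norm_sub_le _ _
      _ ≤ 2 * |r| + ‖z₁‖ := by linarith [le_abs_self r]
  simpa using norm_le_of_sphere_norm_pow_mul_le hδ.1 hη
    (hF.comp (differentiable_line z (z₁ - z))) hle fun t ht => hFB _ (hline t ht)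

end Division

section Schwarz

variable {n : ℕ}

/-- The Schwarz lemma for the points `s i`: a zero of order `l * k` at each of them makes an entire
function bounded by `M` on the polydisc of radius `R` smaller by a factor `R ^ (c * l * k)` on any
fixed smaller polydisc, up to a constant exponential in `k`. -/
def SchwarzBound {ι : Type*} (s : ι → Fin n → ℂ) (l c : ℕ) : Prop :=
  ∀ r : ℝ, ∃ C ≥ (1 : ℝ), ∀ (k : ℕ) (F : (Fin n → ℂ) → ℂ), Differentiable ℂ F →
    (∀ i, VanishesToOrder (l * k) F (s i)) → ∀ R ≥ C, ∀ M, (∀ z, ‖z‖ ≤ R → ‖F z‖ ≤ M) →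
      ∀ z, ‖z‖ ≤ r → ‖F z‖ ≤ C ^ (k + 1) * M / R ^ (c * l * k)

-- The power `(u + 1) * l * k` of `ρ` lost to `G ^ k` is absorbed by the division estimate, whose
-- exponent is `(u + 1 + c) * (l * k)`.
theorem div_pow_mul_eq {C₁ C₀ g ρ M : ℝ} (hρ : 0 < ρ) (a u c l k : ℕ) :
    C₁ ^ k * (2 * (C₀ / ρ) ^ ((u + 1 + c) * (l * k)) *
        ((ρ ^ ((u + 1) * l) * g) ^ k * (2 ^ a * M))) =
      2 ^ (a + 1) * (C₁ * (C₀ ^ ((u + 1 + c) * l) * g * 4 ^ (c * l))) ^ k * M /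
        (4 * ρ) ^ (c * l * k) := by
  have hexp : (u + 1 + c) * (l * k) = (u + 1) * l * k + c * l * k := by ring
  have hdiv : (C₀ / ρ) ^ ((u + 1 + c) * (l * k)) =
      (C₀ ^ ((u + 1 + c) * l)) ^ k / (ρ ^ ((u + 1) * l * k) * ρ ^ (c * l * k)) := by
    rw [div_pow, ← pow_add, ← hexp, ← pow_mul, mul_assoc]
  rw [hdiv]
  simp only [mul_pow, ← pow_mul]
  field_simp
  ring

theorem IsMultiplier.schwarzBound {ι : Type*} [Finite ι] {s : ι → Fin n → ℂ} {u c l : ℕ}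
    {h : Fin n → MvPolynomial (Fin n) ℂ} {G : MvPolynomial (Fin n) ℂ}
    (hG : IsMultiplier s (u + 1 + c) h l G) (hG0 : G ≠ 0) (hdeg : G.totalDegree ≤ (u + 1) * l) :
    SchwarzBound s l c := by
  intro r
  obtain ⟨r', hr', C₁, hC₁, hdivide⟩ := exists_norm_le_of_norm_pow_mul_le hG0 r
  obtain ⟨C₀, hC₀, hmul⟩ := hG.exists_norm_eval_pow_mul_le (by positivity)
    (r := 1 + r') (by linarith)
  set D := C₁ * (C₀ ^ ((u + 1 + c) * l) * coeffNorm 1 G * 4 ^ (c * l))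
  have hD0 : 0 ≤ D := by
    have := coeffNorm_nonneg zero_le_one G
    have : 0 ≤ C₀ := by linarith
    positivity
  set C := 4 * C₀ + 2 ^ (n + 1) + D with hC
  have h2 : (0 : ℝ) < 2 ^ (n + 1) := by positivity
  refine ⟨C, by linarith [hC], fun k F hF hFs R hR M hFM z hz => ?_⟩
  obtain ⟨ρ, rfl⟩ : ∃ ρ, R = 4 * ρ := ⟨R / 4, by ring⟩
  have hC₀ρ : C₀ ≤ ρ := by linarith
  have hρ : 1 ≤ ρ := by linarith
  have hM : 0 ≤ M := (norm_nonneg _).trans (hFM 0 (by rw [norm_zero]; positivity))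
  calc ‖F z‖ ≤ C₁ ^ k * (2 * (C₀ / ρ) ^ ((u + 1 + c) * (l * k)) *
        (coeffNorm ρ G ^ k * (2 ^ n * M))) :=
        hdivide k F hF _ (fun z hz => hmul k F hF hFs ρ hC₀ρ M hFM z (by linarith)) z hz
    _ ≤ C₁ ^ k * (2 * (C₀ / ρ) ^ ((u + 1 + c) * (l * k)) *
        ((ρ ^ ((u + 1) * l) * coeffNorm 1 G) ^ k * (2 ^ n * M))) := by
        have : 0 ≤ C₀ / ρ := div_nonneg (by linarith) (by linarith)
        have := coeffNorm_nonneg (zero_le_one.trans hρ) G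
        gcongr
        exact coeffNorm_le_pow_mul hρ hdeg
    _ = 2 ^ (n + 1) * D ^ k * M / (4 * ρ) ^ (c * l * k) := div_pow_mul_eq (by linarith) ..
    _ ≤ C ^ (k + 1) * M / (4 * ρ) ^ (c * l * k) := by
        rw [pow_succ' C]
        gcongr <;> linarith

theorem exists_schwarzBound (hn : 0 < n) {S : Set (Fin n → ℂ)}
    (hS : ∀ Q : MvPolynomial (Fin n) ℂ, (∀ w ∈ S, eval w Q = 0) → Q = 0) (c : ℕ) :
    ∃ (N : ℕ) (s : Fin N → Fin n → ℂ) (l : ℕ), 0 < N ∧ (∀ i, s i ∈ S) ∧ 0 < l ∧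
      SchwarzBound s l c := by
  have : Nonempty (Fin n) := ⟨⟨0, hn⟩⟩
  obtain ⟨N, s, u, l, h, G, hN, hsS, hG, hG0, hl, hdeg⟩ := exists_isMultiplier hS c
  exact ⟨N, s, l, hN, hsS, hl, hG.schwarzBound hG0 hdeg⟩

end Schwarz

/-! ### Polynomial differential systems -/

section WordDerivation

variable {ι σ R : Type*} [CommRing R] (p : ι → σ → MvPolynomial σ R)

theorem mkDerivation_eq_sum [Fintype σ] (q : σ → MvPolynomial σ R) (P : MvPolynomial σ R) :
    mkDerivation R q P = ∑ i, q i * pderiv i P := by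
  have : mkDerivation R q = ∑ i, q i • pderiv i := by
    classical
    refine derivation_ext fun j => ?_
    rw [mkDerivation_X, ← Derivation.coeFnAddMonoidHom_apply, map_sum, Finset.sum_apply]
    simp [Derivation.coeFnAddMonoidHom, pderiv_X, Pi.single_apply]
  rw [this, ← Derivation.coeFnAddMonoidHom_apply, map_sum, Finset.sum_apply]
  rfl

/-- The composite `D (w 0) ∘ D (w 1) ∘ ⋯`, where `D ν` is the derivation with `X i ↦ p ν i`: the
iterated derivative along the word `w`. -/
noncomputable def wordDer (w : List ι) : Module.End R (MvPolynomial σ R) :=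
  (w.map fun ν => (mkDerivation R (p ν) : Module.End R (MvPolynomial σ R))).prod

@[simp] theorem wordDer_nil (P : MvPolynomial σ R) : wordDer p [] P = P := rfl

theorem wordDer_cons (ν : ι) (w : List ι) (P : MvPolynomial σ R) :
    wordDer p (ν :: w) P = mkDerivation R (p ν) (wordDer p w P) := by
  simp [wordDer]

theorem wordDer_concat (ν : ι) (w : List ι) (P : MvPolynomial σ R) :
    wordDer p (w ++ [ν]) P = wordDer p w (mkDerivation R (p ν) P) := by
  simp [wordDer]

variable {p}

theorem wordDer_perm (hcomm : ∀ ν μ P, mkDerivation R (p ν) (mkDerivation R (p μ) P) =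
    mkDerivation R (p μ) (mkDerivation R (p ν) P)) {w w' : List ι} (h : w.Perm w') :
    wordDer p w = wordDer p w' := by
  refine (h.map _).prod_eq' ?_
  rw [List.pairwise_map]
  exact List.pairwise_of_forall fun ν μ => LinearMap.ext fun P => hcomm ν μ P

end WordDerivation

section DifferentialSystem

variable {n : ℕ} {σ R : Type*} [CommRing R] [Algebra R ℂ]

/-- The functions `z ↦ f z i` are entire and satisfy `∂ f_i / ∂ z_ν = p ν i (f)`. -/
structure IsDifferentialSystem (f : (Fin n → ℂ) → σ → ℂ) (p : Fin n → σ → MvPolynomial σ R) :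
    Prop where
  differentiable : ∀ i, Differentiable ℂ fun z => f z i
  fderiv_apply_single : ∀ ν i z,
    fderiv ℂ (fun z => f z i) z (Pi.single ν 1) = aeval (f z) (p ν i)

namespace IsDifferentialSystem

variable {f : (Fin n → ℂ) → σ → ℂ} {p : Fin n → σ → MvPolynomial σ R}

theorem differentiable_aeval (hf : IsDifferentialSystem f p) (P : MvPolynomial σ R) :
    Differentiable ℂ fun z => aeval (f z) P := by
  induction P using MvPolynomial.induction_on with
  | C a => simp
  | add p q hp hq => simp only [map_add]; exact hp.add hq
  | mul_X p i hp => simp only [map_mul, aeval_X]; exact hp.mul (hf.differentiable i)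

theorem fderiv_aeval_single (hf : IsDifferentialSystem f p) (ν : Fin n) (P : MvPolynomial σ R)
    (z : Fin n → ℂ) : fderiv ℂ (fun z => aeval (f z) P) z (Pi.single ν 1) =
      aeval (f z) (mkDerivation R (p ν) P) := by
  induction P using MvPolynomial.induction_on with
  | C a => simp [← algebraMap_eq]
  | add P Q hP hQ =>
    simp only [map_add]
    rw [fderiv_fun_add (hf.differentiable_aeval P z) (hf.differentiable_aeval Q z),
      add_apply, hP, hQ]
  | mul_X P i hP =>
    simp only [map_mul, aeval_X, Derivation.leibniz, mkDerivation_X, map_add, smul_eq_mul]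
    rw [fderiv_fun_mul (hf.differentiable_aeval P z) (hf.differentiable i z), add_apply,
      smul_apply, smul_apply, hP, hf.fderiv_apply_single, smul_eq_mul, smul_eq_mul]

theorem fderiv_aeval (hf : IsDifferentialSystem f p) (P : MvPolynomial σ R)
    (z : Fin n → ℂ) : fderiv ℂ (fun z => aeval (f z) P) z =
      ∑ ν, aeval (f z) (mkDerivation R (p ν) P) • ContinuousLinearMap.proj (R := ℂ) ν := by
  ext ζ
  conv_lhs => rw [pi_eq_sum_univ' ζ, map_sum]
  simp [hf.fderiv_aeval_single, mul_comm]

theorem differentiable_fderiv_aeval (hf : IsDifferentialSystem f p) (P : MvPolynomial σ R) :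
    Differentiable ℂ (fderiv ℂ fun z => aeval (f z) P) := by
  rw [funext (hf.fderiv_aeval P)]
  exact Differentiable.fun_sum fun ν _ => (hf.differentiable_aeval _).smul_const _

theorem fderiv_fderiv_aeval_single (hf : IsDifferentialSystem f p) (ν μ : Fin n)
    (P : MvPolynomial σ R) (z : Fin n → ℂ) :
    fderiv ℂ (fderiv ℂ fun z => aeval (f z) P) z (Pi.single ν 1) (Pi.single μ 1) =
      aeval (f z) (mkDerivation R (p ν) (mkDerivation R (p μ) P)) := by
  rw [← hf.fderiv_aeval_single, ← funext (hf.fderiv_aeval_single μ P),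
    fderiv_clm_apply (hf.differentiable_fderiv_aeval P z) (differentiableAt_const _)]
  simp

theorem mkDerivation_comm (hf : IsDifferentialSystem f p)
    (hind : ∀ P : MvPolynomial σ R, (∀ z, aeval (f z) P = 0) → P = 0)
    (ν μ : Fin n) (P : MvPolynomial σ R) :
    mkDerivation R (p ν) (mkDerivation R (p μ) P) =
      mkDerivation R (p μ) (mkDerivation R (p ν) P) := by
  rw [← sub_eq_zero]
  refine hind _ fun z => ?_
  have hsymm := second_derivative_symmetric (fun y => (hf.differentiable_aeval P y).hasFDerivAt)
    (hf.differentiable_fderiv_aeval P z).hasFDerivAt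
  rw [map_sub, ← hf.fderiv_fderiv_aeval_single, ← hf.fderiv_fderiv_aeval_single, hsymm, sub_self]

theorem deriv_aeval_line (hf : IsDifferentialSystem f p) (P : MvPolynomial σ R)
    (s ζ : Fin n → ℂ) : deriv (fun t : ℂ => aeval (f (s + t • ζ)) P) =
      fun t => ∑ ν, ζ ν * aeval (f (s + t • ζ)) (mkDerivation R (p ν) P) := by
  funext t
  have hline : HasDerivAt (fun t : ℂ => s + t • ζ) ζ t := by
    simpa using ((hasDerivAt_id t).smul_const ζ).const_add s
  have hcomp := (hf.differentiable_aeval P (s + t • ζ)).hasFDerivAt.comp_hasDerivAt t hline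
  rw [hf.fderiv_aeval] at hcomp
  refine hcomp.deriv.trans ?_
  simp [mul_comm]

theorem iteratedDeriv_aeval_line_eq_zero (hf : IsDifferentialSystem f p) (s ζ : Fin n → ℂ) (j : ℕ)
    (P : MvPolynomial σ R)
    (hP : ∀ w : List (Fin n), w.length = j → aeval (f s) (wordDer p w P) = 0) :
    iteratedDeriv j (fun t : ℂ => aeval (f (s + t • ζ)) P) 0 = 0 := by
  induction j generalizing P with
  | zero => simpa using hP [] rfl
  | succ j ih =>
    rw [iteratedDeriv_succ', hf.deriv_aeval_line]
    have hd : ∀ Q : MvPolynomial σ R, ContDiff ℂ j fun t : ℂ => aeval (f (s + t • ζ)) Q :=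
      fun Q => ((hf.differentiable_aeval Q).comp (differentiable_line s ζ)).contDiff
    rw [iteratedDeriv_fun_sum fun ν _ => (contDiff_const.mul (hd _)).contDiffAt]
    refine Finset.sum_eq_zero fun ν _ => ?_
    rw [iteratedDeriv_const_mul (ζ ν) (hd _).contDiffAt, ih, mul_zero]
    intro w hw
    rw [← wordDer_concat]
    exact hP _ (by simp [hw])

theorem vanishesToOrder_aeval (hf : IsDifferentialSystem f p) {s : Fin n → ℂ} {k : ℕ}
    {P : MvPolynomial σ R}
    (hP : ∀ w : List (Fin n), w.length < k → aeval (f s) (wordDer p w P) = 0) :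
    VanishesToOrder k (fun z => aeval (f z) P) s := fun ζ j hj =>
  hf.iteratedDeriv_aeval_line_eq_zero s ζ j P fun w hw => hP w (hw ▸ hj)

theorem aeval_eq_zero_of_wordDer (hf : IsDifferentialSystem f p) {s : Fin n → ℂ}
    {P : MvPolynomial σ R} (hP : ∀ w, aeval (f s) (wordDer p w P) = 0) (z : Fin n → ℂ) :
    aeval (f z) P = 0 := by
  have hd : Differentiable ℂ fun t : ℂ => aeval (f (s + t • (z - s))) P :=
    (hf.differentiable_aeval P).comp (differentiable_line s (z - s))
  have htaylor := Complex.taylorSeries_eq_of_entire hd 0 1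
  simp only [hf.iteratedDeriv_aeval_line_eq_zero s (z - s) _ P fun w _ => hP w, smul_zero,
    tsum_zero, one_smul, add_sub_cancel] at htaylor
  exact htaylor.symm

theorem norm_aeval_mkDerivation_le (hf : IsDifferentialSystem f p) (ν : Fin n)
    (P : MvPolynomial σ R) {h M : ℝ} (hh : 0 < h) {s : Fin n → ℂ}
    (hM : ∀ z, ‖z - s‖ ≤ h → ‖aeval (f z) P‖ ≤ M) :
    ‖aeval (f s) (mkDerivation R (p ν) P)‖ ≤ M / h := by
  set e : Fin n → ℂ := Pi.single ν 1 with he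
  have hd : Differentiable ℂ fun t : ℂ => aeval (f (s + t • e)) P :=
    (hf.differentiable_aeval _).comp (differentiable_line s _)
  have hcauchy := Complex.norm_deriv_le_of_forall_mem_sphere_norm_le (c := 0) hh
    hd.diffContOnCl (C := M) fun t ht => hM _ (by simpa [norm_smul, he, Pi.norm_single] using
      (mem_sphere_zero_iff_norm.1 ht).le)
  simpa [hf.deriv_aeval_line, he, Pi.single_apply] using hcauchy

theorem norm_aeval_wordDer_le (hf : IsDifferentialSystem f p) (P : MvPolynomial σ R) {h M : ℝ}
    (hh : 0 < h) (w : List (Fin n)) {s : Fin n → ℂ}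
    (hM : ∀ z, ‖z - s‖ ≤ w.length * h → ‖aeval (f z) P‖ ≤ M) :
    ‖aeval (f s) (wordDer p w P)‖ ≤ M / h ^ w.length := by
  induction w generalizing s with
  | nil => simpa using hM s (by simp)
  | cons ν w ih =>
    rw [wordDer_cons, List.length_cons, pow_succ, ← div_div]
    refine hf.norm_aeval_mkDerivation_le ν _ hh fun y hy => ih fun z hz => hM z ?_
    calc ‖z - s‖ ≤ ‖z - y‖ + ‖y - s‖ := norm_sub_le_norm_sub_add_norm_sub ..
      _ ≤ w.length * h + h := add_le_add hz hy
      _ = (ν :: w).length * h := by rw [List.length_cons, Nat.cast_succ, add_mul, one_mul]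

end IsDifferentialSystem

end DifferentialSystem

/-! ### Size and denominators of jets at algebraic points -/

section Size

variable {ι σ R 𝕜 : Type*} [CommRing R] {p : ι → σ → MvPolynomial σ R} {g : ℕ}

theorem totalDegree_mkDerivation_le [Finite σ] (hg : ∀ ν i, (p ν i).totalDegree ≤ g) (ν : ι)
    (P : MvPolynomial σ R) : (mkDerivation R (p ν) P).totalDegree ≤ P.totalDegree + g := by
  have := Fintype.ofFinite σ
  rw [mkDerivation_eq_sum, add_comm]
  exact totalDegree_finsetSum_le fun i _ => (totalDegree_mul _ _).trans
    (add_le_add (hg ν i) (totalDegree_pderiv_le P i))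

theorem totalDegree_wordDer_le [Finite σ] (hg : ∀ ν i, (p ν i).totalDegree ≤ g)
    (w : List ι) (P : MvPolynomial σ R) :
    (wordDer p w P).totalDegree ≤ P.totalDegree + g * w.length := by
  induction w with
  | nil => simp
  | cons ν w ih =>
    rw [wordDer_cons, List.length_cons, mul_add, mul_one, ← add_assoc]
    exact (totalDegree_mkDerivation_le hg ν _).trans (Nat.add_le_add_right ih g)

variable [Fintype σ] [NormedField 𝕜] (φ : R →+* 𝕜) {A : ℝ}

theorem coeffNorm_map_mkDerivation_le {q : σ → MvPolynomial σ R} (hA0 : 0 ≤ A)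
    (hA : ∀ i, coeffNorm 1 (map φ (q i)) ≤ A) {P : MvPolynomial σ R} {D : ℕ}
    (hD : P.totalDegree ≤ D) : coeffNorm 1 (map φ (mkDerivation R q P)) ≤
      Fintype.card σ * A * D * coeffNorm 1 (map φ P) := by
  rw [mkDerivation_eq_sum, map_sum]
  calc coeffNorm 1 (∑ i, map φ (q i * pderiv i P))
      ≤ ∑ i, coeffNorm 1 (map φ (q i * pderiv i P)) := coeffNorm_sum_le zero_le_one _ _
    _ ≤ ∑ _i : σ, A * (D * coeffNorm 1 (map φ P)) := by
        refine sum_le_sum fun i _ => ?_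
        rw [map_mul, ← pderiv_map]
        exact (coeffNorm_mul_le zero_le_one _ _).trans (mul_le_mul (hA i)
          (coeffNorm_pderiv_le ((totalDegree_map_le φ P).trans hD) i)
          (coeffNorm_nonneg zero_le_one _) hA0)
    _ = Fintype.card σ * A * D * coeffNorm 1 (map φ P) := by
        rw [sum_const, card_univ, nsmul_eq_mul]; ring

theorem coeffNorm_map_wordDer_le (hA0 : 0 ≤ A) (hA : ∀ ν i, coeffNorm 1 (map φ (p ν i)) ≤ A)
    (hg : ∀ ν i, (p ν i).totalDegree ≤ g) {P : MvPolynomial σ R} {D : ℕ} (w : List ι)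
    (hD : P.totalDegree + g * w.length ≤ D) : coeffNorm 1 (map φ (wordDer p w P)) ≤
      (Fintype.card σ * A * D) ^ w.length * coeffNorm 1 (map φ P) := by
  induction w with
  | nil => simp
  | cons ν w ih =>
    rw [List.length_cons, mul_add] at hD
    have hw : P.totalDegree + g * w.length ≤ D := by lia
    rw [wordDer_cons, List.length_cons, pow_succ', mul_assoc]
    exact (coeffNorm_map_mkDerivation_le φ hA0 (hA ν)
      ((totalDegree_wordDer_le hg w P).trans hw)).trans
      (mul_le_mul_of_nonneg_left (ih hw) (by positivity))

theorem norm_map_eval_wordDer_le (hA0 : 0 ≤ A) (hA : ∀ ν i, coeffNorm 1 (map φ (p ν i)) ≤ A)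
    (hg : ∀ ν i, (p ν i).totalDegree ≤ g) {x : σ → R} {T : ℝ} (hT : 1 ≤ T)
    (hx : ∀ j, ‖φ (x j)‖ ≤ T) {H : ℝ} (hH : 1 ≤ H) (hAH : Fintype.card σ * A * (1 + g) ≤ H)
    (w : List ι) (P : MvPolynomial σ R) {E : ℕ} (hE : P.totalDegree + w.length ≤ E) :
    ‖φ (eval x (wordDer p w P))‖ ≤
      (H * T ^ (1 + g)) ^ E * (E : ℝ) ^ w.length * coeffNorm 1 (map φ P) := by
  have hD : P.totalDegree + g * w.length ≤ (1 + g) * E := by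
    calc P.totalDegree + g * w.length ≤ E + g * E := by gcongr <;> lia
      _ = (1 + g) * E := by ring
  have hdeg := (totalDegree_map_le φ _).trans ((totalDegree_wordDer_le hg w P).trans hD)
  have hP := coeffNorm_nonneg zero_le_one (map φ P)
  have hHE : (Fintype.card σ * A * (1 + g)) ^ w.length ≤ H ^ E :=
    (pow_le_pow_left₀ (by positivity) hAH _).trans (pow_le_pow_right₀ hH (by lia))
  calc ‖φ (eval x (wordDer p w P))‖
      ≤ coeffNorm T (map φ (wordDer p w P)) := by
        rw [map_eval]
        exact norm_eval_le_coeffNorm hx _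
    _ ≤ T ^ ((1 + g) * E) * coeffNorm 1 (map φ (wordDer p w P)) := coeffNorm_le_pow_mul hT hdeg
    _ ≤ T ^ ((1 + g) * E) * ((Fintype.card σ * A * ((1 + g) * E : ℕ)) ^ w.length *
          coeffNorm 1 (map φ P)) := by
        gcongr
        exact coeffNorm_map_wordDer_le φ hA0 hA hg w hD
    _ = T ^ ((1 + g) * E) * ((Fintype.card σ * A * (1 + g)) ^ w.length * (E : ℝ) ^ w.length *
          coeffNorm 1 (map φ P)) := by push_cast; rw [← mul_pow]; ring
    _ ≤ T ^ ((1 + g) * E) * (H ^ E * (E : ℝ) ^ w.length * coeffNorm 1 (map φ P)) := by gcongr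
    _ = (H * T ^ (1 + g)) ^ E * (E : ℝ) ^ w.length * coeffNorm 1 (map φ P) := by
        rw [mul_pow, ← pow_mul]; ring

end Size

section Denominators

variable {ι σ K : Type*} [Field K]

variable (σ K) in
/-- Polynomials with algebraic integer coefficients. -/
noncomputable def integerPolynomials : Subring (MvPolynomial σ K) :=
  (map (σ := σ) (algebraMap (𝓞 K) K)).range

theorem mem_integerPolynomials {P : MvPolynomial σ K} :
    P ∈ integerPolynomials σ K ↔ ∀ m, IsIntegral ℤ (coeff m P) := by
  constructor
  · rintro ⟨Q, rfl⟩ m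
    rw [coeff_map]
    exact RingOfIntegers.isIntegral_coe _
  · intro h
    rw [P.as_sum]
    exact Subring.sum_mem _ fun m _ => ⟨monomial m ⟨coeff m P, h m⟩, map_monomial ..⟩

theorem pderiv_mem_integerPolynomials {P : MvPolynomial σ K} (hP : P ∈ integerPolynomials σ K)
    (i : σ) : pderiv i P ∈ integerPolynomials σ K := by
  obtain ⟨Q, rfl⟩ := hP
  exact ⟨pderiv i Q, pderiv_map.symm⟩

theorem natCast_pow_smul_wordDer_mem [Finite σ] {p : ι → σ → MvPolynomial σ K} {b : ℕ}
    (hb : ∀ ν i, (b : K) • p ν i ∈ integerPolynomials σ K) (w : List ι)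
    {P : MvPolynomial σ K} (hP : P ∈ integerPolynomials σ K) :
    (b : K) ^ w.length • wordDer p w P ∈ integerPolynomials σ K := by
  induction w with
  | nil => simpa using hP
  | cons ν w ih =>
    have := Fintype.ofFinite σ
    have hcons : (b : K) ^ (ν :: w).length • wordDer p (ν :: w) P =
        ∑ i, ((b : K) • p ν i) * pderiv i ((b : K) ^ w.length • wordDer p w P) := by
      rw [wordDer_cons, mkDerivation_eq_sum, smul_sum]
      refine sum_congr rfl fun i _ => ?_
      rw [Derivation.map_smul, smul_mul_smul_comm, List.length_cons, pow_succ']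
    rw [hcons]
    exact Subring.sum_mem _ fun i _ =>
      Subring.mul_mem _ (hb ν i) (pderiv_mem_integerPolynomials ih i)

theorem isIntegral_pow_mul_eval [Finite σ] {x : σ → K} {b : ℕ}
    (hb : ∀ i, IsIntegral ℤ ((b : K) * x i)) {Q : MvPolynomial σ K}
    (hQ : Q ∈ integerPolynomials σ K) {D : ℕ} (hD : Q.totalDegree ≤ D) :
    IsIntegral ℤ ((b : K) ^ D * eval x Q) := by
  have := Fintype.ofFinite σ
  rw [eval_eq', mul_sum]
  refine IsIntegral.sum _ fun m hm => ?_
  have hmD : m.degree ≤ D := (degree_le_totalDegree hm).trans hD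
  have hdistrib : (b : K) ^ D * (coeff m Q * ∏ i, x i ^ m i) =
      (b : K) ^ (D - m.degree) * (coeff m Q * ∏ i, ((b : K) * x i) ^ m i) := by
    simp_rw [mul_pow]
    rw [prod_mul_distrib, prod_pow_eq_pow_sum, ← Finsupp.degree_eq_sum]
    conv_lhs => rw [← Nat.sub_add_cancel hmD, pow_add]
    ring
  rw [hdistrib]
  exact ((isIntegral_natCast b).pow _).mul
    ((mem_integerPolynomials.1 hQ m).mul (IsIntegral.prod _ fun i _ => (hb i).pow _))

theorem isIntegral_pow_mul_eval_wordDer [Finite σ] {p : ι → σ → MvPolynomial σ K} {b g : ℕ}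
    (hg : ∀ ν i, (p ν i).totalDegree ≤ g)
    (hp : ∀ ν i, (b : K) • p ν i ∈ integerPolynomials σ K) {x : σ → K}
    (hx : ∀ j, IsIntegral ℤ ((b : K) * x j)) (w : List ι) {P : MvPolynomial σ K}
    (hP : P ∈ integerPolynomials σ K) {E : ℕ} (hE : P.totalDegree + w.length ≤ E) :
    IsIntegral ℤ (((b ^ (1 + g) : ℕ) : K) ^ E * eval x (wordDer p w P)) := by
  have hdeg : (wordDer p w P).totalDegree ≤ P.totalDegree + g * E :=
    (totalDegree_wordDer_le hg w P).trans (by gcongr; lia)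
  have hint := isIntegral_pow_mul_eval hx (natCast_pow_smul_wordDer_mem hp w hP)
    ((totalDegree_smul_le _ _).trans hdeg)
  rw [smul_eval, ← mul_assoc, ← pow_add] at hint
  obtain ⟨a, ha⟩ : ∃ a, (1 + g) * E = a + (P.totalDegree + g * E + w.length) :=
    ⟨E - (P.totalDegree + w.length), by rw [add_mul, one_mul]; lia⟩
  rw [Nat.cast_pow, ← pow_mul, ha, pow_add, mul_assoc]
  exact ((isIntegral_natCast b).pow _).mul hint

end Denominators

section JetBound

variable {ι κ σ K : Type*} [Field K]

theorem exists_nat_mul_isIntegral [NumberField K] (s : Finset K) :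
    ∃ b : ℕ, 0 < b ∧ ∀ x ∈ s, IsIntegral ℤ ((b : K) * x) := by
  obtain ⟨y, hy, hint⟩ := exists_integral_multiples ℤ ℚ s
  refine ⟨y.natAbs, Int.natAbs_pos.2 hy, fun x hx => ?_⟩
  have hyx := hint x hx
  rw [zsmul_eq_mul] at hyx
  rcases Int.natAbs_eq y with h | h
  · rwa [h, Int.cast_natCast] at hyx
  · rw [h, Int.cast_neg, Int.cast_natCast, neg_mul] at hyx
    simpa using hyx.neg

theorem exists_common_denominator [NumberField K] {α β : Type*} [Finite α] [Finite β]
    (q : α → MvPolynomial σ K) (x : β → K) :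
    ∃ b : ℕ, 0 < b ∧ (∀ a, (b : K) • q a ∈ integerPolynomials σ K) ∧
      ∀ j, IsIntegral ℤ ((b : K) * x j) := by
  classical
  have := Fintype.ofFinite α
  have := Fintype.ofFinite β
  obtain ⟨b, hb, hint⟩ := exists_nat_mul_isIntegral
    ((univ.biUnion fun a => (q a).support.image fun m => coeff m (q a)) ∪ univ.image x)
  refine ⟨b, hb, fun a => mem_integerPolynomials.2 fun m => ?_, fun j =>
    hint _ (mem_union_right _ (mem_image_of_mem _ (mem_univ j)))⟩
  rw [coeff_smul, smul_eq_mul]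
  by_cases hm : m ∈ (q a).support
  · exact hint _ (mem_union_left _
      (mem_biUnion.2 ⟨a, mem_univ _, mem_image_of_mem _ hm⟩))
  · rw [notMem_support_iff.1 hm, mul_zero]
    exact isIntegral_zero

theorem exists_one_le_forall_le {α : Type*} [Finite α] (u : α → ℝ) :
    ∃ A : ℝ, 1 ≤ A ∧ ∀ a, u a ≤ A := by
  obtain ⟨A, hA⟩ := (Set.finite_range u).bddAbove
  exact ⟨max 1 A, le_max_left _ _, fun a => (hA ⟨a, rfl⟩).trans (le_max_right _ _)⟩

/-- Arithmetic control of the derivatives of integral polynomials `P` along words `w` at the points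
`x i`: as soon as `deg P + |w| ≤ E`, the integer `b ^ E` is a denominator of the value and
`B ^ E * E ^ |w|` times the size of `P` bounds its conjugates. -/
structure JetBound (p : ι → σ → MvPolynomial σ K) (x : κ → σ → K) (b : ℕ) (B : ℝ) : Prop where
  pos : 0 < b
  one_le : 1 ≤ B
  isIntegral : ∀ (i : κ) (w : List ι), ∀ P ∈ integerPolynomials σ K, ∀ E : ℕ,
    P.totalDegree + w.length ≤ E → IsIntegral ℤ ((b : K) ^ E * eval (x i) (wordDer p w P))
  norm_le : ∀ (φ : K →+* ℂ) (i : κ) (w : List ι) (P : MvPolynomial σ K) (E : ℕ),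
    P.totalDegree + w.length ≤ E → ‖φ (eval (x i) (wordDer p w P))‖ ≤
      B ^ E * (E : ℝ) ^ w.length * coeffNorm 1 (map φ P)

theorem exists_jetBound [NumberField K] [Finite ι] [Finite κ] [Finite σ]
    (p : ι → σ → MvPolynomial σ K) (x : κ → σ → K) : ∃ b B, JetBound p x b B := by
  have := Fintype.ofFinite σ
  obtain ⟨b, hb, hbp, hbx⟩ := exists_common_denominator
    (fun a : ι × σ => p a.1 a.2) fun a : κ × σ => x a.1 a.2
  obtain ⟨g, hg⟩ := (Set.finite_range fun a : ι × σ => (p a.1 a.2).totalDegree).bddAbove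
  have hg : ∀ ν i, (p ν i).totalDegree ≤ g := fun ν i => hg ⟨(ν, i), rfl⟩
  obtain ⟨A, hA1, hA⟩ := exists_one_le_forall_le fun a : (K →+* ℂ) × ι × σ =>
    coeffNorm 1 (map a.1 (p a.2.1 a.2.2))
  obtain ⟨T, hT1, hT⟩ := exists_one_le_forall_le fun a : (K →+* ℂ) × κ × σ => ‖a.1 (x a.2.1 a.2.2)‖
  set H : ℝ := max 1 (Fintype.card σ * A * (1 + g))
  refine ⟨b ^ (1 + g), H * T ^ (1 + g), by positivity,
    one_le_mul_of_one_le_of_one_le (le_max_left _ _) (one_le_pow₀ hT1),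
    fun i w P hP E hE => isIntegral_pow_mul_eval_wordDer hg (fun ν j => hbp (ν, j))
      (fun j => hbx (i, j)) w hP hE,
    fun φ i w P E hE => norm_map_eval_wordDer_le φ (zero_le_one.trans hA1)
      (fun ν j => hA (φ, ν, j)) hg hT1 (fun j => hT (φ, i, j)) (le_max_left _ _)
      (le_max_right _ _) w P hE⟩

end JetBound

/-! ### The auxiliary polynomial -/

section House

variable {K : Type*} [Field K] [NumberField K]

theorem house_le_of_forall {y : K} {A : ℝ} (h : ∀ φ : K →+* ℂ, ‖φ y‖ ≤ A) : house y ≤ A := by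
  rw [house, pi_norm_le_iff_of_nonneg ((norm_nonneg _).trans (h (Classical.arbitrary _)))]
  exact h

theorem one_le_norm_mul_house_pow {y : K} (hy : IsIntegral ℤ y) (hy0 : y ≠ 0) (φ : K →+* ℂ) :
    1 ≤ ‖φ y‖ * house y ^ (Module.finrank ℚ K - 1) := by
  obtain ⟨z, hz⟩ := IsIntegrallyClosed.isIntegral_iff.1 (Algebra.isIntegral_norm ℚ hy)
  have hz0 : z ≠ 0 := by
    rintro rfl
    exact hy0 (Algebra.norm_eq_zero_iff.1 (by rw [← hz, map_zero]))
  have hnorm : (1 : ℝ) ≤ ‖Algebra.norm ℚ y‖ := by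
    rw [← hz, eq_intCast, ← Rat.norm_cast_real, Rat.cast_intCast, Real.norm_eq_abs]
    exact_mod_cast Int.one_le_abs hz0
  exact hnorm.trans (norm_norm_le_norm_mul_house_pow y φ)

variable (K) in
theorem exists_siegel : ∃ c : ℝ, 1 ≤ c ∧ ∀ (α β : Type) [Fintype α] [Fintype β],
    0 < Fintype.card α → Fintype.card β = 2 * Fintype.card α →
    ∀ (a : Matrix α β (𝓞 K)) (A : ℝ), 1 ≤ A → (∀ i j, house (a i j : K) ≤ A) →
    ∃ ξ : β → 𝓞 K, ξ ≠ 0 ∧ a.mulVec ξ = 0 ∧ ∀ j, house (ξ j : K) ≤ c * Fintype.card β * A := by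
  classical
  obtain ⟨c, hc⟩ : ∃ c : ℝ, ∀ (α β : Type) [Fintype α] [Fintype β], 0 < Fintype.card α →
      Fintype.card α < Fintype.card β → ∀ (a : Matrix α β (𝓞 K)) (A : ℝ), a ≠ 0 →
      (∀ i j, house (a i j : K) ≤ A) →
      ∃ ξ : β → 𝓞 K, ξ ≠ 0 ∧ a.mulVec ξ = 0 ∧ ∀ j, house (ξ j : K) ≤ c * (c * Fintype.card β * A) ^
        ((Fintype.card α : ℝ) / (Fintype.card β - Fintype.card α)) :=
    ⟨_, fun α β _ _ h0 hαβ a A ha hA =>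
      house.exists_ne_zero_int_vec_house_le K a ha h0 hαβ rfl hA rfl⟩
  refine ⟨max 1 (c * c), le_max_left _ _, fun α β _ _ h0 hαβ a A hA1 hA => ?_⟩
  rcases eq_or_ne a 0 with rfl | ha
  · have hβ : 0 < Fintype.card β := by lia
    have := Fintype.card_pos_iff.1 hβ
    refine ⟨1, one_ne_zero, Matrix.zero_mulVec 1, fun j => ?_⟩
    have hhouse : house (((1 : β → 𝓞 K) j : 𝓞 K) : K) = 1 := by
      simpa using house_intCast (K := K) 1
    rw [hhouse]
    exact one_le_mul_of_one_le_of_one_le (one_le_mul_of_one_le_of_one_le (le_max_left _ _)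
      (by exact_mod_cast hβ)) hA1
  · obtain ⟨ξ, hξ0, hξ, hξA⟩ := hc α β h0 (by lia) a A ha hA
    refine ⟨ξ, hξ0, hξ, fun j => (hξA j).trans ?_⟩
    have hexponent : (Fintype.card α : ℝ) / (Fintype.card β - Fintype.card α) = 1 := by
      rw [hαβ, Nat.cast_mul, Nat.cast_two, two_mul, add_sub_cancel_right,
        div_self (by exact_mod_cast h0.ne')]
    rw [hexponent, Real.rpow_one, ← mul_assoc, ← mul_assoc]
    gcongr
    exact le_max_right _ _

end House

section IntegralCombination

variable {β σ : Type*} [Fintype β] {K : Type*} [Field K] (e : β → σ →₀ ℕ) (ξ : β → 𝓞 K)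

/-- The polynomial `∑ ξ j X ^ e j` with algebraic integer coefficients. -/
noncomputable def integralCombination : MvPolynomial σ K :=
  ∑ j, monomial (e j) (ξ j : K)

theorem integralCombination_mem : integralCombination e ξ ∈ integerPolynomials σ K :=
  Subring.sum_mem _ fun j _ => ⟨monomial (e j) (ξ j), map_monomial ..⟩

variable {e ξ}

theorem integralCombination_ne_zero (he : Function.Injective e) (hξ : ξ ≠ 0) :
    integralCombination e ξ ≠ 0 := fun h => hξ <| funext fun j => by
  classical
  have hcoeff := congrArg (coeff (e j)) h
  rw [integralCombination, coeff_sum, coeff_zero, sum_eq_single j (fun i _ hij => by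
    rw [coeff_monomial, if_neg (he.ne hij)]) (by simp), coeff_monomial, if_pos rfl] at hcoeff
  exact RingOfIntegers.ext hcoeff

theorem totalDegree_integralCombination_le {D : ℕ} (he : ∀ j, (e j).degree ≤ D) :
    (integralCombination e ξ).totalDegree ≤ D :=
  totalDegree_finsetSum_le fun j _ => (totalDegree_monomial_le _ _).trans (he j)

theorem eval_wordDer_integralCombination {ι : Type*} (p : ι → σ → MvPolynomial σ K) (x : σ → K)
    (w : List ι) : eval x (wordDer p w (integralCombination e ξ)) =
      ∑ j, eval x (wordDer p w (monomial (e j) 1)) * ξ j := by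
  rw [integralCombination, map_sum, map_sum]
  refine sum_congr rfl fun j _ => ?_
  rw [← mul_one (ξ j : K), ← smul_eq_mul, ← smul_monomial, map_smul, smul_eval, smul_eq_mul,
    mul_one, mul_comm]

theorem coeffNorm_map_integralCombination_le [NumberField K] {A : ℝ}
    (hA : ∀ j, house (ξ j : K) ≤ A) (φ : K →+* ℂ) :
    coeffNorm 1 (map φ (integralCombination e ξ)) ≤ Fintype.card β * A := by
  rw [integralCombination, map_sum]
  refine (coeffNorm_sum_le zero_le_one _ _).trans ((sum_le_card_nsmul _ _ A fun j _ => ?_).trans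
    (by rw [card_univ, nsmul_eq_mul]))
  rw [map_monomial, coeffNorm_monomial, one_pow, mul_one]
  exact (norm_embedding_le_house _ φ).trans (hA j)

end IntegralCombination

section Auxiliary

variable {ι κ σ K : Type*} [Field K] [NumberField K] {p : ι → σ → MvPolynomial σ K}
  {x : κ → σ → K} {b : ℕ} {B : ℝ}

theorem JetBound.house_le (h : JetBound p x b B) (i : κ) (w : List ι) {P : MvPolynomial σ K}
    {E : ℕ} (hE : P.totalDegree + w.length ≤ E) {M : ℝ}
    (hM : ∀ φ : K →+* ℂ, coeffNorm 1 (map φ P) ≤ M) :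
    house ((b : K) ^ E * eval (x i) (wordDer p w P)) ≤
      (b * B) ^ E * (E : ℝ) ^ w.length * M := by
  have hB : 0 ≤ B := zero_le_one.trans h.one_le
  refine house_le_of_forall fun φ => ?_
  rw [map_mul, map_pow, map_natCast, norm_mul, norm_pow, Complex.norm_natCast, mul_pow, mul_assoc,
    mul_assoc, ← mul_assoc (B ^ E)]
  gcongr
  exact (h.norm_le φ i w P E hE).trans (by gcongr; exact hM φ)

theorem JetBound.exists_integralCombination (h : JetBound p x b B) : ∃ c : ℝ, 1 ≤ c ∧
    ∀ (α β : Type) [Fintype α] [Fintype β], 0 < Fintype.card α →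
    Fintype.card β = 2 * Fintype.card α → ∀ (i : α → κ) (w : α → List ι) (e : β → σ →₀ ℕ)
    (E m : ℕ), 0 < E → (∀ a j, (e j).degree + (w a).length ≤ E) → (∀ a, (w a).length ≤ m) →
    ∃ ξ : β → 𝓞 K, ξ ≠ 0 ∧
      (∀ a, eval (x (i a)) (wordDer p (w a) (integralCombination e ξ)) = 0) ∧
      ∀ j, house (ξ j : K) ≤ c * Fintype.card β * ((b * B) ^ E * (E : ℝ) ^ m) := by
  obtain ⟨c, hc1, hc⟩ := exists_siegel K
  refine ⟨c, hc1, fun α β _ _ hα hαβ i w e E m hE0 hE hm => ?_⟩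
  have hE1 : (1 : ℝ) ≤ E := by exact_mod_cast hE0
  have hbB : 1 ≤ b * B := one_le_mul_of_one_le_of_one_le (by exact_mod_cast h.pos) h.one_le
  have hdeg a j : (monomial (e j) (1 : K)).totalDegree + (w a).length ≤ E :=
    (Nat.add_le_add_right (totalDegree_monomial_le _ _) _).trans (hE a j)
  have hmem j : monomial (e j) (1 : K) ∈ integerPolynomials σ K :=
    ⟨monomial (e j) 1, by rw [map_monomial, map_one]⟩
  let jet : Matrix α β (𝓞 K) := fun a j =>
    ⟨(b : K) ^ E * eval (x (i a)) (wordDer p (w a) (monomial (e j) 1)),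
      h.isIntegral (i a) (w a) _ (hmem j) E (hdeg a j)⟩
  have hjet a j : house (jet a j : K) ≤ (b * B) ^ E * (E : ℝ) ^ m := by
    refine (h.house_le (i a) (w a) (hdeg a j) (M := 1) fun φ => ?_).trans ?_
    · rw [map_monomial, map_one, coeffNorm_monomial, norm_one, one_pow, mul_one]
    · rw [mul_one]
      gcongr
      exact hm a
  obtain ⟨ξ, hξ0, hξ, hξA⟩ := hc α β hα hαβ jet _
    (one_le_mul_of_one_le_of_one_le (one_le_pow₀ hbB) (one_le_pow₀ hE1)) hjet
  refine ⟨ξ, hξ0, fun a => ?_, hξA⟩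
  have hrow : algebraMap (𝓞 K) K (∑ j, jet a j * ξ j) = 0 :=
    (congrArg (algebraMap (𝓞 K) K) (congrFun hξ a)).trans (map_zero _)
  have hscaled : (b : K) ^ E * eval (x (i a)) (wordDer p (w a) (integralCombination e ξ)) = 0 := by
    rw [eval_wordDer_integralCombination, mul_sum, ← hrow, map_sum]
    refine sum_congr rfl fun j _ => ?_
    rw [map_mul, ← mul_assoc]
    rfl
  exact (mul_eq_zero.1 hscaled).resolve_left (pow_ne_zero _ (by exact_mod_cast h.pos.ne'))

end Auxiliary

section SortedWord

variable {ι : Type*}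

theorem exists_injective_finsupp {σ : Type*} [Fintype σ] {q L : ℕ} (h : q ≤ L ^ Fintype.card σ) :
    ∃ e : Fin q → σ →₀ ℕ, Function.Injective e ∧ ∀ j, (e j).degree ≤ Fintype.card σ * L := by
  classical
  obtain ⟨g⟩ : Nonempty (Fin q ↪ (σ → Fin L)) :=
    Function.Embedding.nonempty_of_card_le (by simpa using h)
  refine ⟨fun j => Finsupp.equivFunOnFinite.symm fun i => (g j i : ℕ), fun j j' hj => ?_,
    fun j => ?_⟩
  · exact g.injective (funext fun i => Fin.ext (DFunLike.congr_fun hj i))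
  · rw [Finsupp.degree_eq_sum]
    exact sum_le_card_nsmul _ _ L fun i _ => (g j i).isLt.le

/-- A list containing each letter `ν` exactly `τ ν` times. -/
noncomputable def sortedWord [Fintype ι] (τ : ι → ℕ) : List ι :=
  (∑ ν, Multiset.replicate (τ ν) ν).toList

theorem length_sortedWord [Fintype ι] (τ : ι → ℕ) : (sortedWord τ).length = ∑ ν, τ ν := by
  rw [sortedWord, Multiset.length_toList, Multiset.card_sum]
  simp only [Multiset.card_replicate]

theorem perm_sortedWord [Fintype ι] [DecidableEq ι] (w : List ι) :
    w.Perm (sortedWord fun ν => w.count ν) := by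
  rw [← Multiset.coe_eq_coe, sortedWord, Multiset.coe_toList]
  ext ν
  rw [Multiset.count_sum']
  simp [Multiset.count_replicate]

theorem eval_wordDer_eq_zero_of_sortedWord [Fintype ι] {σ R : Type*} [CommRing R]
    {p : ι → σ → MvPolynomial σ R}
    (hcomm : ∀ ν μ P, mkDerivation R (p ν) (mkDerivation R (p μ) P) =
      mkDerivation R (p μ) (mkDerivation R (p ν) P))
    {k : ℕ} {P : MvPolynomial σ R} {x : σ → R}
    (h : ∀ τ : ι → Fin k, eval x (wordDer p (sortedWord fun ν => τ ν) P) = 0)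
    (w : List ι) (hw : w.length < k) : eval x (wordDer p w P) = 0 := by
  classical
  rw [wordDer_perm hcomm (perm_sortedWord w)]
  exact h fun ν => ⟨w.count ν, List.count_le_length.trans_lt hw⟩

end SortedWord

section Parameters

variable {n d N b : ℕ} {B : ℝ}

theorem auxiliary_size_le {k L : ℕ} {c : ℝ} (hd : 0 < d) (hN : 0 < N) (hk : 0 < k)
    (hbB : 1 ≤ b * B) (hc : 1 ≤ c) (hL : L ≤ 2 * N * k) :
    c * (2 * (N * k ^ n)) ^ 2 * ((b * B) ^ (d * L + n * k) * (d * L + n * k) ^ (n * k)) ≤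
      (c * (4 * N ^ 2) * 4 ^ n * (b * B) ^ (2 * d * N + n) * (2 * d * N + n) ^ n) ^ k *
        (k : ℝ) ^ (n * k) := by
  have hN1 : (1 : ℝ) ≤ N := by exact_mod_cast hN
  have hE : d * L + n * k ≤ (2 * d * N + n) * k := by
    calc d * L + n * k ≤ d * (2 * N * k) + n * k := by gcongr
      _ = _ := by ring
  have hE' : (d * L + n * k : ℝ) ≤ (2 * d * N + n) * k := by exact_mod_cast hE
  have hcpow : c ≤ c ^ k := le_self_pow₀ hc hk.ne'
  have hNpow : (4 * (N : ℝ) ^ 2) ≤ (4 * N ^ 2) ^ k := le_self_pow₀ (by nlinarith) hk.ne'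
  have hkpow : ((k : ℝ) ^ n) ^ 2 ≤ (4 ^ n) ^ k := by
    calc ((k : ℝ) ^ n) ^ 2 ≤ ((2 ^ k) ^ n) ^ 2 := by
          gcongr
          exact_mod_cast Nat.lt_two_pow_self.le
      _ = ((2 ^ 2) ^ n) ^ k := by
          rw [← pow_mul, ← pow_mul, ← pow_mul, ← pow_mul]
          congr 1
          ring
      _ = (4 ^ n) ^ k := by norm_num
  have hbpow : (b * B) ^ (d * L + n * k) ≤ ((b * B) ^ (2 * d * N + n)) ^ k := by
    rw [← pow_mul]
    exact pow_le_pow_right₀ hbB hE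
  have : 0 ≤ c := zero_le_one.trans hc
  have : 0 ≤ b * B := zero_le_one.trans hbB
  calc c * (2 * (N * k ^ n)) ^ 2 * ((b * B) ^ (d * L + n * k) * (d * L + n * k) ^ (n * k))
      = c * (4 * N ^ 2) * ((k : ℝ) ^ n) ^ 2 *
          ((b * B) ^ (d * L + n * k) * (d * L + n * k) ^ (n * k)) := by ring
    _ ≤ c ^ k * (4 * N ^ 2) ^ k * (4 ^ n) ^ k *
          (((b * B) ^ (2 * d * N + n)) ^ k * ((2 * d * N + n) * k) ^ (n * k)) := by gcongr
    _ = _ := by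
      rw [mul_pow (2 * (d : ℝ) * N + n), pow_mul (2 * (d : ℝ) * N + n)]
      simp only [mul_pow]
      ring

theorem two_mul_card_jets_le {X : ℕ} (hN : 0 < N) (hX : 0 < X) (hnd : n < d) :
    2 * (N * (X ^ (n + 1)) ^ n) ≤ (2 * N * X ^ n) ^ d := by
  calc 2 * (N * (X ^ (n + 1)) ^ n) = 2 * N * (X ^ n) ^ (n + 1) := by ring
    _ ≤ (2 * N) ^ (n + 1) * (X ^ n) ^ (n + 1) := by
      gcongr
      exact Nat.le_self_pow n.succ_ne_zero _
    _ = (2 * N * X ^ n) ^ (n + 1) := (mul_pow _ _ _).symm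
    _ ≤ (2 * N * X ^ n) ^ d := Nat.pow_le_pow_right (by positivity) hnd

variable {K : Type*} [Field K] [NumberField K] {p : Fin n → Fin d → MvPolynomial (Fin d) K}
  {x : Fin N → Fin d → K}

theorem JetBound.exists_auxiliary_of_le (h : JetBound p x b B) (hd : 0 < d) (hN : 0 < N)
    (hcomm : ∀ ν μ P, mkDerivation K (p ν) (mkDerivation K (p μ) P) =
      mkDerivation K (p μ) (mkDerivation K (p ν) P)) :
    ∃ c : ℝ, 1 ≤ c ∧ ∀ k L : ℕ, 0 < k → 2 * (N * k ^ n) ≤ L ^ d →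
      ∃ P ∈ integerPolynomials (Fin d) K, P ≠ 0 ∧ P.totalDegree ≤ d * L ∧
        (∀ i (w : List (Fin n)), w.length < k → eval (x i) (wordDer p w P) = 0) ∧
        ∀ φ : K →+* ℂ, coeffNorm 1 (map φ P) ≤ c * (2 * (N * k ^ n)) ^ 2 *
          ((b * B) ^ (d * L + n * k) * (d * L + n * k) ^ (n * k)) := by
  obtain ⟨c, hc1, hc⟩ := h.exists_integralCombination
  refine ⟨c, hc1, fun k L hk hL => ?_⟩
  have hL0 : 0 < L := Nat.pos_of_ne_zero fun h0 => by
    rw [h0, zero_pow hd.ne'] at hL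
    exact hL.not_gt (by positivity)
  obtain ⟨e, he, hedeg⟩ := exists_injective_finsupp (σ := Fin d) (q := 2 * (N * k ^ n)) (L := L)
    (by rwa [Fintype.card_fin])
  rw [Fintype.card_fin] at hedeg
  have hlen (τ : Fin n → Fin k) : (sortedWord fun ν => (τ ν : ℕ)).length ≤ n * k := by
    rw [length_sortedWord]
    exact (sum_le_card_nsmul _ _ k fun ν _ => (τ ν).isLt.le).trans (by simp)
  obtain ⟨ξ, hξ0, hξ, hξA⟩ := hc (Fin N × (Fin n → Fin k)) (Fin (2 * (N * k ^ n)))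
    (by simp only [Fintype.card_prod, Fintype.card_fin, Fintype.card_fun]; positivity)
    (by simp) Prod.fst (fun a => sortedWord fun ν => (a.2 ν : ℕ)) e (d * L + n * k) (n * k)
    (by positivity) (fun a j => Nat.add_le_add (hedeg j) (hlen a.2)) fun a => hlen a.2
  refine ⟨integralCombination e ξ, integralCombination_mem e ξ, integralCombination_ne_zero he hξ0,
    totalDegree_integralCombination_le hedeg, fun i =>
    eval_wordDer_eq_zero_of_sortedWord hcomm fun τ => hξ (i, τ), fun φ =>
    (coeffNorm_map_integralCombination_le hξA φ).trans_eq ?_⟩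
  rw [Fintype.card_fin]
  push_cast
  ring

theorem JetBound.exists_auxiliary (h : JetBound p x b B) (hnd : n < d) (hN : 0 < N)
    (hcomm : ∀ ν μ P, mkDerivation K (p ν) (mkDerivation K (p μ) P) =
      mkDerivation K (p μ) (mkDerivation K (p ν) P)) :
    ∃ V : ℝ, 1 ≤ V ∧ ∀ X : ℕ, 0 < X →
      ∃ P ∈ integerPolynomials (Fin d) K, P ≠ 0 ∧ P.totalDegree ≤ d * (2 * N * X ^ n) ∧
        (∀ i (w : List (Fin n)), w.length < X ^ (n + 1) → eval (x i) (wordDer p w P) = 0) ∧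
        ∀ φ : K →+* ℂ, coeffNorm 1 (map φ P) ≤
          V ^ X ^ (n + 1) * ((X ^ (n + 1) : ℕ) : ℝ) ^ (n * X ^ (n + 1)) := by
  have hd : 0 < d := by lia
  obtain ⟨c, hc1, hc⟩ := h.exists_auxiliary_of_le hd hN hcomm
  have hN1 : (1 : ℝ) ≤ N := by exact_mod_cast hN
  have hbB : 1 ≤ b * B := one_le_mul_of_one_le_of_one_le (by exact_mod_cast h.pos) h.one_le
  have hdN : (1 : ℝ) ≤ 2 * d * N + n := by exact_mod_cast (by nlinarith : 1 ≤ 2 * d * N + n)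
  refine ⟨c * (4 * N ^ 2) * 4 ^ n * (b * B) ^ (2 * d * N + n) * (2 * d * N + n) ^ n, ?_,
    fun X hX => ?_⟩
  · exact one_le_mul_of_one_le_of_one_le (one_le_mul_of_one_le_of_one_le
      (one_le_mul_of_one_le_of_one_le (one_le_mul_of_one_le_of_one_le hc1 (by nlinarith))
        (one_le_pow₀ (by norm_num))) (one_le_pow₀ hbB)) (one_le_pow₀ hdN)
  · obtain ⟨P, hP, hP0, hdeg, hvan, hnorm⟩ := hc (X ^ (n + 1)) (2 * N * X ^ n) (by positivity)
      (two_mul_card_jets_le hN hX hnd)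
    refine ⟨P, hP, hP0, hdeg, hvan, fun φ => (hnorm φ).trans ?_⟩
    exact_mod_cast auxiliary_size_le hd hN (pow_pos hX _) hbB hc1
      (Nat.mul_le_mul_left _ (Nat.pow_le_pow_right hX n.le_succ))

end Parameters

/-! ### The first nonvanishing derivative -/

section FirstDerivative

variable {n : ℕ} {ι σ R : Type*} [CommRing R] [Algebra R ℂ] {f : (Fin n → ℂ) → σ → ℂ}
  {p : Fin n → σ → MvPolynomial σ R} {s : ι → Fin n → ℂ}

theorem norm_aeval_le_of_norm_le [Finite σ] {P : MvPolynomial σ R} {D : ℕ}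
    (hD : P.totalDegree ≤ D) {H T : ℝ} (hT : 1 ≤ T)
    (hH : coeffNorm 1 (map (algebraMap R ℂ) P) ≤ H) {y : σ → ℂ} (hy : ∀ i, ‖y i‖ ≤ T) :
    ‖aeval y P‖ ≤ T ^ D * H := by
  have := Fintype.ofFinite σ
  rw [aeval_def, ← eval_map]
  refine (norm_eval_le_coeffNorm hy _).trans
    ((coeffNorm_le_pow_mul hT ((totalDegree_map_le _ P).trans hD)).trans ?_)
  gcongr

theorem IsDifferentialSystem.exists_minimal_word (hf : IsDifferentialSystem f p)
    (hind : ∀ P : MvPolynomial σ R, (∀ z, aeval (f z) P = 0) → P = 0) [Nonempty ι]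
    (s : ι → Fin n → ℂ) {P : MvPolynomial σ R} (hP : P ≠ 0) :
    ∃ w i, aeval (f (s i)) (wordDer p w P) ≠ 0 ∧
      ∀ j v, v.length < w.length → aeval (f (s j)) (wordDer p v P) = 0 := by
  classical
  have hex : ∃ m, ∃ w : List (Fin n), ∃ i, w.length = m ∧
      aeval (f (s i)) (wordDer p w P) ≠ 0 := by
    by_contra! h
    exact hP (hind P (hf.aeval_eq_zero_of_wordDer (s := s (Classical.arbitrary ι)) fun w =>
      h _ w _ rfl))
  obtain ⟨w, i, hw, hne⟩ := Nat.find_spec hex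
  refine ⟨w, i, hne, fun j v hv => ?_⟩
  by_contra h
  exact Nat.find_min hex (hw ▸ hv) ⟨v, j, rfl, h⟩

theorem SchwarzBound.exists_norm_aeval_wordDer_le [Finite ι] {l c : ℕ} (hs : SchwarzBound s l c)
    (hf : IsDifferentialSystem f p) : ∃ C ≥ 1, ∀ i P (w : List (Fin n)), 0 < w.length →
      (∀ j v, v.length < w.length → aeval (f (s j)) (wordDer p v P) = 0) →
      ∀ R ≥ C, ∀ M, (∀ z, ‖z‖ ≤ R → ‖aeval (f z) P‖ ≤ M) →
      ‖aeval (f (s i)) (wordDer p w P)‖ ≤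
        C ^ (2 * w.length) * M / R ^ (c * l * (w.length / l)) * (w.length : ℝ) ^ w.length := by
  obtain ⟨T, -, hT⟩ := exists_one_le_forall_le fun i => ‖s i‖
  obtain ⟨C, hC1, hC⟩ := hs (T + 1)
  refine ⟨C, hC1, fun i P w hw hvan R hR M hM => ?_⟩
  have hlen : (0 : ℝ) < w.length := by exact_mod_cast hw
  have hR0 : 0 < R := by linarith
  have hM0 : 0 ≤ M := (norm_nonneg _).trans (hM 0 (by rw [norm_zero]; exact hR0.le))
  have hcauchy := hf.norm_aeval_wordDer_le P (inv_pos.2 hlen) w (s := s i)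
    (M := C ^ (2 * w.length) * M / R ^ (c * l * (w.length / l))) fun z hz => by
      rw [mul_inv_cancel₀ hlen.ne'] at hz
      have hzT : ‖z‖ ≤ T + 1 := by linarith [norm_le_norm_add_norm_sub' z (s i), hT i]
      refine (hC (w.length / l) _ (hf.differentiable_aeval P) (fun j =>
        hf.vanishesToOrder_aeval fun v hv => hvan j v (hv.trans_le (Nat.mul_div_le _ _)))
        R hR M hM z hzT).trans ?_
      have : w.length / l + 1 ≤ 2 * w.length := by
        have := Nat.div_le_self w.length l
        lia
      gcongr
  rwa [inv_pow, div_inv_eq_mul] at hcauchy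

theorem JetBound.one_le_norm_eval_mul_pow {ι κ σ K : Type*} [Field K] [NumberField K]
    {p : ι → σ → MvPolynomial σ K} {x : κ → σ → K} {b : ℕ} {B : ℝ} (h : JetBound p x b B) {i : κ}
    {w : List ι} {P : MvPolynomial σ K} (hP : P ∈ integerPolynomials σ K)
    (hne : eval (x i) (wordDer p w P) ≠ 0) {E : ℕ} (hE : P.totalDegree + w.length ≤ E) {M : ℝ}
    (hM : ∀ φ : K →+* ℂ, coeffNorm 1 (map φ P) ≤ M) (φ : K →+* ℂ) :
    1 ≤ (b : ℝ) ^ E * ‖φ (eval (x i) (wordDer p w P))‖ *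
      ((b * B) ^ E * (E : ℝ) ^ w.length * M) ^ (Module.finrank ℚ K - 1) := by
  have hliouville := one_le_norm_mul_house_pow (h.isIntegral i w P hP E hE)
    (mul_ne_zero (pow_ne_zero _ (by exact_mod_cast h.pos.ne')) hne) φ
  rw [map_mul, map_pow, map_natCast, norm_mul, norm_pow, Complex.norm_natCast] at hliouville
  refine hliouville.trans ?_
  gcongr
  exacts [house_nonneg _, h.house_le i w hE hM]

end FirstDerivative

section Comparison

theorem le_of_pow_mul_div_le {m l a : ℕ} {W : ℝ} (hm : 0 < m) (hl : 0 < l) (hW : 0 ≤ W)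
    (hlm : (a + 2) * l ≤ m)
    (h : (m : ℝ) ^ ((a + 2) * l * (m / l)) ≤ W ^ m * (m : ℝ) ^ (a * m)) : (m : ℝ) ≤ W := by
  have hm1 : (1 : ℝ) ≤ m := by exact_mod_cast hm
  have hdiv : m ≤ l * (m / l) + l := by
    have := Nat.div_add_mod m l
    have := Nat.mod_lt m hl
    lia
  have hexponent : (a + 2) * m ≤ (a + 2) * l * (m / l) + m := by
    calc (a + 2) * m ≤ (a + 2) * (l * (m / l) + l) := by gcongr
      _ = (a + 2) * l * (m / l) + (a + 2) * l := by ring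
      _ ≤ _ := by gcongr
  have hcancel : (m : ℝ) ^ (a * m + m) * (m : ℝ) ^ m ≤ (m : ℝ) ^ (a * m + m) * W ^ m := by
    calc (m : ℝ) ^ (a * m + m) * (m : ℝ) ^ m = (m : ℝ) ^ ((a + 2) * m) := by ring
      _ ≤ (m : ℝ) ^ ((a + 2) * l * (m / l) + m) := pow_le_pow_right₀ hm1 hexponent
      _ = (m : ℝ) ^ ((a + 2) * l * (m / l)) * (m : ℝ) ^ m := pow_add _ _ _
      _ ≤ W ^ m * (m : ℝ) ^ (a * m) * (m : ℝ) ^ m := by gcongr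
      _ = _ := by ring
  exact le_of_pow_le_pow_left₀ hm.ne' hW (le_of_mul_le_mul_left hcancel (by positivity))

theorem le_of_liouville_of_schwarz {n δ a e m l : ℕ} {b C H V U Y : ℝ} (ha : a = (n + 1) * (δ + 1))
    (hm : 0 < m) (hl : 0 < l) (hlm : (a + 2) * l ≤ m) (hb : 0 ≤ b) (hH : 0 ≤ H)
    (hV : 0 ≤ V) (hU : 0 ≤ U)
    (hlow : 1 ≤ b ^ (e * m) * Y * (U ^ m * (m : ℝ) ^ ((n + 1) * m)) ^ δ)
    (hup : Y ≤ C ^ (2 * m) * (H ^ m * (V ^ m * (m : ℝ) ^ (n * m))) /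
      (m : ℝ) ^ ((a + 2) * l * (m / l)) * (m : ℝ) ^ m) :
    (m : ℝ) ≤ b ^ e * C ^ 2 * V * H * U ^ δ := by
  refine le_of_pow_mul_div_le hm hl (by positivity) hlm ?_
  set A : ℝ := (m : ℝ) ^ ((a + 2) * l * (m / l))
  have hA : 0 < A := by positivity
  calc A ≤ A * (b ^ (e * m) * Y * (U ^ m * (m : ℝ) ^ ((n + 1) * m)) ^ δ) :=
        le_mul_of_one_le_right hA.le hlow
    _ ≤ A * (b ^ (e * m) * (C ^ (2 * m) * (H ^ m * (V ^ m * (m : ℝ) ^ (n * m))) / A *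
          (m : ℝ) ^ m) * (U ^ m * (m : ℝ) ^ ((n + 1) * m)) ^ δ) := by gcongr
    _ = b ^ (e * m) * (C ^ (2 * m) * (H ^ m * (V ^ m * (m : ℝ) ^ (n * m))) * (m : ℝ) ^ m) *
          (U ^ m * (m : ℝ) ^ ((n + 1) * m)) ^ δ := by field_simp
    _ = (b ^ e * C ^ 2 * V * H * U ^ δ) ^ m * (m : ℝ) ^ (a * m) := by
        rw [ha]
        simp only [mul_pow, ← pow_mul]
        ring

theorem exp_pow_le_of_pow_eq {n D X m ρ : ℕ} {R : ℝ} (hR : 0 ≤ R) (hX : X ^ (n + 1) ≤ m)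
    (hRm : R ^ (ρ * (n + 1)) = m) :
    Real.exp (R ^ ρ) ^ (D * X ^ n) ≤ Real.exp D ^ m := by
  have hXR : (X : ℝ) ≤ R ^ ρ := by
    refine le_of_pow_le_pow_left₀ n.succ_ne_zero (by positivity) ?_
    rw [← pow_mul, hRm]
    exact_mod_cast hX
  rw [← Real.exp_nat_mul, ← Real.exp_nat_mul, Real.exp_le_exp]
  push_cast
  calc (D : ℝ) * X ^ n * R ^ ρ ≤ D * (R ^ ρ) ^ n * R ^ ρ := by gcongr
    _ = R ^ (ρ * (n + 1)) * D := by ring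
    _ = m * D := by rw [hRm]

theorem exists_pow_eq_and_le {q : ℕ} (hq : q ≠ 0) {x A : ℝ} (hx : 0 ≤ x) (hA : A ^ q ≤ x) :
    ∃ R : ℝ, 0 ≤ R ∧ A ≤ R ∧ R ^ q = x := by
  have hpow : (x ^ (q : ℝ)⁻¹) ^ q = x := Real.rpow_inv_natCast_pow hx hq
  exact ⟨x ^ (q : ℝ)⁻¹, by positivity,
    le_of_pow_le_pow_left₀ hq (by positivity) (hA.trans_eq hpow.symm), hpow⟩

end Comparison

/-! ### Values in the number field -/

section Values

variable {n d : ℕ} {K : Type*} [Field K] [NumberField K] [Algebra K ℂ]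
  {f : (Fin n → ℂ) → Fin d → ℂ} {p : Fin n → Fin d → MvPolynomial (Fin d) K}

/-- The Liouville lower bound and the Schwarz upper bound for the first nonvanishing derivative
of a polynomial in the `f i` are incompatible when that derivative has large order. -/
theorem SchwarzBound.exists_length_le {ι : Type*} [Finite ι] {s : ι → Fin n → ℂ} {l ρ : ℕ}
    (hs : SchwarzBound s l (ρ * (n + 1) * ((n + 1) * Module.finrank ℚ K + 2))) (hl : 0 < l)
    (hf : IsDifferentialSystem f p) (hρ : 0 < ρ) {R₀ : ℝ}
    (hgrow : ∀ R, R₀ ≤ R → ∀ z, ‖z‖ ≤ R → ∀ i, ‖f z i‖ ≤ Real.exp (R ^ ρ))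
    {x : ι → Fin d → K} (hx : ∀ i, f (s i) = algebraMap K ℂ ∘ x i) {b : ℕ} {B : ℝ}
    (hjet : JetBound p x b B) {V : ℝ} (hV : 1 ≤ V) (D : ℕ) :
    ∃ W : ℝ, ∀ X i w, ∀ P ∈ integerPolynomials (Fin d) K, 0 < X → X ^ (n + 1) ≤ w.length →
      P.totalDegree ≤ D * X ^ n →
      (∀ φ : K →+* ℂ, coeffNorm 1 (map φ P) ≤
        V ^ w.length * (w.length : ℝ) ^ (n * w.length)) →
      aeval (f (s i)) (wordDer p w P) ≠ 0 →
      (∀ j v, v.length < w.length → aeval (f (s j)) (wordDer p v P) = 0) →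
      (w.length : ℝ) ≤ W := by
  obtain ⟨C, _, hC⟩ := hs.exists_norm_aeval_wordDer_le hf
  obtain ⟨a, ha⟩ : ∃ a, a = (n + 1) * Module.finrank ℚ K := ⟨_, rfl⟩
  obtain ⟨δ, hδ⟩ : ∃ δ, Module.finrank ℚ K = δ + 1 :=
    Nat.exists_eq_succ_of_ne_zero Module.finrank_pos.ne'
  have hxf i Q : aeval (f (s i)) Q = algebraMap K ℂ (eval (x i) Q) := by
    rw [hx, aeval_algebraMap_apply, aeval_eq_eval]
  set U : ℝ := (b * B) ^ (D + 1) * (D + 1) * V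
  set W : ℝ := b ^ (D + 1) * C ^ 2 * V * Real.exp D * U ^ δ
  refine ⟨max (max ((a + 2) * l : ℕ) (max C R₀ ^ (ρ * (n + 1)))) W,
    fun X i w P hP hX0 hX hdeg hcoeff hne hvan => ?_⟩
  by_contra! hlarge
  obtain ⟨hlarge, hW⟩ := max_lt_iff.1 hlarge
  obtain ⟨hlm, hRm⟩ := max_lt_iff.1 hlarge
  have hV0 : 0 ≤ V := zero_le_one.trans hV
  have hB0 : 0 ≤ B := zero_le_one.trans hjet.one_le
  have hm : 0 < w.length := (pow_pos hX0 _).trans_le hX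
  have hE : P.totalDegree + w.length ≤ (D + 1) * w.length := by
    rw [add_mul, one_mul]
    gcongr
    exact hdeg.trans (Nat.mul_le_mul_left _ ((Nat.pow_le_pow_right hX0 n.le_succ).trans hX))
  have hlow := hjet.one_le_norm_eval_mul_pow hP (fun h => hne (by rw [hxf, h, map_zero])) hE hcoeff
    (algebraMap K ℂ)
  obtain ⟨R, hR0, hCR, hR⟩ := exists_pow_eq_and_le (mul_pos hρ n.succ_pos).ne'
    (Nat.cast_nonneg _) hRm.le
  have hup := hC i P w hm hvan R ((le_max_left _ _).trans hCR)
    (Real.exp D ^ w.length * (V ^ w.length * (w.length : ℝ) ^ (n * w.length))) fun z hz =>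
    (norm_aeval_le_of_norm_le hdeg (Real.one_le_exp (pow_nonneg hR0 ρ)) (hcoeff _)
      (hgrow R ((le_max_right _ _).trans hCR) z hz)).trans
      (mul_le_mul_of_nonneg_right (exp_pow_le_of_pow_eq hR0 hX hR) (by positivity))
  rw [← ha, mul_assoc (ρ * (n + 1)), mul_assoc (ρ * (n + 1)), pow_mul R, hR, hxf] at hup
  refine hW.not_ge (le_of_liouville_of_schwarz (ha.trans (by rw [hδ])) hm hl
    (by exact_mod_cast hlm.le) (Nat.cast_nonneg b) (Real.exp_nonneg D) hV0 (by positivity) ?_ hup)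
  convert hlow using 2
  rw [hδ, Nat.add_sub_cancel]
  push_cast
  simp only [U, mul_pow, ← pow_mul]
  ring

theorem exists_hypersurface (hn : 0 < n) (hnd : n < d) (hf : IsDifferentialSystem f p)
    (hind : ∀ P : MvPolynomial (Fin d) K, (∀ z, aeval (f z) P = 0) → P = 0)
    {ρ : ℕ} (hρ : 0 < ρ) {R₀ : ℝ}
    (hgrow : ∀ R, R₀ ≤ R → ∀ z, ‖z‖ ≤ R → ∀ i, ‖f z i‖ ≤ Real.exp (R ^ ρ)) :
    ∃ Q : MvPolynomial (Fin n) ℂ, Q ≠ 0 ∧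
      ∀ w, (∀ i, f w i ∈ Set.range (algebraMap K ℂ)) → eval w Q = 0 := by
  by_contra! hdense
  obtain ⟨N, s, l, hN, hsS, hl, hs⟩ := exists_schwarzBound hn
    (S := {w | ∀ i, f w i ∈ Set.range (algebraMap K ℂ)})
    (fun Q hQ => by_contra fun hQ0 => by
      obtain ⟨w, hw, hne⟩ := hdense Q hQ0
      exact hne (hQ w hw)) (ρ * (n + 1) * ((n + 1) * Module.finrank ℚ K + 2))
  choose x hx using fun i => hsS i
  obtain ⟨b, B, hjet⟩ := exists_jetBound p x
  obtain ⟨V, hV1, hV⟩ := hjet.exists_auxiliary hnd hN (hf.mkDerivation_comm hind)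
  have hfx i : f (s i) = algebraMap K ℂ ∘ x i := funext fun j => (hx i j).symm
  obtain ⟨W, hW⟩ := hs.exists_length_le hl hf hρ hgrow hfx hjet hV1 (d * (2 * N))
  obtain ⟨X, hX⟩ := exists_nat_gt (max W 0)
  have hX0 : 0 < X := by exact_mod_cast (le_max_right W 0).trans_lt hX
  obtain ⟨P, hP, hP0, hdeg, hvan, hcoeff⟩ := hV X hX0
  have : Nonempty (Fin N) := ⟨⟨0, hN⟩⟩
  obtain ⟨w, i, hne, hmin⟩ := hf.exists_minimal_word hind s hP0
  have hXw : X ^ (n + 1) ≤ w.length := by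
    by_contra! hlt
    apply hne
    rw [hfx, aeval_algebraMap_apply, aeval_eq_eval]
    exact (congrArg _ (hvan i w hlt)).trans (map_zero _)
  have hw1 : (1 : ℝ) ≤ w.length := by exact_mod_cast (pow_pos hX0 _).trans_le hXw
  refine (hW X i w P hP hX0 hXw (by rwa [mul_assoc]) (fun φ => (hcoeff φ).trans ?_) hne
    hmin).not_gt (((le_max_left _ _).trans_lt hX).trans_le
    (by exact_mod_cast (Nat.le_self_pow n.succ_ne_zero X).trans hXw))
  have hpow : ((X ^ (n + 1) : ℕ) : ℝ) ^ (n * X ^ (n + 1)) ≤ (w.length : ℝ) ^ (n * w.length) :=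
    (pow_le_pow_left₀ (Nat.cast_nonneg _) (by exact_mod_cast hXw) _).trans
      (pow_le_pow_right₀ hw1 (Nat.mul_le_mul_left n hXw))
  gcongr

end Values

section Growth

theorem setOf_forall_norm_le_eq_closedBall {n : ℕ} {R : ℝ} (hR : 0 ≤ R) :
    {z : Fin n → ℂ | ∀ i, ‖z i‖ ≤ R} = Metric.closedBall 0 R := by
  ext z
  rw [mem_closedBall_zero_iff, pi_norm_le_iff_of_nonneg hR]
  rfl

theorem norm_le_polydiscSup {n : ℕ} {f : (Fin n → ℂ) → ℂ} (hf : Continuous f) {R : ℝ}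
    {z : Fin n → ℂ} (hz : ‖z‖ ≤ R) : ‖f z‖ ≤ PolydiscSup n f R := by
  refine le_csSup ?_ ⟨z, fun j => (norm_le_pi_norm z j).trans hz, rfl⟩
  rw [setOf_forall_norm_le_eq_closedBall ((norm_nonneg z).trans hz)]
  exact ((isCompact_closedBall 0 R).image hf.norm).bddAbove

theorem exists_growth {ι : Type*} [Finite ι] {n : ℕ} {f : ι → (Fin n → ℂ) → ℂ}
    (hf : ∀ i, Continuous (f i)) (horder : ∀ i, HasFiniteOrderGrowthN n (f i)) :
    ∃ ρ : ℕ, 0 < ρ ∧ ∃ R₀ : ℝ, ∀ R, R₀ ≤ R → ∀ z, ‖z‖ ≤ R → ∀ i,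
      ‖f i z‖ ≤ Real.exp (R ^ ρ) := by
  choose ρ _ hR using horder
  choose R₀ hR₀ using fun i => hR i 1 one_pos
  obtain ⟨A, -, hA⟩ := exists_one_le_forall_le ρ
  obtain ⟨T, hT1, hT⟩ := exists_one_le_forall_le R₀
  obtain ⟨q, hq⟩ := exists_nat_gt (A + 1)
  refine ⟨q + 1, q.succ_pos, T, fun R hTR z hz i => (norm_le_polydiscSup (hf i) hz).trans
    ((hR₀ i R ((hT i).trans hTR)).trans (Real.exp_le_exp.2 ?_))⟩
  rw [← Real.rpow_natCast]
  refine Real.rpow_le_rpow_of_exponent_le (hT1.trans hTR) ?_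
  push_cast
  linarith [hA i]

end Growth

theorem exists_map_subtype_eq {σ L : Type*} [Field L] {K : Subfield L} {P : MvPolynomial σ L}
    (hP : ∀ m, coeff m P ∈ K) : ∃ Q : MvPolynomial σ K, map (algebraMap K L) Q = P := by
  refine mem_range_map_iff_coeffs_subset.2 fun c hc => ?_
  obtain ⟨m, -, rfl⟩ := mem_coeffs_iff.1 hc
  exact ⟨⟨_, hP m⟩, rfl⟩

end Bombieri

/-- **Bombieri's Theorem.** Let `d > n ≥ 1`, `K ⊆ ℂ` a number field, and
`f₁, …, f_d` algebraically independent entire functions on `ℂ^n` of finite order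
of growth whose partial derivatives `(∂/∂z_ν) f_i` belong to `K[f₁, …, f_d]`.
Then the set of points `w ∈ ℂ^n` where all `f_i(w) ∈ K` is contained in an
algebraic hypersurface `Q = 0` with `Q ≠ 0`. -/
theorem bombieri_hypersurface
    (n d : ℕ) (hn : 1 ≤ n) (hnd : n < d)
    (K : Subfield ℂ) (hK : FiniteDimensional ℚ K)
    (f : Fin d → (Fin n → ℂ) → ℂ)
    (hent : ∀ i, Differentiable ℂ (f i))
    (horder : ∀ i, HasFiniteOrderGrowthN n (f i))
    (halgind : ∀ P : MvPolynomial (Fin d) ℂ, (∀ m, MvPolynomial.coeff m P ∈ K) →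
      (∀ z : Fin n → ℂ, MvPolynomial.eval (fun i => f i z) P = 0) → P = 0)
    (hdiff : ∀ (ν : Fin n) (i : Fin d), ∃ P : MvPolynomial (Fin d) ℂ,
      (∀ m, MvPolynomial.coeff m P ∈ K) ∧
      ∀ z : Fin n → ℂ, fderiv ℂ (f i) z (Pi.single ν 1) =
        MvPolynomial.eval (fun j => f j z) P) :
    ∃ Q : MvPolynomial (Fin n) ℂ, Q ≠ 0 ∧
      ∀ w : Fin n → ℂ, (∀ i, f i w ∈ K) → MvPolynomial.eval w Q = 0 := by
  have : NumberField K := ⟨⟩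
  choose p' hp'K hp' using hdiff
  choose p hp using fun ν i => Bombieri.exists_map_subtype_eq (hp'K ν i)
  obtain ⟨ρ, hρ, R₀, hgrow⟩ := Bombieri.exists_growth (fun i => (hent i).continuous) horder
  have hf : Bombieri.IsDifferentialSystem (fun z i => f i z) p := by
    refine ⟨hent, fun ν i z => ?_⟩
    rw [hp', ← hp, MvPolynomial.eval_map, MvPolynomial.aeval_def]
  have hind (P : MvPolynomial (Fin d) K)
      (hP : ∀ z, MvPolynomial.aeval (fun i => f i z) P = 0) : P = 0 := by
    apply MvPolynomial.map_injective _ (algebraMap K ℂ).injective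
    rw [map_zero]
    refine halgind _ (fun m => ?_) fun z => ?_
    · exact MvPolynomial.coeff_map (algebraMap K ℂ) P m ▸ (MvPolynomial.coeff m P).2
    · rw [MvPolynomial.eval_map, ← MvPolynomial.aeval_def, hP z]
  obtain ⟨Q, hQ0, hQ⟩ := Bombieri.exists_hypersurface hn hnd hf hind hρ hgrow
  exact ⟨Q, hQ0, fun w hw => hQ w fun i => ⟨⟨f i w, hw i⟩, rfl⟩⟩
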